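/- Let p be a prime number, let K be a number field containing a primitive p-th root of unity, and let d ≥ 2 be an integer coprime to p. Then there exists an infinite set of intermediate fields L of a fixed algebraic closure K̄ over K, pairwise non-isomorphic as K-algebras, each satisfying [L:K] = d and rank_p Cl(L) ≥ (d−1) + rank_p Cl(K). -/

import Mathlib

/-!
Write `d = m + 1`. The field `L` is generated by a root `η` of `∏ i, (X - A i) = c ^ p`, where the
`d` shifts `A i` and the constant `c` are integers of `K` satisfying suitable congruences. The
elements `α i = η - A i` have a `p`-th power as their product; the point is that `m` of them are
independent modulo `p`-th powers, while each `L(α i ^ (1/p))` is everywhere unramified over `L`.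

*The field.* At a prime `lam` of `K` for which `c` is a uniformizer and `A i ∈ lam ^ p`, a prime of
`L` of ramification index `e` and normalised valuation `w` satisfies `d * w η = p * e`. Since `d` is
prime to `p` this forces `e = d = [L : K]` (`ramification_at_lam`). As `lam` may be taken over an
arbitrarily large rational prime, which then divides `discr L`, infinitely many non-isomorphic
fields arise.

*The elements `α i`.* Their valuations are all divisible by `p`, because no prime other than `lam`
contains both `c` and a difference `A i - A j` (`root_hval`). At the primes over a chosen integer
`N`, divisible by a high power of `p`, they are local `p`-th powers: `N` divides `A i` and `c - 1`,
so `η ^ d ≡ 1` modulo `N`, and with `d ∣ 1 + p * k` one gets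
`α i * (η ^ k) ^ p ≡ η ^ (1 + p * k) ≡ 1` (`root_hloc`). For `p = 2` they are totally positive,
since `d` is odd and `c` is large at the real places (`real_root_pos`). Omitting `i = 0`, they are
independent modulo `p`-th powers: for each `k` there is an auxiliary prime modulo which `0` is a
simple root of the defining polynomial, `-A k` is not a `p`-th power, and the other `-A i`, `i ≠ 0`,
are `1` (`root_independent`).

*The rank bound* (`rank_bound`). Extension of classes `Cl K / p → Cl L / p` is injective, since the
norm of an extended class is its `d`-th power. Let `V ≤ Cl L` be generated by the `p`-th powers and
the primes over `N`; for a suitable `N` it contains the image of `Cl K`. It suffices to show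
`p ^ m ≤ [Cl L : V]`. Otherwise `V` and fewer than `m` primes generate `Cl L`, and linear algebra
over `𝔽_p` gives a product `α` of powers of the `α i` which is not a `p`-th power in `L` but is a
local `p`-th power at these primes and at all primes over `N`. The cyclic extension
`M = L(α ^ (1/p))` is unramified everywhere and all these primes are norms of ideals from `M`. Hence
the norm `Cl M → Cl L` is surjective, which is impossible by `norm_not_surjective`.

*The norm is not surjective.* For `M / L` cyclic of degree `p` and unramified everywhere, with group
generated by `σ`, and `L` containing a primitive `p`-th root of unity, let `E` be the unit group of
`M`, let `F` and `H` be the kernels on `E` of the norm `N` and of `D u = σ u / u`, and let `j` be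
extension of classes. If the norm is surjective on class groups, then `|Cl L| ≤ |(Cl M) ^ σ|`
(`card_le_of_clN_surjective`). By Hilbert 90 one has `[(Cl M) ^ σ : j (Cl L)] ≤ [H : N E]` and
`[F : D E] ≤ |ker j|` (`relIndex_le_one`, `relIndex_le_two`), and Dirichlet's unit theorem gives
`[H : N E] < [F : D E]` (`units_ineq`). So
`|Cl L| ≤ |j (Cl L)| * [H : N E] < |j (Cl L)| * |ker j| = |Cl L|`, a contradiction.
-/

open NumberField

/-- The `n`-rank of a commutative group `G`: the largest `r` such that `G` contains a
subgroup isomorphic to `(ℤ/nℤ)^r`, i.e. such that there is an injective homomorphism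
`(ℤ/nℤ)^r → G`. -/
noncomputable def nRank (n : ℕ) (G : Type*) [CommGroup G] : ℕ :=
  sSup {r : ℕ | ∃ φ : (Fin r → ZMod n) →+ Additive G, Function.Injective φ}

/-! ### Finitely generated abelian groups: ranks and indices -/

section
open Module

theorem finrank_int_congr {A B : Type*} [AddCommGroup A] [AddCommGroup B] [i1 : Module ℤ A]
    [i2 : Module ℤ B] (e : A ≃+ B) : finrank ℤ A = finrank ℤ B := by
  obtain rfl : i1 = AddCommGroup.toIntModule A := Subsingleton.elim _ _
  obtain rfl : i2 = AddCommGroup.toIntModule B := Subsingleton.elim _ _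
  exact e.toIntLinearEquiv.finrank_eq

theorem finrank_range_add_ker {G H : Type*} [AddCommGroup G] [AddCommGroup H]
    [Module.Finite ℤ G] (f : G →+ H) : finrank ℤ f.range + finrank ℤ f.ker = finrank ℤ G := by
  have h := (LinearMap.ker f.toIntLinearMap).finrank_quotient_add_finrank
  rw [f.toIntLinearMap.quotKerEquivRange.finrank_eq] at h
  have h1 : finrank ℤ f.range = finrank ℤ (LinearMap.range f.toIntLinearMap) :=
    finrank_int_congr (AddEquiv.mk' ⟨fun x => ⟨x.1, x.2⟩, fun x => ⟨x.1, x.2⟩,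
      fun _ => rfl, fun _ => rfl⟩ fun _ _ => rfl)
  have h2 : finrank ℤ f.ker = finrank ℤ (LinearMap.ker f.toIntLinearMap) :=
    finrank_int_congr (AddEquiv.mk' ⟨fun x => ⟨x.1, x.2⟩, fun x => ⟨x.1, x.2⟩,
      fun _ => rfl, fun _ => rfl⟩ fun _ _ => rfl)
  omega

theorem index_nsmul_finite (T : Type*) [AddCommGroup T] [Finite T] (p : ℕ) :
    (nsmulAddMonoidHom (α := T) p).range.index = Nat.card (nsmulAddMonoidHom (α := T) p).ker := by
  set f := nsmulAddMonoidHom (α := T) p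
  have h1 := f.range.index_mul_card
  have h2 := f.ker.index_mul_card
  rw [AddSubgroup.index_ker] at h2
  have : Nat.card f.range ≠ 0 := Nat.card_pos.ne'
  have h3 := h1.trans h2.symm
  rw [mul_comm] at h3
  exact Nat.eq_of_mul_eq_mul_left (Nat.pos_of_ne_zero this) h3

theorem index_nsmul_prod (n : ℕ) (T : Type*) [AddCommGroup T] [Finite T] {p : ℕ} (hp : p ≠ 0) :
    (nsmulAddMonoidHom (α := (Fin n →₀ ℤ) × T) p).range.index =
      p ^ finrank ℤ ((Fin n →₀ ℤ) × T) *
        Nat.card (nsmulAddMonoidHom (α := (Fin n →₀ ℤ) × T) p).ker := by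
  have e1 : (nsmulAddMonoidHom (α := (Fin n →₀ ℤ) × T) p).range =
      (nsmulAddMonoidHom (α := (Fin n →₀ ℤ)) p).range.prod (nsmulAddMonoidHom (α := T) p).range := by
    ext ⟨a, b⟩
    simp [AddSubgroup.mem_prod, Prod.ext_iff]
  have e2 : (nsmulAddMonoidHom (α := (Fin n →₀ ℤ) × T) p).ker =
      (⊥ : AddSubgroup (Fin n →₀ ℤ)).prod (nsmulAddMonoidHom (α := T) p).ker := by
    ext ⟨a, b⟩
    simp [AddSubgroup.mem_prod, hp]
  have e3 : finrank ℤ ((Fin n →₀ ℤ) × T) = n := by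
    have h := finrank_range_add_ker (AddMonoidHom.fst (Fin n →₀ ℤ) T)
    have h1 : (AddMonoidHom.fst (Fin n →₀ ℤ) T).range = ⊤ :=
      AddMonoidHom.range_eq_top_of_surjective _ Prod.fst_surjective
    have h2 : finrank ℤ (AddMonoidHom.fst (Fin n →₀ ℤ) T).ker = 0 := by
      have : Finite (AddMonoidHom.fst (Fin n →₀ ℤ) T).ker :=
        Finite.of_injective (fun x => x.1.2) (by
          rintro ⟨⟨a, b⟩, h⟩ ⟨⟨a', b'⟩, h'⟩ e
          have h0 : a = 0 := h
          have h0' : a' = 0 := h'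
          have h1 : b = b' := e
          simp only [h0, h0', h1])
      rw [finrank_eq_zero_iff]
      intro x
      exact ⟨Nat.card (AddMonoidHom.fst (Fin n →₀ ℤ) T).ker, by
        exact_mod_cast Nat.card_pos.ne', by
        rw [natCast_zsmul]; exact card_nsmul_eq_zero' ⟩
    rw [h2, h1] at h
    rw [← h, add_zero]
    have := (AddSubgroup.topEquiv (G := (Fin n →₀ ℤ))).toIntLinearEquiv.finrank_eq
    rw [this]; simp
  rw [e3, e1, e2, AddSubgroup.index_prod, Nat.card_congr (AddSubgroup.prodEquiv _ _).toEquiv,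
    AddSubgroup.index_range_nsmul, index_nsmul_finite]
  simp

/-- `[G : p G] = p ^ rank G * |G[p]|` for a finitely generated abelian group `G`. -/
theorem index_nsmul (G : Type*) [AddCommGroup G] [Module.Finite ℤ G] {p : ℕ} (hp : p ≠ 0) :
    (nsmulAddMonoidHom (α := G) p).range.index =
      p ^ finrank ℤ G * Nat.card (nsmulAddMonoidHom (α := G) p).ker := by
  have : AddGroup.FG G := Module.Finite.iff_addGroup_fg.mp inferInstance
  obtain ⟨n, ι, fι, q, hq, e, ⟨f⟩⟩ := AddCommGroup.equiv_free_prod_directSum_zmod G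
  have : ∀ i, NeZero (q i ^ e i) := fun i => ⟨pow_ne_zero _ (hq i).ne_zero⟩
  have : Finite (DirectSum ι fun i => ZMod (q i ^ e i)) := by
    classical
    exact Finite.of_equiv _ (DirectSum.addEquivProd fun i => ZMod (q i ^ e i)).symm.toEquiv
  have h := index_nsmul_prod n (DirectSum ι fun i => ZMod (q i ^ e i)) hp
  rw [← f.toIntLinearEquiv.finrank_eq] at h
  have e1 : (nsmulAddMonoidHom (α := (Fin n →₀ ℤ) × DirectSum ι fun i => ZMod (q i ^ e i)) p).range =
     (nsmulAddMonoidHom (α := G) p).range.map (f : G →+ _) := by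
    ext x
    constructor
    · rintro ⟨y, rfl⟩
      exact ⟨_, ⟨f.symm y, rfl⟩, by simp⟩
    · rintro ⟨_, ⟨y, rfl⟩, rfl⟩
      exact ⟨f y, by simp⟩
  have e2 : Nat.card (nsmulAddMonoidHom (α := (Fin n →₀ ℤ) × DirectSum ι fun i => ZMod (q i ^ e i)) p).ker =
     Nat.card (nsmulAddMonoidHom (α := G) p).ker := by
    symm
    refine Nat.card_congr (f.toEquiv.subtypeEquiv fun a => ?_)
    show p • a = 0 ↔ p • f a = 0
    rw [← map_nsmul, EmbeddingLike.map_eq_zero_iff]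
  rw [e1, e2, AddSubgroup.index_map_equiv] at h
  exact h

end

/-! ### An index inequality for modules over a cyclic group of prime order -/

section
open Module

open Polynomial in
/-- Modulo `p`, both `(X - 1) ^ (p - 1)` and `1 + X + ⋯ + X ^ (p - 1)` are
`(X ^ p - 1) / (X - 1)`. -/
theorem exists_poly_identity (p : ℕ) (hp : p.Prime) :
    ∃ g : ℤ[X], (X - 1) ^ (p - 1) = ∑ i ∈ Finset.range p, X ^ i + (p : ℤ[X]) * g := by
  have : Fact p.Prime := ⟨hp⟩
  suffices h : C (p : ℤ) ∣ ((X - 1) ^ (p - 1) - ∑ i ∈ Finset.range p, X ^ i : ℤ[X]) by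
    obtain ⟨g, hg⟩ := h
    exact ⟨g, by rw [← sub_eq_iff_eq_add', hg]; simp⟩
  have h2 : ((X - 1) ^ (p - 1) - ∑ i ∈ Finset.range p, X ^ i : ℤ[X]).map
      (Int.castRingHom (ZMod p)) = 0 := by
    simp only [Polynomial.map_sub, Polynomial.map_pow, Polynomial.map_X, Polynomial.map_one,
      Polynomial.map_sum]
    rw [sub_eq_zero]
    have hX : (X - 1 : (ZMod p)[X]) ≠ 0 := X_sub_C_ne_zero 1
    apply mul_right_cancel₀ hX
    rw [geom_sum_mul, ← pow_succ, Nat.sub_add_cancel hp.one_le, sub_pow_char, one_pow]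
  rw [C_dvd_iff_dvd_coeff]
  intro i
  have := congrArg (fun q => q.coeff i) h2
  simp only [coeff_map, coeff_zero, eq_intCast] at this
  exact (ZMod.intCast_zmod_eq_zero_iff_dvd _ _).mp this

theorem relIndex_map_dvd {E E' : Type*} [AddCommGroup E] [AddCommGroup E'] (f : E →+ E')
    {A B : AddSubgroup E} (h : A ≤ B) : (A.map f).relIndex (B.map f) ∣ A.relIndex B := by
  rw [AddSubgroup.relIndex_map_map]
  have : B ⊔ f.ker = B ⊔ (A ⊔ f.ker) := by
    rw [← sup_assoc, sup_eq_left.mpr h]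
  rw [this, AddSubgroup.relIndex_sup_right]
  exact AddSubgroup.relIndex_dvd_of_le_left _ le_sup_left

/-- `[F : D^k F]` divides `[F : D F]^k`. -/
theorem relIndex_iterate_dvd {E : Type*} [AddCommGroup E] (D : E →+ E)
    (F : AddSubgroup E) (hF : F.map D ≤ F) (k : ℕ) :
    ∃ Dk : E →+ E, (∀ x, Dk x = D^[k] x) ∧ F.map Dk ≤ F ∧
    (F.map Dk).relIndex F ∣ ((F.map D).relIndex F) ^ k := by
  induction k with
  | zero =>
    refine ⟨AddMonoidHom.id E, fun x => rfl, ?_⟩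
    rw [AddSubgroup.map_id]; simp
  | succ k ih =>
    obtain ⟨Dk, h1, h2, h3⟩ := ih
    have hle : (F.map D).map Dk ≤ F.map Dk := AddSubgroup.map_mono hF
    refine ⟨Dk.comp D, fun x => h1 (D x), ?_⟩
    rw [← AddSubgroup.map_map]
    refine ⟨hle.trans h2, ?_⟩
    rw [← AddSubgroup.relIndex_mul_relIndex _ _ _ hle h2, pow_succ, mul_comm]
    exact mul_dvd_mul h3 (relIndex_map_dvd _ hF)

/-- `[F : p F] = p ^ rank F * |F[p]|` for a subgroup `F` of a finitely generated group. -/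
theorem relIndex_nsmul {E : Type*} [AddCommGroup E] [Module.Finite ℤ E] {p : ℕ} (hp : p ≠ 0)
    (F : AddSubgroup E) :
    (F.map (nsmulAddMonoidHom p)).relIndex F = p ^ finrank ℤ F *
      Nat.card (nsmulAddMonoidHom (α := F) p).ker := by
  have : Module.Finite ℤ F := Module.Finite.of_injective F.subtype.toIntLinearMap
    F.subtype_injective
  rw [← index_nsmul F hp, AddSubgroup.relIndex]
  congr 1
  ext x
  simp only [AddSubgroup.mem_addSubgroupOf, AddSubgroup.mem_map, AddMonoidHom.mem_range]
  constructor
  · rintro ⟨y, hy, h⟩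
    exact ⟨⟨y, hy⟩, Subtype.ext h⟩
  · rintro ⟨y, h⟩
    exact ⟨y.1, y.2, congrArg Subtype.val h⟩


/-- If `D = s - 1` and `N = 1 + s + ⋯ + s ^ (p - 1)`, then `D ^ (p - 1) = N + p g` for
a polynomial `g` in `s`, which therefore commutes with `N`. -/
theorem iterate_identity {E : Type*} [AddCommGroup E] (p : ℕ) (hp : p.Prime)
    (s D N : E →+ E) (hD : ∀ x, D x = s x - x)
    (hN : ∀ x, N x = ∑ i ∈ Finset.range p, s^[i] x) :
    ∃ g : E →+ E, (∀ x, D^[p - 1] x = N x + p • g x) ∧ ∀ x, N (g x) = g (N x) := by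
  obtain ⟨g, hg⟩ := exists_poly_identity p hp
  let S : AddMonoid.End E := s
  have hpow (i : ℕ) (x : E) : (S ^ i) x = s^[i] x := by rw [AddMonoid.End.coe_pow]; rfl
  let D' : AddMonoid.End E := D
  let N' : AddMonoid.End E := N
  have hDS : D' = S - 1 := by ext x; exact hD x
  have hNS : N' = ∑ i ∈ Finset.range p, S ^ i := by
    ext x
    refine (hN x).trans ?_
    refine (Finset.sum_congr rfl fun i _ => (hpow i x).symm).trans ?_
    exact (map_sum (AddMonoidHom.eval x) (fun i => (S ^ i : E →+ E)) (Finset.range p)).symm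
  have h1 := congrArg (Polynomial.aeval S) hg
  simp only [map_pow, map_sub, map_one, Polynomial.aeval_X, map_add, map_sum, map_mul,
    map_natCast] at h1
  rw [← hDS, ← hNS] at h1
  refine ⟨Polynomial.aeval S g, fun x => ?_, fun x => ?_⟩
  · have := DFunLike.congr_fun h1 x
    rw [AddMonoid.End.coe_pow] at this
    refine this.trans ?_
    rw [← nsmul_eq_mul]
    rfl
  · have : N' * Polynomial.aeval S g = Polynomial.aeval S g * N' := by
      have e : N' =
          Polynomial.aeval S (∑ i ∈ Finset.range p, Polynomial.X ^ i : Polynomial ℤ) := by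
        rw [hNS]; simp
      rw [e, ← map_mul, ← map_mul, mul_comm]
    exact DFunLike.congr_fun this x

/-- An index inequality `[ker D : N E] < [ker N : D E]`, with the smaller index finite
(nonzero), for an action of the cyclic group of order `p` generated by `s`. The hypotheses are those
satisfied by the units `E` of a cyclic extension of degree `p`, unramified at infinity, of a number
field with `m` infinite places which contains a primitive `p`-th root of unity `z`. -/
theorem unit_herbrand {E : Type*} [AddCommGroup E] [Module.Finite ℤ E] (p : ℕ) (hp : p.Prime)
    (s D N : E →+ E) (hs : ∀ x, s^[p] x = x) (hD : ∀ x, D x = s x - x)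
    (hN : ∀ x, N x = ∑ i ∈ Finset.range p, s^[i] x) (m : ℕ)
    (hE : finrank ℤ E + 1 = p * m) (hH : finrank ℤ D.ker + 1 = m)
    (z : E) (hz : addOrderOf z = p) (hsz : s z = z)
    (hcard : Nat.card (nsmulAddMonoidHom (α := E) p).ker ≤ p) :
    N.range.relIndex D.ker < D.range.relIndex N.ker ∧ N.range.relIndex D.ker ≠ 0 := by
  have hp0 := hp.ne_zero
  set F := N.ker with hFdef
  set H := D.ker with hHdef
  have hDN' (x) : D (N x) = 0 := by
    rw [hD, hN, map_sum, ← Finset.sum_sub_distrib]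
    simp_rw [← Function.iterate_succ_apply' (f := s)]
    rw [Finset.sum_range_sub (fun i => s^[i] x), hs]
    simp
  have hND' (x) : N (D x) = 0 := by
    have : N (s x) = s (N x) := by
      rw [hN, hN, map_sum]
      exact Finset.sum_congr rfl fun i _ => by
        rw [← Function.iterate_succ_apply, Function.iterate_succ_apply']
    rw [hD, map_sub, this, ← hD, hDN']
  have hNH : ∀ x ∈ H, N x = p • x := by
    intro x hx
    have hsx : s x = x := sub_eq_zero.mp ((hD x).symm.trans hx)
    rw [hN]
    simp [Function.iterate_fixed hsx]
  -- `N E` lies in `H`, of rank `m - 1`, so `F = ker N` has rank at least `(p - 1) m`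
  have hrF : (p - 1) * m ≤ finrank ℤ F := by
    have h1 := finrank_range_add_ker N
    have h2 : finrank ℤ N.range ≤ finrank ℤ H := by
      have hle : N.range ≤ H := by
        rintro _ ⟨x, rfl⟩; exact hDN' x
      have : Module.Finite ℤ H := Module.Finite.of_injective H.subtype.toIntLinearMap
        H.subtype_injective
      exact LinearMap.finrank_le_finrank_of_injective
        (f := (AddSubgroup.inclusion hle).toIntLinearMap) (AddSubgroup.inclusion_injective hle)
    rw [Nat.sub_mul, one_mul]
    have h3 : finrank ℤ F = finrank ℤ N.ker := rfl
    omega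
  have hzH : z ∈ H := (hD z).trans (sub_eq_zero.mpr hsz)
  have hzF : z ∈ F := by
    show N z = 0
    rw [hNH z hzH, ← hz, addOrderOf_nsmul_eq_zero]
  have iF := relIndex_nsmul hp0 F
  have iH := relIndex_nsmul hp0 H
  have hfinE : Finite (nsmulAddMonoidHom (α := E) p).ker := by
    have : Module.Finite ℤ (AddSubgroup.toIntSubmodule (nsmulAddMonoidHom (α := E) p).ker) :=
      inferInstance
    have : Module.Finite ℤ (nsmulAddMonoidHom (α := E) p).ker := this
    apply Module.finite_of_fg_torsion
    intro x
    refine ⟨⟨(p : ℤ), by simp [hp0]⟩, ?_⟩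
    ext
    have := x.2
    rw [AddMonoidHom.mem_ker] at this
    simpa using this
  have hFp : p ≤ Nat.card (nsmulAddMonoidHom (α := F) p).ker := by
    have hfin : Finite (nsmulAddMonoidHom (α := F) p).ker := by
      refine Finite.of_injective (β := (nsmulAddMonoidHom (α := E) p).ker)
        (fun x => ⟨x.1.1, congrArg Subtype.val x.2⟩) ?_
      intro x y h
      exact Subtype.ext (Subtype.ext (congrArg (fun u => u.1) h))
    let z' : (nsmulAddMonoidHom (α := F) p).ker := ⟨⟨z, hzF⟩, by
      apply Subtype.ext
      show p • z = 0
      rw [← hz, addOrderOf_nsmul_eq_zero]⟩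
    have : addOrderOf z' = p := by
      refine Eq.trans ?_ hz
      exact (addOrderOf_injective (F.subtype.comp (AddSubgroup.subtype _))
        (F.subtype_injective.comp (AddSubgroup.subtype_injective _)) z').symm
    exact this.symm.trans_le addOrderOf_le_card
  have hHp : Nat.card (nsmulAddMonoidHom (α := H) p).ker ≤ p := by
    refine le_trans (Nat.card_le_card_of_injective (β := (nsmulAddMonoidHom (α := E) p).ker)
      (fun x => ⟨x.1.1, congrArg Subtype.val x.2⟩) ?_) hcard
    intro x y h
    exact Subtype.ext (Subtype.ext (congrArg (fun u => u.1) h))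
  have hDF : F.map D ≤ F := by
    rintro _ ⟨x, hx, rfl⟩; exact hND' x
  obtain ⟨Dk, hDk1, hDk2, hit⟩ := relIndex_iterate_dvd D F hDF (p - 1)
  -- the norm vanishes on `F`, so there `D ^ (p - 1)` is `p g` and maps `F` into `p F`
  have hle : F.map Dk ≤ F.map (nsmulAddMonoidHom p) := by
    obtain ⟨g, hg1, hg2⟩ := iterate_identity p hp s D N hD hN
    rintro _ ⟨x, hx, rfl⟩
    have hx : N x = 0 := hx
    refine ⟨g x, ?_, ?_⟩
    · show N (g x) = 0
      rw [hg2, hx, map_zero]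
    · rw [hDk1, hg1, hx, zero_add]; rfl
  have hdvd := (AddSubgroup.relIndex_dvd_of_le_left F hle).trans hit
  -- `E / (F + H)` is isomorphic to both `D E / D F` and `N E / N H`, so these indices agree
  have hx1 := AddSubgroup.relIndex_map_map D F ⊤
  have hx2 := AddSubgroup.relIndex_map_map N H ⊤
  have hsame : (F ⊔ D.ker).relIndex (⊤ ⊔ D.ker) = (H ⊔ N.ker).relIndex (⊤ ⊔ N.ker) := by
    rw [sup_comm F]; simp only [top_sup_eq]; rfl
  rw [hsame, ← hx2, ← AddMonoidHom.range_eq_map, ← AddMonoidHom.range_eq_map] at hx1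
  have hHN : H.map N = H.map (nsmulAddMonoidHom p) := by
    ext y
    simp only [AddSubgroup.mem_map]
    exact exists_congr fun x => and_congr_right fun hx => by rw [hNH x hx]; rfl
  have t1 := AddSubgroup.relIndex_mul_relIndex (F.map D) D.range F (AddSubgroup.map_le_range D F)
    (by rintro _ ⟨x, rfl⟩; exact hND' x)
  have t2 := AddSubgroup.relIndex_mul_relIndex (H.map N) N.range H (AddSubgroup.map_le_range N H)
    (by rintro _ ⟨x, rfl⟩; exact hDN' x)
  rw [hx1] at t1
  rw [hHN] at t1 t2
  set x := (AddSubgroup.map (nsmulAddMonoidHom p) H).relIndex N.range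
  set A := N.range.relIndex H
  set B := D.range.relIndex F
  have hHpos : 0 < Nat.card (nsmulAddMonoidHom (α := H) p).ker := by
    have hfin : Finite (nsmulAddMonoidHom (α := H) p).ker := by
      refine Finite.of_injective (β := (nsmulAddMonoidHom (α := E) p).ker)
        (fun x => ⟨x.1.1, congrArg Subtype.val x.2⟩) ?_
      intro x y h
      exact Subtype.ext (Subtype.ext (congrArg (fun u => u.1) h))
    exact Nat.card_pos
  have hxA0 : x * A ≠ 0 := by
    rw [t2, iH]; exact mul_ne_zero (pow_ne_zero _ hp0) hHpos.ne'
  have hxA : x * A ≤ p ^ m := by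
    rw [t2, iH, ← hH, pow_succ]
    exact Nat.mul_le_mul_left _ hHp
  refine ⟨?_, right_ne_zero_of_mul hxA0⟩
  have hB0 : B ≠ 0 := by
    have hpD : F.map (nsmulAddMonoidHom p) ≤ D.range := by
      rintro _ ⟨y, hy, rfl⟩
      have hy : N y = 0 := hy
      have key (i : ℕ) : s^[i] y - y ∈ D.range := by
        refine ⟨∑ j ∈ Finset.range i, s^[j] y, ?_⟩
        rw [hD, map_sum, ← Finset.sum_sub_distrib]
        simp_rw [← Function.iterate_succ_apply' (f := s)]
        rw [Finset.sum_range_sub (fun i => s^[i] y)]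
        rfl
      have h1 := sum_mem (t := Finset.range p) (fun i _ => key i)
      rw [Finset.sum_sub_distrib, ← hN, hy, zero_sub, neg_mem_iff] at h1
      simpa using h1
    intro h0
    have := AddSubgroup.relIndex_dvd_of_le_left F hpD
    change B ∣ _ at this
    rw [h0, zero_dvd_iff, iF] at this
    have := mul_ne_zero (pow_ne_zero (finrank ℤ F) hp0) (hp.pos.trans_le hFp).ne'
    contradiction
  -- otherwise `[F : D F] ≤ p ^ m`, whereas
  -- `p ^ ((p - 1) m + 1) ≤ [F : p F] ≤ [F : D F] ^ (p - 1) ≤ p ^ (m (p - 1))`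
  by_contra! hBA
  have hxB : x * B ≤ p ^ m := (Nat.mul_le_mul_left _ hBA).trans hxA
  rw [t1] at hxB
  have hI : (AddSubgroup.map D F).relIndex F ≠ 0 := by
    rw [← t1]; exact mul_ne_zero (left_ne_zero_of_mul hxA0) hB0
  have h1 := Nat.le_of_dvd (Nat.pos_of_ne_zero (pow_ne_zero _ hI)) hdvd
  rw [iF] at h1
  have h2 : p ^ ((p - 1) * m) * p ≤ (p ^ m) ^ (p - 1) :=
    (Nat.mul_le_mul (Nat.pow_le_pow_right hp.pos hrF) hFp).trans
      (h1.trans (Nat.pow_le_pow_left hxB _))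
  rw [← pow_mul, mul_comm m, ← pow_succ] at h2
  exact absurd ((Nat.pow_le_pow_iff_right hp.one_lt).mp h2) (by omega)

end

/-! ### Cyclic extensions: norms and Hilbert 90 -/

section
open NumberField Module

section Cyclic
variable {L M : Type*} [Field L] [Field M] [Algebra L M] [FiniteDimensional L M]
  [IsGalois L M] {p : ℕ} (hn : finrank L M = p) {σ : Gal(M/L)}
  (hσ : ∀ g, g ∈ Subgroup.zpowers σ)
include hn hσ

theorem orderOf_gen : orderOf σ = p := by
  rw [orderOf_eq_card_of_forall_mem_zpowers hσ, IsGalois.card_aut_eq_finrank, hn]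

theorem prod_range_eq_norm (x : M) :
    ∏ i ∈ Finset.range p, (σ ^ i) x = algebraMap L M (Algebra.norm L x) := by
  classical
  rw [Algebra.norm_eq_prod_automorphisms, ← IsCyclic.image_range_orderOf hσ,
    Finset.prod_image, orderOf_gen hn hσ]
  intro i hi j hj h
  exact pow_injOn_Iio_orderOf (by simpa using hi) (by simpa using hj) h

/-- Hilbert 90 for a cyclic extension, in the form `x = y / σ y`. -/
theorem hilbert90 (x : M) (hx : Algebra.norm L x = 1) : ∃ y : M, y ≠ 0 ∧ x * σ y = y := by
  classical
  let c : ℕ → M := fun i => ∏ j ∈ Finset.range i, (σ ^ j) x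
  have hinj : Function.Injective (fun i : Fin p => ((σ ^ (i : ℕ) : Gal(M/L)) : M →* M)) := by
    intro i j h
    have h' : (σ ^ (i : ℕ)) = σ ^ (j : ℕ) := by
      ext z; exact DFunLike.congr_fun h z
    exact Fin.ext (pow_injOn_Iio_orderOf (by simp [orderOf_gen hn hσ]) (by simp [orderOf_gen hn hσ]) h')
  have hli := (linearIndependent_monoidHom M M).comp _ hinj
  have hp : 0 < p := hn ▸ finrank_pos
  rw [Fintype.linearIndependent_iff] at hli
  obtain ⟨θ, hθ⟩ : ∃ θ : M, ∑ i ∈ Finset.range p, c i * (σ ^ i) θ ≠ 0 := by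
    by_contra! h
    have := hli (fun i => c i) (by
      ext θ
      have h1 := h θ
      rw [Finset.sum_range] at h1
      simpa using h1) ⟨0, hp⟩
    simp [c] at this
  refine ⟨_, hθ, ?_⟩
  have hc (i : ℕ) : x * σ (c i * (σ ^ i) θ) = c (i + 1) * (σ ^ (i + 1)) θ := by
    simp only [c, map_mul, map_prod, Finset.prod_range_succ', pow_zero, AlgEquiv.one_apply]
    simp only [pow_succ', AlgEquiv.mul_apply]
    ring
  rw [map_sum, Finset.mul_sum, Finset.sum_congr rfl fun i _ => hc i]
  have h1 := Finset.sum_range_succ (fun i => c i * (σ ^ i) θ) p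
  have h2 := Finset.sum_range_succ' (fun i => c i * (σ ^ i) θ) p
  have h3 : c p = 1 := by
    show ∏ j ∈ Finset.range p, (σ ^ j) x = 1
    rw [prod_range_eq_norm hn hσ, hx, map_one]
  have h4 : σ ^ p = 1 := by rw [← orderOf_gen hn hσ, pow_orderOf_eq_one]
  simp only [h3, h4, AlgEquiv.one_apply, one_mul, pow_zero] at h1 h2
  have h5 : c 0 = 1 := by simp [c]
  rw [h5, one_mul] at h2
  rw [h1] at h2
  exact add_right_cancel h2.symm
end Cyclic

section Integral
variable {L M : Type*} [Field L] [NumberField L] [Field M] [NumberField M] [Algebra L M]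
  [IsGalois L M]

/-- The automorphism of `𝓞 M` induced by `σ`. -/
noncomputable abbrev rint (σ : Gal(M/L)) : 𝓞 M ≃ₐ[𝓞 L] 𝓞 M := galRestrict (𝓞 L) L M (𝓞 M) σ

theorem coe_rint (σ : Gal(M/L)) (x : 𝓞 M) : ((rint σ x : 𝓞 M) : M) = σ (x : M) :=
  algebraMap_galRestrict_apply (𝓞 L) σ x

theorem coe_rint_iterate (σ : Gal(M/L)) (i : ℕ) (x : 𝓞 M) :
    (((rint σ)^[i] x : 𝓞 M) : M) = (σ ^ i) (x : M) := by
  induction i with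
  | zero => rfl
  | succ i ih =>
    rw [Function.iterate_succ_apply', coe_rint, ih, pow_succ', AlgEquiv.mul_apply]

theorem coe_intNorm (x : 𝓞 M) :
    ((Algebra.intNorm (𝓞 L) (𝓞 M) x : 𝓞 L) : L) = Algebra.norm L (x : M) :=
  Algebra.algebraMap_intNorm (A := 𝓞 L) (K := L) (L := M) (B := 𝓞 M) x

variable {p : ℕ} (hn : finrank L M = p) {σ : Gal(M/L)}
  (hσ : ∀ g, g ∈ Subgroup.zpowers σ)
include hσ

theorem fixed_of_gen (x : M) (hx : σ x = x) : ∃ y : L, algebraMap L M y = x := by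
  have : x ∈ (⊥ : IntermediateField L M) := by
    rw [← IsGalois.fixedField_top, IntermediateField.mem_fixedField_iff]
    intro f _
    have h : Subgroup.zpowers σ ≤ MulAction.stabilizer Gal(M/L) x := by
      rw [Subgroup.zpowers_le]; exact hx
    exact h (hσ f)
  exact IntermediateField.mem_bot.mp this

theorem fixed_int_of_gen (x : 𝓞 M) (hx : rint σ x = x) : ∃ y : 𝓞 L, algebraMap (𝓞 L) (𝓞 M) y = x := by
  obtain ⟨y, hy⟩ := fixed_of_gen hσ (x : M) (by rw [← coe_rint, hx])
  have : IsIntegral ℤ y := by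
    have := x.2
    rw [← isIntegral_algebraMap_iff (algebraMap L M).injective, hy]
    exact x.isIntegral_coe
  refine ⟨⟨y, this⟩, ?_⟩
  apply RingOfIntegers.ext
  exact hy

include hn

theorem prod_range_eq_intNorm (x : 𝓞 M) :
    ∏ i ∈ Finset.range p, (rint σ)^[i] x = algebraMap (𝓞 L) (𝓞 M) (Algebra.intNorm (𝓞 L) (𝓞 M) x) := by
  apply RingOfIntegers.ext
  rw [RingOfIntegers.coe_eq_algebraMap, map_prod]
  simp_rw [← RingOfIntegers.coe_eq_algebraMap, coe_rint_iterate]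
  rw [prod_range_eq_norm hn hσ, ← coe_intNorm]
  rfl

/-- Hilbert 90 for a ratio `b / c` of integers of equal norm, with an integral witness `y`:
`b / c = y / σ y`. -/
theorem hilbert90_int (b c : 𝓞 M) (hc : c ≠ 0)
    (h : Algebra.intNorm (𝓞 L) (𝓞 M) b = Algebra.intNorm (𝓞 L) (𝓞 M) c) :
    ∃ y : 𝓞 M, y ≠ 0 ∧ b * rint σ y = c * y := by
  have hc' : (c : M) ≠ 0 := by simpa using hc
  have h0 : Algebra.norm L ((b : M) / c) = 1 := by
    have h1 : Algebra.norm L (b : M) = Algebra.norm L (c : M) := by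
      rw [← coe_intNorm, ← coe_intNorm, h]
    have h2 : Algebra.norm L ((b : M) / c) * Algebra.norm L (c : M) = Algebra.norm L (c : M) := by
      rw [← map_mul, div_mul_cancel₀ _ hc', h1]
    exact mul_eq_right₀ (Algebra.norm_ne_zero_iff.mpr hc') |>.mp h2
  obtain ⟨y, hy0, hy⟩ := hilbert90 hn hσ _ h0
  obtain ⟨n, hn0, z, hz⟩ : ∃ n : ℕ, n ≠ 0 ∧ ∃ z : 𝓞 M, (z : M) = n * y := by
    obtain ⟨⟨z, n⟩, h⟩ := IsLocalization.surj (Algebra.algebraMapSubmonoid (𝓞 M) (nonZeroDivisors ℤ)) y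
    obtain ⟨m, hm, hm'⟩ := n.2
    have hm0 : m ≠ 0 := nonZeroDivisors.ne_zero hm
    refine ⟨m.natAbs, by simpa using hm0, ?_⟩
    have e : (z : M) = m * y := by
      have h' : y * (n : 𝓞 M) = (z : M) := h
      rw [← h', ← hm', mul_comm]; simp
    rcases Int.natAbs_eq m with h1 | h1
    · exact ⟨z, by rw [e, h1]; simp⟩
    · exact ⟨-z, by rw [RingOfIntegers.coe_eq_algebraMap, map_neg, ← RingOfIntegers.coe_eq_algebraMap, e, h1]; simp⟩
  refine ⟨z, ?_, ?_⟩
  · rintro rfl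
    rw [RingOfIntegers.coe_eq_algebraMap, map_zero] at hz
    exact mul_ne_zero (by exact_mod_cast hn0) hy0 hz.symm
  · apply RingOfIntegers.ext
    rw [RingOfIntegers.coe_eq_algebraMap, RingOfIntegers.coe_eq_algebraMap, map_mul, map_mul]
    simp only [← RingOfIntegers.coe_eq_algebraMap]
    rw [coe_rint, hz, map_mul, map_natCast]
    have : (b : M) * σ y = c * y := by
      rw [div_mul_eq_mul_div, div_eq_iff hc'] at hy
      rw [hy, mul_comm]
    linear_combination (n : M) * this
end Integral

end

/-! ### Extension and norm of ideal classes -/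

section
open NumberField Module nonZeroDivisors

section cg
/-- Extension of ideal classes along an injective ring homomorphism. -/
noncomputable def cgMap {A B : Type*} [CommRing A] [IsDedekindDomain A] [CommRing B]
    [IsDedekindDomain B] (f : A →+* B) (hf : Function.Injective f) :
    ClassGroup A →* ClassGroup B :=
  let _ := f.toAlgebra
  haveI : FaithfulSMul A B := (faithfulSMul_iff_algebraMap_injective A B).mpr hf
  ClassGroup.extendedHom A B

theorem cgMap_mk0 {A B : Type*} [CommRing A] [IsDedekindDomain A] [CommRing B]
    [IsDedekindDomain B] (f : A →+* B) (hf : Function.Injective f) (I : (Ideal A)⁰)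
    (J : (Ideal B)⁰) (h : J.1 = I.1.map f) :
    cgMap f hf (ClassGroup.mk0 I) = ClassGroup.mk0 J := by
  let _ := f.toAlgebra
  haveI : FaithfulSMul A B := (faithfulSMul_iff_algebraMap_injective A B).mpr hf
  have e : J = ClassGroup.extendedIdeal A B I := Subtype.ext h
  rw [e]
  exact ClassGroup.extendedHom_mk0 A B I
end cg

section norm
variable (A B : Type*) [CommRing A] [IsDedekindDomain A] [CommRing B] [IsDedekindDomain B]
  [Algebra A B] [Module.Finite A B] [Module.IsTorsionFree A B]

/-- The relative norm of nonzero ideals. -/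
noncomputable def rn (I : (Ideal B)⁰) : (Ideal A)⁰ :=
  ⟨Ideal.relNorm A I.1, mem_nonZeroDivisors_iff_ne_zero.mpr <|
    (Ideal.relNorm_eq_bot_iff (R := A)).not.mpr (nonZeroDivisors.coe_ne_zero I)⟩

theorem rn_congr {I J : (Ideal B)⁰} (h : ClassGroup.mk0 I = ClassGroup.mk0 J) :
    ClassGroup.mk0 (rn A B I) = ClassGroup.mk0 (rn A B J) := by
  obtain ⟨x, y, hx, hy, e⟩ := ClassGroup.mk0_eq_mk0_iff.mp h
  refine ClassGroup.mk0_eq_mk0_iff.mpr ⟨Algebra.intNorm A B x, Algebra.intNorm A B y,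
    Algebra.intNorm_ne_zero.mpr hx, Algebra.intNorm_ne_zero.mpr hy, ?_⟩
  have := congrArg (Ideal.relNorm A) e
  rwa [map_mul, map_mul, Ideal.relNorm_singleton, Ideal.relNorm_singleton] at this

/-- The norm homomorphism on class groups, sending the class of an ideal to the class of its
relative norm. It is defined through a chosen representative; `clN_mk0` removes the choice. -/
noncomputable def clN : ClassGroup B →* ClassGroup A where
  toFun c := ClassGroup.mk0 (rn A B (ClassGroup.mk0_surjective c).choose)
  map_one' := by
    have h := (ClassGroup.mk0_surjective (1 : ClassGroup B)).choose_spec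
    rw [rn_congr A B (J := 1) (by rw [h, map_one])]
    rw [show rn A B 1 = 1 from Subtype.ext (map_one (Ideal.relNorm A)), map_one]
  map_mul' c d := by
    have h := (ClassGroup.mk0_surjective (c * d)).choose_spec
    have h1 := (ClassGroup.mk0_surjective c).choose_spec
    have h2 := (ClassGroup.mk0_surjective d).choose_spec
    rw [rn_congr A B (J := (ClassGroup.mk0_surjective c).choose *
      (ClassGroup.mk0_surjective d).choose) (by rw [h, map_mul, h1, h2]), ← map_mul]
    congr 1
    exact Subtype.ext (map_mul (Ideal.relNorm A) _ _)

theorem clN_mk0 (I : (Ideal B)⁰) : clN A B (ClassGroup.mk0 I) = ClassGroup.mk0 (rn A B I) :=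
  rn_congr A B (ClassGroup.mk0_surjective _).choose_spec
end norm

/-- Every nonzero prime of `L` is unramified in `M`, expressed by saying that it extends to
a radical ideal of `𝓞 M`. -/
def FinUnram (L M : Type*) [Field L] [Field M] [Algebra L M] : Prop :=
  ∀ q : Ideal (𝓞 L), q.IsPrime → q ≠ ⊥ → (q.map (algebraMap (𝓞 L) (𝓞 M))).IsRadical

section
variable {L M : Type*} [Field L] [NumberField L] [Field M] [NumberField M] [Algebra L M]
  [IsGalois L M] {p : ℕ} (hn : finrank L M = p) {σ : Gal(M/L)}
  (hσ : ∀ g, g ∈ Subgroup.zpowers σ)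
include hσ

/-- An ideal fixed by a generator is fixed by the whole Galois group. -/
theorem map_galRestrict_of_gen {I : Ideal (𝓞 M)} (hI : I.map (rint σ) = I) (g : Gal(M/L)) :
    I.comap (rint g) = I := by
  have hc : ∀ g : Gal(M/L), I.map (rint g) = I → I.comap (rint g) = I := by
    intro g h
    conv_lhs => rw [← h]
    exact Ideal.comap_map_of_bijective _ (rint g).bijective
  let S : Subgroup Gal(M/L) :=
    { carrier := {g | I.comap (rint g) = I}
      one_mem' := by
        show I.comap (galRestrict (𝓞 L) L M (𝓞 M) 1) = I
        rw [map_one]; exact Ideal.comap_id I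
      mul_mem' := by
        intro a b (ha : I.comap _ = I) (hb : I.comap _ = I)
        show I.comap (galRestrict (𝓞 L) L M (𝓞 M) (a * b)) = I
        rw [map_mul]
        conv_rhs => rw [← hb, ← ha]
        rfl
      inv_mem' := by
        intro a (ha : I.comap _ = I)
        show I.comap (galRestrict (𝓞 L) L M (𝓞 M) a⁻¹) = I
        rw [map_inv]
        conv_lhs => rw [← ha]
        ext x
        rw [Ideal.mem_comap, Ideal.mem_comap]
        have : rint a ((galRestrict (𝓞 L) L M (𝓞 M) a)⁻¹ x) = x :=
          AlgEquiv.apply_symm_apply (galRestrict (𝓞 L) L M (𝓞 M) a) x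
        rw [this] }
  have : Subgroup.zpowers σ ≤ S := by
    rw [Subgroup.zpowers_le]; exact hc σ hI
  exact this (hσ g)

/-- In an unramified cyclic extension, every nonzero ideal fixed by `σ` is
extended from the ground field. -/
theorem exists_map_eq_of_fixed (hu : FinUnram L M) (I : Ideal (𝓞 M)) (hI0 : I ≠ ⊥)
    (hI : I.map (rint σ) = I) : ∃ J : Ideal (𝓞 L), J.map (algebraMap (𝓞 L) (𝓞 M)) = I := by
  induction I using WellFoundedGT.induction with
  | ind I ih =>
  by_cases htop : I = ⊤
  · exact ⟨⊤, by rw [htop, Ideal.map_top]⟩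
  obtain ⟨P, hPm, hP⟩ := Ideal.exists_le_maximal I htop
  have hPp := hPm.isPrime
  have hP0 : P ≠ ⊥ := ne_bot_of_le_ne_bot hI0 hP
  set q := P.under (𝓞 L) with hq
  have hqp : q.IsPrime := inferInstance
  have hq0 : q ≠ ⊥ := mt Ideal.eq_bot_of_comap_eq_bot hP0
  have hle : I ≤ q.map (algebraMap (𝓞 L) (𝓞 M)) := by
    rw [← (hu q hqp hq0).radical, Ideal.radical_eq_sInf]
    refine le_sInf ?_
    rintro Q ⟨hQ1, hQ2⟩
    have hQ : Q ∈ Ideal.primesOver q (𝓞 M) := by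
      refine ⟨hQ2, ⟨?_⟩⟩
      exact (hqp.isMaximal hq0).eq_of_le (Ideal.IsPrime.under (𝓞 L) Q).ne_top
        (Ideal.map_le_iff_le_comap.mp hQ1)
    have hPq : P ∈ Ideal.primesOver q (𝓞 M) := ⟨hPp, ⟨rfl⟩⟩
    obtain ⟨g, hg⟩ := Ideal.exists_comap_galRestrict_eq (𝓞 L) L M (𝓞 M) hPq hQ
    rw [← hg, ← map_galRestrict_of_gen hσ hI g]
    exact Ideal.comap_mono hP
  obtain ⟨I', hI'⟩ := Ideal.dvd_iff_le.mpr hle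
  have hq0' : q.map (algebraMap (𝓞 L) (𝓞 M)) ≠ ⊥ := by
    intro h
    exact hq0 ((Ideal.map_eq_bot_iff_of_injective
      (FaithfulSMul.algebraMap_injective (𝓞 L) (𝓞 M))).mp h)
  have hI'0 : I' ≠ ⊥ := by
    rintro rfl
    exact hI0 (by rw [hI', Ideal.mul_bot])
  have hfix : I'.map (rint σ) = I' := by
    have h1 : (q.map (algebraMap (𝓞 L) (𝓞 M))).map (rint σ) = q.map (algebraMap (𝓞 L) (𝓞 M)) := by
      apply le_antisymm
      · rw [Ideal.map_le_iff_le_comap, Ideal.map_le_iff_le_comap]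
        intro x hx
        rw [Ideal.mem_comap, Ideal.mem_comap, AlgEquiv.commutes]
        exact Ideal.mem_map_of_mem _ hx
      · rw [Ideal.map_le_iff_le_comap]
        intro x hx
        rw [Ideal.mem_comap, ← AlgEquiv.commutes (rint σ) x]
        exact Ideal.mem_map_of_mem _ (Ideal.mem_map_of_mem _ hx)
    rw [hI', Ideal.map_mul, h1] at hI
    exact mul_left_cancel₀ hq0' hI
  have hlt : I < I' := by
    refine lt_of_le_of_ne (hI'.le.trans Ideal.mul_le_right) ?_
    intro h
    rw [h] at hI'
    have : q.map (algebraMap (𝓞 L) (𝓞 M)) = 1 := by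
      refine mul_right_cancel₀ hI'0 ?_
      rw [← hI', one_mul]
    have hPq : q.map (algebraMap (𝓞 L) (𝓞 M)) ≤ P := Ideal.map_comap_le
    rw [this, Ideal.one_eq_top, top_le_iff] at hPq
    exact hPm.ne_top hPq
  obtain ⟨J, hJ⟩ := ih I' hlt hI'0 hfix
  exact ⟨q * J, by rw [Ideal.map_mul, hJ, hI']⟩
end

end

/-! ### Units in a cyclic unramified extension -/

section
open NumberField Module nonZeroDivisors

/-- If the fibres of a map `K → T` lie in left cosets of `H`, then `H` has index at
most `|T|` in `K`. -/
@[to_additive add_relIndex_le_card]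
theorem relIndex_le_card {G T : Type*} [Group G] [Finite T] (H K : Subgroup G) (f : K → T)
    (h : ∀ x y, f x = f y → (x : G)⁻¹ * y ∈ H) : H.relIndex K ≤ Nat.card T := by
  refine Nat.card_le_card_of_injective (fun q : K ⧸ H.subgroupOf K => f q.out) ?_
  intro a b hab
  have := h _ _ hab
  rw [← Quotient.out_eq a, ← Quotient.out_eq b]
  exact QuotientGroup.eq.mpr (Subgroup.mem_subgroupOf.mpr (by simpa using this))

section
variable (L : Type*) {M : Type*} [Field L] [NumberField L] [Field M] [NumberField M] [Algebra L M]
  [IsGalois L M]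

/-- The norm on units, with values in the units of the upper field; written additively so that
`unit_herbrand` applies. -/
noncomputable def uN (M : Type*) [Field M] [NumberField M] [Algebra L M]
  [IsGalois L M] : Additive (𝓞 M)ˣ →+ Additive (𝓞 M)ˣ :=
  MonoidHom.toAdditive ((Units.map (algebraMap (𝓞 L) (𝓞 M) : 𝓞 L →* 𝓞 M)).comp
    (Units.map (Algebra.intNorm (𝓞 L) (𝓞 M))))

/-- The map `u ↦ σ u / u` on units, written additively. -/
noncomputable def uD {L : Type*} [Field L] [NumberField L] [Algebra L M]
  [IsGalois L M] (σ : Gal(M/L)) : Additive (𝓞 M)ˣ →+ Additive (𝓞 M)ˣ :=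
  MonoidHom.toAdditive (Units.map (rint σ : 𝓞 M →* 𝓞 M)) - AddMonoidHom.id _

variable {L} {p : ℕ} (hn : finrank L M = p) {σ : Gal(M/L)}
  (hσ : ∀ g, g ∈ Subgroup.zpowers σ)

theorem mem_uD_ker (u : Additive (𝓞 M)ˣ) :
    u ∈ (uD σ).ker ↔ rint σ (u.toMul : 𝓞 M) = (u.toMul : 𝓞 M) := by
  rw [AddMonoidHom.mem_ker, uD, AddMonoidHom.sub_apply, sub_eq_zero, ← Additive.toMul.injective.eq_iff,
    Units.ext_iff]
  rfl

theorem mem_uN_ker (u : Additive (𝓞 M)ˣ) :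
    u ∈ (uN L M).ker ↔ Algebra.intNorm (𝓞 L) (𝓞 M) (u.toMul : 𝓞 M) = 1 := by
  rw [AddMonoidHom.mem_ker, ← Additive.toMul.injective.eq_iff, Units.ext_iff]
  have : ((uN L M u).toMul : 𝓞 M) = algebraMap (𝓞 L) (𝓞 M) (Algebra.intNorm (𝓞 L) (𝓞 M) u.toMul) := rfl
  rw [this]
  simp

/-- Units of the lower field are the fixed units of the upper field. -/
theorem uD_ker_equiv (hσ : ∀ g, g ∈ Subgroup.zpowers σ) :
    Nonempty (Additive (𝓞 L)ˣ ≃+ (uD σ).ker) := by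
  have hinj : Function.Injective (algebraMap (𝓞 L) (𝓞 M)) := FaithfulSMul.algebraMap_injective _ _
  let f : Additive (𝓞 L)ˣ →+ Additive (𝓞 M)ˣ :=
    MonoidHom.toAdditive (Units.map (algebraMap (𝓞 L) (𝓞 M) : 𝓞 L →* 𝓞 M))
  have hf (x) : ((f x).toMul : 𝓞 M) = algebraMap (𝓞 L) (𝓞 M) (x.toMul : 𝓞 L) := rfl
  have hmem (x) : f x ∈ (uD σ).ker := by
    rw [mem_uD_ker, hf, AlgEquiv.commutes]
  refine ⟨AddEquiv.ofBijective (f.codRestrict _ hmem) ⟨?_, ?_⟩⟩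
  · intro x y h
    have h' : f x = f y := congrArg Subtype.val h
    apply Additive.toMul.injective
    apply Units.ext
    apply hinj
    rw [← hf, ← hf, h']
  · rintro ⟨u, hu⟩
    obtain ⟨y, hy⟩ := fixed_int_of_gen hσ _ ((mem_uD_ker u).mp hu)
    have hu' : -u ∈ (uD σ).ker := neg_mem hu
    obtain ⟨z, hz⟩ := fixed_int_of_gen hσ _ ((mem_uD_ker (-u)).mp hu')
    have hyz : y * z = 1 := by
      apply hinj
      rw [map_mul, hy, hz, map_one, toMul_neg, Units.mul_inv]
    refine ⟨Additive.ofMul ⟨y, z, hyz, by rw [mul_comm, hyz]⟩, ?_⟩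
    apply Subtype.ext
    apply Additive.toMul.injective
    apply Units.ext
    exact hy

include hn hσ in
/-- The units of norm `1` modulo the `σ u / u` are strictly more numerous than the fixed
units modulo norms. The ranks needed for `unit_herbrand` come from Dirichlet's unit theorem: as
`M / L` is unramified at infinity, `M` has `p` times as many infinite places as `L`. -/
theorem units_ineq (hp : p.Prime) (ζ : L) (hζ : IsPrimitiveRoot ζ p)
    [IsUnramifiedAtInfinitePlaces L M] :
    (uN L M).range.relIndex (uD σ).ker < (uD σ).range.relIndex (uN L M).ker ∧
      (uN L M).range.relIndex (uD σ).ker ≠ 0 := by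
  have hinj : Function.Injective (algebraMap (𝓞 L) (𝓞 M)) := FaithfulSMul.algebraMap_injective _ _
  let s : Additive (𝓞 M)ˣ →+ Additive (𝓞 M)ˣ := MonoidHom.toAdditive (Units.map (rint σ : 𝓞 M →* 𝓞 M))
  have hs1 (i : ℕ) (x : Additive (𝓞 M)ˣ) : ((s^[i] x).toMul : 𝓞 M) = (rint σ)^[i] (x.toMul : 𝓞 M) := by
    induction i with
    | zero => rfl
    | succ i ih =>
      rw [Function.iterate_succ_apply', Function.iterate_succ_apply', ← ih]; rfl
  have : NeZero p := ⟨hp.ne_zero⟩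
  obtain ⟨z, hz⟩ : ∃ z : (𝓞 L)ˣ, IsPrimitiveRoot z p := by
    have h1 : IsPrimitiveRoot hζ.toInteger p := hζ.toInteger_isPrimitiveRoot
    exact ⟨(h1.isUnit hp.ne_zero).unit, h1.isUnit_unit hp.ne_zero⟩
  have hp1 : 0 < Fintype.card (InfinitePlace L) := Fintype.card_pos
  refine unit_herbrand p hp s (uD σ) (uN L M) ?_ (fun x => rfl) ?_ (Fintype.card (InfinitePlace L)) ?_ ?_
    (Additive.ofMul (Units.map (algebraMap (𝓞 L) (𝓞 M) : 𝓞 L →* 𝓞 M) z)) ?_ ?_ ?_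
  · intro x
    apply Additive.toMul.injective
    apply Units.ext
    rw [hs1]
    apply RingOfIntegers.ext
    rw [coe_rint_iterate, ← orderOf_gen hn hσ, pow_orderOf_eq_one]
    rfl
  · intro x
    apply Additive.toMul.injective
    apply Units.ext
    rw [toMul_sum, Units.coe_prod]
    simp_rw [hs1]
    rw [prod_range_eq_intNorm hn hσ]
    rfl
  · rw [Units.finrank_eq, Units.rank, IsUnramifiedAtInfinitePlaces.card_infinitePlace L M, hn,
      mul_comm]
    have : 0 < p * Fintype.card (InfinitePlace L) := Nat.mul_pos hp.pos hp1
    omega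
  · obtain ⟨e⟩ := uD_ker_equiv hσ
    rw [← finrank_int_congr e, Units.finrank_eq, Units.rank]
    omega
  · rw [addOrderOf_ofMul_eq_orderOf]
    exact (orderOf_injective _ (Units.map_injective hinj) z).trans hz.eq_orderOf.symm
  · apply Additive.toMul.injective
    apply Units.ext
    exact AlgEquiv.commutes (rint σ) _
  · have : Nat.card (nsmulAddMonoidHom (α := Additive (𝓞 M)ˣ) p).ker ≤ Nat.card (rootsOfUnity p (𝓞 M)) := by
      refine Nat.card_le_card_of_injective
        (fun u => (⟨u.1.toMul, ?_⟩ : rootsOfUnity p (𝓞 M))) ?_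
      · have := u.2
        rw [AddMonoidHom.mem_ker] at this
        rw [mem_rootsOfUnity]
        exact congrArg Additive.toMul this
      · intro a b h
        exact Subtype.ext (Additive.toMul.injective (congrArg Subtype.val h))
    refine this.trans ?_
    exact card_rootsOfUnity _ _
end

end

/-! ### Ambiguous classes: the norm on class groups is not surjective -/

section
open NumberField Module nonZeroDivisors

section
variable {L M : Type*} [Field L] [NumberField L] [Field M] [NumberField M] [Algebra L M]
  [IsGalois L M] {p : ℕ} (hn : finrank L M = p) {σ : Gal(M/L)}
  (hσ : ∀ g, g ∈ Subgroup.zpowers σ)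

/-- The action of `σ` on ideal classes. -/
noncomputable def cS (σ : Gal(M/L)) : ClassGroup (𝓞 M) →* ClassGroup (𝓞 M) :=
  cgMap (rint σ : 𝓞 M →+* 𝓞 M) (rint σ).injective

/-- The map `c ↦ σ c / c` on ideal classes. -/
noncomputable def cD (σ : Gal(M/L)) : ClassGroup (𝓞 M) →* ClassGroup (𝓞 M) :=
  cS σ / MonoidHom.id _

variable (L M) in
/-- Extension of ideal classes from `L` to `M`. -/
noncomputable def cJ : ClassGroup (𝓞 L) →* ClassGroup (𝓞 M) :=
  cgMap (algebraMap (𝓞 L) (𝓞 M)) (FaithfulSMul.algebraMap_injective _ _)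

theorem nz_map {A B : Type*} [CommRing A] [IsDomain A] [CommRing B] [IsDomain B]
    (f : A →+* B) (hf : Function.Injective f) (I : (Ideal A)⁰) : I.1.map f ∈ (Ideal B)⁰ :=
  mem_nonZeroDivisors_iff_ne_zero.mpr
    ((Ideal.map_eq_bot_iff_of_injective hf).not.mpr (nonZeroDivisors.coe_ne_zero I))

theorem cS_mk0 (I : (Ideal (𝓞 M))⁰) : ∃ J : (Ideal (𝓞 M))⁰, J.1 = I.1.map (rint σ) ∧
    cS σ (ClassGroup.mk0 I) = ClassGroup.mk0 J :=
  ⟨⟨_, nz_map (rint σ : 𝓞 M →+* 𝓞 M) (rint σ).injective I⟩, rfl, cgMap_mk0 _ _ _ _ rfl⟩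

/-- The norm on class groups is invariant under `σ`. -/
theorem clN_cS (c : ClassGroup (𝓞 M)) :
    clN (𝓞 L) (𝓞 M) (cS σ c) = clN (𝓞 L) (𝓞 M) c := by
  obtain ⟨I, rfl⟩ := ClassGroup.mk0_surjective c
  obtain ⟨J, hJ, h⟩ := cS_mk0 (σ := σ) I
  rw [h, clN_mk0, clN_mk0]
  congr 1
  apply Subtype.ext
  show Ideal.relNorm (𝓞 L) J.1 = Ideal.relNorm (𝓞 L) I.1
  rw [hJ, Ideal.relNorm_map_algEquiv]

/-- The norm kills the image of `cD`, whose order is the number of classes of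
`M` divided by the number of fixed classes. -/
theorem card_le_of_clN_surjective (h : Function.Surjective (clN (𝓞 L) (𝓞 M))) :
    Nat.card (ClassGroup (𝓞 L)) ≤ Nat.card (cD σ).ker := by
  have h1 : (clN (𝓞 L) (𝓞 M)).ker.index = Nat.card (ClassGroup (𝓞 L)) := by
    rw [Subgroup.index_ker, MonoidHom.range_eq_top.mpr h]
    exact Nat.card_congr Subgroup.topEquiv.toEquiv
  have h2 : (cD σ).range ≤ (clN (𝓞 L) (𝓞 M)).ker := by
    rintro _ ⟨c, rfl⟩
    rw [MonoidHom.mem_ker, cD, MonoidHom.div_apply, map_div, clN_cS]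
    simp
  have h3 : (clN (𝓞 L) (𝓞 M)).ker.index ≤ (cD σ).range.index :=
    Nat.le_of_dvd (Nat.pos_of_ne_zero Subgroup.index_ne_zero_of_finite) (Subgroup.index_dvd_of_le h2)
  have h4 := (cD σ).range.index_mul_card
  have h5 := (cD σ).ker.card_mul_index
  rw [Subgroup.index_ker] at h5
  have h6 : 0 < Nat.card (cD σ).range := Nat.card_pos
  have h7 : (cD σ).range.index = Nat.card (cD σ).ker :=
    Nat.eq_of_mul_eq_mul_right h6 (h4.trans h5.symm)
  omega

theorem cJ_range_le : (cJ L M).range ≤ (cD σ).ker := by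
  rintro _ ⟨c, rfl⟩
  obtain ⟨I, rfl⟩ := ClassGroup.mk0_surjective c
  rw [MonoidHom.mem_ker, cD, MonoidHom.div_apply, div_eq_one]
  have hJ := nz_map (algebraMap (𝓞 L) (𝓞 M)) (FaithfulSMul.algebraMap_injective _ _) I
  have h : cS σ (ClassGroup.mk0 ⟨_, hJ⟩) = ClassGroup.mk0 ⟨_, hJ⟩ := by
    refine cgMap_mk0 _ _ _ _ ?_
    show _ = Ideal.map _ (Ideal.map _ _)
    rw [Ideal.map_map]
    have hc : (rint σ : 𝓞 M →+* 𝓞 M).comp (algebraMap (𝓞 L) (𝓞 M)) = algebraMap (𝓞 L) (𝓞 M) :=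
      RingHom.ext fun x => AlgEquiv.commutes (rint σ) x
    exact congrArg (fun f => Ideal.map f I.1) hc.symm
  rw [cJ, cgMap_mk0 _ _ I ⟨_, hJ⟩ rfl, h, MonoidHom.id_apply]

theorem map_span_rint (a : 𝓞 M) : (Ideal.span {a}).map (rint σ) = Ideal.span {rint σ a} := by
  rw [Ideal.map_span, Set.image_singleton]

theorem intNorm_rint (a : 𝓞 M) :
    Algebra.intNorm (𝓞 L) (𝓞 M) (rint σ a) = Algebra.intNorm (𝓞 L) (𝓞 M) a := by
  apply RingOfIntegers.ext
  rw [coe_intNorm, coe_intNorm, coe_rint]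
  exact Algebra.norm_eq_of_algEquiv σ (a : M)

/-- A fixed class is represented by an ideal `I` with `σ I = (b / a) I`; taking
norms, `b / a` has norm a unit `ε` of `L`. -/
theorem exists_unit_of_fixed_class (c : (cD σ).ker) : ∃ (I : (Ideal (𝓞 M))⁰) (a b : 𝓞 M)
    (ε : (𝓞 L)ˣ), ClassGroup.mk0 I = (c : ClassGroup (𝓞 M)) ∧ a ≠ 0 ∧ b ≠ 0 ∧
    Ideal.span {a} * I.1.map (rint σ) = Ideal.span {b} * I.1 ∧
    Algebra.intNorm (𝓞 L) (𝓞 M) a * ε = Algebra.intNorm (𝓞 L) (𝓞 M) b := by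
  obtain ⟨c, hc⟩ := c
  obtain ⟨I, rfl⟩ := ClassGroup.mk0_surjective c
  obtain ⟨J, hJ, h⟩ := cS_mk0 (σ := σ) I
  rw [MonoidHom.mem_ker, cD, MonoidHom.div_apply, div_eq_one, h, MonoidHom.id_apply] at hc
  obtain ⟨a, b, ha, hb, e⟩ := ClassGroup.mk0_eq_mk0_iff.mp hc
  rw [hJ] at e
  have e1 := congrArg (Ideal.relNorm (𝓞 L)) e
  rw [map_mul, map_mul, Ideal.relNorm_singleton, Ideal.relNorm_singleton,
    Ideal.relNorm_map_algEquiv] at e1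
  have e2 := mul_right_cancel₀ (nonZeroDivisors.coe_ne_zero (rn (𝓞 L) (𝓞 M) I)) e1
  obtain ⟨ε, hε⟩ := Ideal.span_singleton_eq_span_singleton.mp e2
  exact ⟨I, a, b, ε, rfl, ha, hb, e, hε⟩

include hn hσ

/-- If the units attached to two fixed classes differ by the norm of a unit, then the
classes differ by a class extended from `L`: Hilbert 90 provides a principal ideal by which the
quotient of the two representatives can be multiplied to become fixed by `σ`, hence extended. -/
theorem fixed_class_key (hu : FinUnram L M) (I I' : (Ideal (𝓞 M))⁰) (a b a' b' : 𝓞 M)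
    (ε ε' : (𝓞 L)ˣ) (ha : a ≠ 0) (hb' : b' ≠ 0)
    (e : Ideal.span {a} * I.1.map (rint σ) = Ideal.span {b} * I.1)
    (e' : Ideal.span {a'} * I'.1.map (rint σ) = Ideal.span {b'} * I'.1)
    (hε : Algebra.intNorm (𝓞 L) (𝓞 M) a * ε = Algebra.intNorm (𝓞 L) (𝓞 M) b)
    (hε' : Algebra.intNorm (𝓞 L) (𝓞 M) a' * ε' = Algebra.intNorm (𝓞 L) (𝓞 M) b')
    (u : (𝓞 M)ˣ) (hεu : (ε : 𝓞 L) = ε' * Algebra.intNorm (𝓞 L) (𝓞 M) u) :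
    (ClassGroup.mk0 I')⁻¹ * ClassGroup.mk0 I ∈ (cJ L M).range := by
  obtain ⟨J, hJ⟩ := ClassGroup.mk0_surjective (ClassGroup.mk0 I')⁻¹
  have h1 : ClassGroup.mk0 (I' * J) = 1 := by rw [map_mul, hJ, mul_inv_cancel]
  rw [ClassGroup.mk0_eq_one_iff] at h1
  obtain ⟨t, ht⟩ := (Submodule.isPrincipal_iff _).mp h1
  have ht : I'.1 * J.1 = Ideal.span {t} := ht
  have ht0 : t ≠ 0 := by
    rintro rfl
    apply nonZeroDivisors.coe_ne_zero (I' * J)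
    show I'.1 * J.1 = _
    rw [ht]; simp
  have hst : I'.1.map (rint σ) * J.1.map (rint σ) = Ideal.span {rint σ t} := by
    rw [← Ideal.map_mul, ht, map_span_rint]
  have hK : Ideal.span {a * b' * t} * (I.1 * J.1).map (rint σ) =
      Ideal.span {b * a' * rint σ t} * (I.1 * J.1) := by
    simp only [← Ideal.span_singleton_mul_span_singleton, Ideal.map_mul, ← hst, ← ht]
    calc _ = (Ideal.span {a} * I.1.map (rint σ)) * (Ideal.span {b'} * I'.1) *
          (J.1 * J.1.map (rint σ)) := by ring
      _ = _ := by rw [e, ← e']; ring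
  have hN : Algebra.intNorm (𝓞 L) (𝓞 M) (b * a' * rint σ t) =
      Algebra.intNorm (𝓞 L) (𝓞 M) (a * b' * t * u) := by
    simp only [map_mul, intNorm_rint, ← hε, ← hε', hεu]
    ring
  obtain ⟨y, hy0, hy⟩ := hilbert90_int hn hσ _ _
    (mul_ne_zero (mul_ne_zero (mul_ne_zero ha hb') ht0) u.ne_zero) hN
  have hKy : Ideal.span {y} * (I.1 * J.1) ≠ ⊥ := by
    refine mul_ne_zero ?_ (nonZeroDivisors.coe_ne_zero (I * J))
    simpa using hy0
  have hfix : (Ideal.span {y} * (I.1 * J.1)).map (rint σ) = Ideal.span {y} * (I.1 * J.1) := by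
    have h0 : Ideal.span {a * b' * t} ≠ 0 := by
      simpa using ⟨⟨ha, hb'⟩, ht0⟩
    apply mul_left_cancel₀ h0
    rw [Ideal.map_mul, map_span_rint, mul_left_comm, hK, ← mul_assoc,
      Ideal.span_singleton_mul_span_singleton, mul_comm (rint σ y), hy,
      ← Ideal.span_singleton_mul_span_singleton, ← mul_assoc,
      Ideal.span_singleton_mul_right_unit u.isUnit]
    simp only [mul_assoc]
  obtain ⟨A, hA⟩ := exists_map_eq_of_fixed hσ hu _ hKy hfix
  have hA0 : A ∈ (Ideal (𝓞 L))⁰ := by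
    rw [mem_nonZeroDivisors_iff_ne_zero]
    rintro rfl
    exact hKy (by rw [← hA]; exact Ideal.map_bot)
  refine ⟨ClassGroup.mk0 ⟨A, hA0⟩, ?_⟩
  have h2 : cJ L M (ClassGroup.mk0 ⟨A, hA0⟩) = ClassGroup.mk0 ⟨_, mem_nonZeroDivisors_iff_ne_zero.mpr hKy⟩ :=
    cgMap_mk0 _ _ _ _ hA.symm
  have h3 : ClassGroup.mk0 ⟨_, mem_nonZeroDivisors_iff_ne_zero.mpr hKy⟩ = ClassGroup.mk0 (I * J) := by
    rw [ClassGroup.mk0_eq_mk0_iff]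
    refine ⟨1, y, one_ne_zero, hy0, ?_⟩
    rw [Ideal.span_singleton_one, Ideal.top_mul]
    rfl
  rw [h2, h3, map_mul, hJ, mul_comm]

/-- The fixed classes modulo the extended ones embed in the units of `L` modulo norms of
units, a fixed class being sent to the unit of `exists_unit_of_fixed_class`. -/
theorem relIndex_le_one (hu : FinUnram L M)
    (h0 : (uN L M).range.relIndex (uD σ).ker ≠ 0) :
    (cJ L M).range.relIndex (cD σ).ker ≤ (uN L M).range.relIndex (uD σ).ker := by
  have hfin : Finite ((uD σ).ker ⧸ (uN L M).range.addSubgroupOf (uD σ).ker) :=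
    Nat.finite_of_card_ne_zero h0
  choose I a b ε hI ha hb e hε using exists_unit_of_fixed_class (σ := σ)
  have hmem (x : (𝓞 L)ˣ) : Additive.ofMul (Units.map (algebraMap (𝓞 L) (𝓞 M) : 𝓞 L →* 𝓞 M) x)
      ∈ (uD σ).ker := by
    rw [mem_uD_ker]; exact AlgEquiv.commutes _ _
  refine relIndex_le_card (T := (uD σ).ker ⧸ (uN L M).range.addSubgroupOf (uD σ).ker) _ _
    (fun c => QuotientAddGroup.mk (⟨_, hmem (ε c)⟩ : (uD σ).ker)) ?_
  intro c c' h
  have h1 := AddSubgroup.mem_addSubgroupOf.mp (QuotientAddGroup.eq.mp h)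
  obtain ⟨u, hu1⟩ := h1
  rw [← hI c, ← hI c']
  refine fixed_class_key hn hσ hu (I c') (I c) (a c') (b c') (a c) (b c) (ε c') (ε c)
    (ha _) (hb _) (e _) (e _) (hε _) (hε _) u.toMul ?_
  have h2 : Units.map (algebraMap (𝓞 L) (𝓞 M) : 𝓞 L →* 𝓞 M) (Units.map (Algebra.intNorm (𝓞 L) (𝓞 M)) u.toMul)
    = (Units.map (algebraMap (𝓞 L) (𝓞 M) : 𝓞 L →* 𝓞 M) (ε c))⁻¹ *
      Units.map (algebraMap (𝓞 L) (𝓞 M) : 𝓞 L →* 𝓞 M) (ε c') := congrArg Additive.toMul hu1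
  rw [← map_inv, ← map_mul] at h2
  have h3 := Units.map_injective (f := (algebraMap (𝓞 L) (𝓞 M) : 𝓞 L →* 𝓞 M))
    (FaithfulSMul.algebraMap_injective (𝓞 L) (𝓞 M)) h2
  rw [eq_inv_mul_iff_mul_eq] at h3
  rw [← h3]
  rfl

/-- The units of norm `1` modulo the `σ u / u` embed in the kernel of extension of classes.
A unit `u` of norm `1` satisfies `u * σ y = y` for some integer `y`; the ideal `(y)` is fixed, hence
extended from an ideal of `L`, whose class is the image of `u`. -/
theorem relIndex_le_two (hu : FinUnram L M) :
    (uD σ).range.relIndex (uN L M).ker ≤ Nat.card (cJ L M).ker := by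
  have key (u : (uN L M).ker) : ∃ (y : 𝓞 M) (A : (Ideal (𝓞 L))⁰), y ≠ 0 ∧
      (u.1.toMul : 𝓞 M) * rint σ y = y ∧ A.1.map (algebraMap (𝓞 L) (𝓞 M)) = Ideal.span {y} := by
    obtain ⟨u, hu1⟩ := u
    rw [mem_uN_ker] at hu1
    obtain ⟨y, hy0, hy⟩ := hilbert90_int hn hσ (u.toMul : 𝓞 M) 1 one_ne_zero (by rw [hu1, map_one])
    rw [one_mul] at hy
    have hy0' : Ideal.span {y} ≠ ⊥ := by simpa using hy0
    obtain ⟨A, hA⟩ := exists_map_eq_of_fixed hσ hu (Ideal.span {y}) hy0' (by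
      rw [map_span_rint, ← Ideal.span_singleton_mul_left_unit (u.toMul).isUnit, hy])
    have hA0 : A ∈ (Ideal (𝓞 L))⁰ := by
      rw [mem_nonZeroDivisors_iff_ne_zero]
      rintro rfl
      exact hy0' (by rw [← hA]; exact Ideal.map_bot)
    exact ⟨y, ⟨A, hA0⟩, hy0, hy, hA⟩
  choose y A hy0 hy hA using key
  have hmem (u) : ClassGroup.mk0 (A u) ∈ (cJ L M).ker := by
    have hJ : Ideal.span {y u} ∈ (Ideal (𝓞 M))⁰ := by
      rw [mem_nonZeroDivisors_iff_ne_zero]; simpa using hy0 u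
    rw [MonoidHom.mem_ker, cJ, cgMap_mk0 _ _ (A u) ⟨_, hJ⟩ (hA u).symm, ClassGroup.mk0_eq_one_iff]
    exact ⟨⟨y u, rfl⟩⟩
  refine add_relIndex_le_card (T := (cJ L M).ker) _ _ (fun u => ⟨_, hmem u⟩) ?_
  intro u u' h
  obtain ⟨x, x', hx, hx', e⟩ := ClassGroup.mk0_eq_mk0_iff.mp (congrArg Subtype.val h)
  have e1 := congrArg (Ideal.map (algebraMap (𝓞 L) (𝓞 M))) e
  rw [Ideal.map_mul, Ideal.map_mul, hA, hA, Ideal.map_span, Ideal.map_span, Set.image_singleton,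
    Set.image_singleton, Ideal.span_singleton_mul_span_singleton,
    Ideal.span_singleton_mul_span_singleton] at e1
  obtain ⟨w, hw⟩ := Ideal.span_singleton_eq_span_singleton.mp e1
  have hw' := congrArg (rint σ) hw
  simp only [map_mul, AlgEquiv.commutes] at hw'
  have hinj := FaithfulSMul.algebraMap_injective (𝓞 L) (𝓞 M)
  have hx0 : algebraMap (𝓞 L) (𝓞 M) x ≠ 0 := (map_ne_zero_iff _ hinj).mpr hx
  have hsy : rint σ (y u) ≠ 0 := (map_ne_zero_iff _ (rint σ).injective).mpr (hy0 u)
  have hfin : (u'.1.toMul : 𝓞 M) * rint σ w = (u.1.toMul : 𝓞 M) * w := by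
    apply mul_left_cancel₀ (mul_ne_zero hx0 hsy)
    linear_combination (u'.1.toMul : 𝓞 M) * hw' +
      (algebraMap (𝓞 L) (𝓞 M) x') * hy u' - hw - (algebraMap (𝓞 L) (𝓞 M) x) * w * hy u
  refine ⟨Additive.ofMul w⁻¹, ?_⟩
  rw [uD, AddMonoidHom.sub_apply]
  apply Additive.toMul.injective
  show (Units.map (rint σ : 𝓞 M →* 𝓞 M) w⁻¹) / w⁻¹ = u.1.toMul⁻¹ * u'.1.toMul
  have : u'.1.toMul * Units.map (rint σ : 𝓞 M →* 𝓞 M) w = u.1.toMul * w := Units.ext hfin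
  rw [map_inv, div_inv_eq_mul, eq_inv_mul_iff_mul_eq, mul_left_comm, ← this, mul_left_comm,
    inv_mul_cancel, mul_one]

/-- In a cyclic extension of prime degree `p`, unramified at all places, of a number
field containing the `p`-th roots of unity, the norm on class groups is not surjective. This takes
the place of class field theory in the argument. -/
theorem norm_not_surjective (hp : p.Prime) (ζ : L) (hζ : IsPrimitiveRoot ζ p)
    [IsUnramifiedAtInfinitePlaces L M] (hu : FinUnram L M) :
    ¬ Function.Surjective (clN (𝓞 L) (𝓞 M)) := by
  intro h
  obtain ⟨h1, h0⟩ := units_ineq hn hσ hp ζ hζ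
  have h2 := card_le_of_clN_surjective (σ := σ) h
  have h3 := relIndex_le_one hn hσ hu h0
  have h4 := relIndex_le_two hn hσ hu
  have h5 : Nat.card (cJ L M).range * (cJ L M).range.relIndex (cD σ).ker = Nat.card (cD σ).ker := by
    have := Subgroup.relIndex_mul_relIndex ⊥ (cJ L M).range (cD σ).ker bot_le cJ_range_le
    rwa [Subgroup.relIndex_bot_left, Subgroup.relIndex_bot_left] at this
  have h6 := (cJ L M).ker.card_mul_index
  rw [Subgroup.index_ker] at h6
  have h7 : 0 < Nat.card (cJ L M).range := Nat.card_pos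
  -- `|Cl L| ≤ |j (Cl L)| * [H : N E] < |j (Cl L)| * |ker j| = |Cl L|`
  have h8 : (cJ L M).range.relIndex (cD σ).ker < Nat.card (cJ L M).ker := by omega
  have h9 := Nat.mul_lt_mul_of_pos_left h8 h7
  rw [h5, mul_comm, h6] at h9
  omega
end

end

/-! ### Ramification in Kummer extensions -/

section
open NumberField Module nonZeroDivisors

section
variable {L M : Type*} [Field L] [NumberField L] [Field M] [NumberField M] [Algebra L M]

theorem finUnram_of_ramificationIdx (h : ∀ P : Ideal (𝓞 M), P.IsPrime → P ≠ ⊥ →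
    P.ramificationIdx (𝓞 L) = 1) : FinUnram L M := by
  intro q hq hq0
  set I := q.map (algebraMap (𝓞 L) (𝓞 M)) with hI
  have hI0 : I ≠ 0 := (Ideal.map_eq_bot_iff_of_injective
      (FaithfulSMul.algebraMap_injective (𝓞 L) (𝓞 M))).not.mpr hq0
  have hsq : IsRadical I := by
    classical
    rw [isRadical_iff_squarefree_of_ne_zero hI0,
      UniqueFactorizationMonoid.squarefree_iff_nodup_normalizedFactors hI0,
      Multiset.nodup_iff_count_le_one]
    intro P
    by_cases hP : P ∈ UniqueFactorizationMonoid.normalizedFactors I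
    · have hPp := Ideal.isPrime_of_prime (UniqueFactorizationMonoid.prime_of_normalized_factor P hP)
      have hP0 : P ≠ ⊥ := (UniqueFactorizationMonoid.prime_of_normalized_factor P hP).ne_zero
      have hle : I ≤ P := Ideal.le_of_dvd (UniqueFactorizationMonoid.dvd_of_mem_normalizedFactors hP)
      have hPq : P.LiesOver q := ⟨(hq.isMaximal hq0).eq_of_le (Ideal.IsPrime.under (𝓞 L) P).ne_top
        (Ideal.map_le_iff_le_comap.mp hle)⟩
      rw [← Ideal.IsDedekindDomain.ramificationIdx_eq_normalizedFactors_count q P hI0, h P hPp hP0]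
    · rw [Multiset.count_eq_zero_of_notMem hP]; exact zero_le_one
  intro x ⟨n, hx⟩
  have := hsq n (Ideal.span {x}) (by
    rw [Ideal.span_singleton_pow]
    exact Ideal.dvd_iff_le.mpr ((Ideal.span_singleton_le_iff_mem _).mpr hx))
  exact (Ideal.span_singleton_le_iff_mem _).mp (Ideal.dvd_iff_le.mp this)

/-- Away from `p` and from the generator `β`, the different is trivial: it contains the
derivative `p * β ^ (p - 1)` of the minimal polynomial of `β`. -/
theorem ram_one_of_kummer {p : ℕ} (β : 𝓞 M) (α : 𝓞 L) (hβ : β ^ p = algebraMap (𝓞 L) (𝓞 M) α)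
    (htop : Algebra.adjoin L {(β : M)} = ⊤) (P : Ideal (𝓞 M)) [P.IsPrime] (hβP : β ∉ P)
    (hpP : (p : 𝓞 M) ∉ P) : P.ramificationIdx (𝓞 L) = 1 := by
  rw [Ideal.ramificationIdx_eq_one_iff]
  rw [← not_dvd_differentIdeal_iff]
  intro hdvd
  have h1 := aeval_derivative_mem_differentIdeal (𝓞 L) L M β htop
  have h2 := Ideal.le_of_dvd hdvd h1
  have h3 : minpoly (𝓞 L) β ∣ Polynomial.X ^ p - Polynomial.C α := by
    apply minpoly.isIntegrallyClosed_dvd (Algebra.IsIntegral.isIntegral β)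
    simp [hβ]
  obtain ⟨g, hg⟩ := h3
  have h4 := congrArg (fun f => Polynomial.aeval β (Polynomial.derivative f)) hg
  simp only [Polynomial.derivative_sub, Polynomial.derivative_X_pow, Polynomial.derivative_C,
    sub_zero, Polynomial.derivative_mul, map_mul, map_add, minpoly.aeval, zero_mul, add_zero,
    map_pow, Polynomial.aeval_X, map_natCast] at h4
  have h5 : (p : 𝓞 M) * β ^ (p - 1) ∈ P := by
    rw [h4]; exact P.mul_mem_right _ h2
  rcases ‹P.IsPrime›.mem_or_mem h5 with h | h
  · exact hpP h
  · exact hβP (‹P.IsPrime›.mem_of_pow_mem _ h)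

variable [IsGalois L M] {p : ℕ} {σ : Gal(M/L)} 

open scoped Pointwise in
/-- In a cyclic extension of prime degree, a prime `P` moved by `σ` has `p` distinct
conjugates, so it is unramified and of residue degree one. -/
theorem split_of_not_fixed (hn : finrank L M = p) (hp : p.Prime) (q : Ideal (𝓞 L)) [hq : q.IsMaximal] (hq0 : q ≠ ⊥)
    (P : Ideal (𝓞 M)) [P.IsPrime] [P.LiesOver q]
    (h : P.map (rint σ) ≠ P) : P.ramificationIdx (𝓞 L) = 1 ∧ Ideal.relNorm (𝓞 L) P = q := by
  have h1 := Ideal.card_stabilizer_eq q P (G := Gal(M/L))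
  have hs : MulAction.stabilizer Gal(M/L) P ≠ ⊤ := by
    intro ht
    have : σ ∈ MulAction.stabilizer Gal(M/L) P := by rw [ht]; trivial
    apply h
    have h3 : σ • P = P := this
    rw [Ideal.pointwise_smul_def] at h3
    have h4 : MulSemiringAction.toRingHom Gal(M/L) (𝓞 M) σ = (rint σ : 𝓞 M →+* 𝓞 M) := by
      ext x
      exact (coe_rint σ x).symm
    rw [h4] at h3
    exact h3
  have hc : Nat.card Gal(M/L) = p := by rw [IsGalois.card_aut_eq_finrank, hn]
  have hfp : Fact (Nat.card Gal(M/L)).Prime := ⟨by rw [hc]; exact hp⟩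
  have hb := (Subgroup.eq_bot_or_eq_top_of_prime_card (MulAction.stabilizer Gal(M/L) P)).resolve_right hs
  rw [hb, Subgroup.card_bot] at h1
  rw [Ideal.ramificationIdxIn_eq_ramificationIdx q P Gal(M/L), Ideal.inertiaDegIn_eq_inertiaDeg q P Gal(M/L)] at h1
  have h2 := Nat.eq_one_of_mul_eq_one_left h1.symm
  have h3 := Nat.eq_one_of_mul_eq_one_right h1.symm
  refine ⟨by assumption, ?_⟩
  have := Ideal.IsMaximal.of_liesOver_isMaximal P q
  rw [Ideal.relNorm_eq_pow_of_isMaximal P q]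
  simp_all
end

end

/-! ### Local `p`-th powers and splitting -/

section
open NumberField Module nonZeroDivisors IsDedekindDomain

/-- `p` is a multiple of `ζ - 1`, with an integral quotient. -/
theorem prime_eq_mul_sub_one {R : Type*} [CommRing R] [IsDomain R] {p : ℕ} (hp : 1 < p) {ζ : R}
    (hζ : IsPrimitiveRoot ζ p) : ζ - 1 ∣ (p : R) := by
  have h : (p : R) = ∑ i ∈ Finset.range p, (1 - ζ ^ i) := by
    rw [Finset.sum_sub_distrib, hζ.geom_sum_eq_zero hp]
    simp
  rw [h]
  refine Finset.dvd_sum fun i _ => ?_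
  rw [← neg_dvd, neg_sub]
  exact one_sub_dvd_one_sub_pow ζ i

section
variable {L M : Type*} [Field L] [NumberField L] [Field M] [NumberField M] [Algebra L M]
  [IsGalois L M] {p : ℕ} {σ : Gal(M/L)} 

/-- If `P` is fixed by `σ`, then `σ` preserves the maximal ideal of the valuation at `P`. -/
theorem valuation_lt_one_of_fixed (P : HeightOneSpectrum (𝓞 M))
    (h : P.asIdeal.map (rint σ) = P.asIdeal) (y : M) (hy : P.valuation M y < 1) :
    P.valuation M (σ y) < 1 := by
  obtain ⟨a, s, hs⟩ := P.exists_primeCompl_mul_eq_of_integer (K := M) y hy.le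
  have hc : P.asIdeal.comap (rint σ) = P.asIdeal := by
    conv_lhs => rw [← h]
    exact Ideal.comap_map_of_bijective _ (rint σ).bijective
  have hmem (x : 𝓞 M) : rint σ x ∈ P.asIdeal ↔ x ∈ P.asIdeal := by
    conv_rhs => rw [← hc]
    rfl
  have h1 (x : 𝓞 M) : P.valuation M (algebraMap (𝓞 M) M x) < 1 ↔ x ∈ P.asIdeal :=
    HeightOneSpectrum.valuation_lt_one_iff_mem P x
  have hs1 : P.valuation M (algebraMap (𝓞 M) M s) = 1 :=
    (HeightOneSpectrum.valuation_eq_one_iff_notMem P).mpr s.2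
  have hs2 : P.valuation M (algebraMap (𝓞 M) M (rint σ s)) = 1 :=
    (HeightOneSpectrum.valuation_eq_one_iff_notMem P).mpr (fun h => s.2 ((hmem _).mp h))
  have ha : a ∈ P.asIdeal := by
    rw [← h1, ← hs, map_mul, hs1, mul_one]; exact hy
  have h2 := congrArg (fun x => P.valuation M (σ x)) hs
  simp only [map_mul] at h2
  have h3 (x : 𝓞 M) : σ (algebraMap (𝓞 M) M x) = algebraMap (𝓞 M) M (rint σ x) := (coe_rint σ x).symm
  rw [h3, h3, hs2, mul_one] at h2
  rw [h2, h1, hmem]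
  exact ha

/-- `α` is a local `p`-th power at `Q`, in a quantitative form: up to multiplication by the
`p`-th power of some `γ` it is strictly closer to `1` than `p ^ p`. For `Q` not above `p` this says
`α * γ ^ p ≡ 1` modulo `Q`; above `p` it is stronger than being a `p`-th power in the completion. -/
def LocPow {L : Type*} [Field L] [NumberField L] (p : ℕ) (α : L) (Q : HeightOneSpectrum (𝓞 L)) :
    Prop :=
  ∃ γ : L, Q.valuation L (α * γ ^ p - 1) < Q.valuation L (p : L) ^ p

/-- A prime above `Q` is moved by `σ` when the Kummer generator `α` is a local `p`-th
power at `Q`. Here `b = β γ` satisfies `b ^ p ≈ 1`, so `b` is close to exactly one `p`-th root of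
unity, and `σ` changes this root. -/
theorem not_fixed_of_locPow (hp : p.Prime) {ζ : L} (hζ : IsPrimitiveRoot ζ p) (β : M) (α : L)
    (hβ : β ^ p = algebraMap L M α) (hσβ : σ β = algebraMap L M ζ * β)
    (Q : HeightOneSpectrum (𝓞 L)) (P : HeightOneSpectrum (𝓞 M)) [hPQ : P.asIdeal.LiesOver Q.asIdeal]
    (hQ : LocPow p α Q) : P.asIdeal.map (rint σ) ≠ P.asIdeal := by
  intro hfix
  obtain ⟨γ, hγ⟩ := hQ
  have : NeZero p := ⟨hp.ne_zero⟩
  set w := P.valuation M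
  set b := β * algebraMap L M γ with hb
  set z := algebraMap L M ζ with hz
  have hzp : IsPrimitiveRoot z p := hζ.map_of_injective (algebraMap L M).injective
  have he := Ideal.IsDedekindDomain.ramificationIdx'_ne_zero_of_liesOver (R := 𝓞 L) P.asIdeal Q.ne_bot
  have h1 : w (b ^ p - 1) < w (p : M) ^ p := by
    have e1 : b ^ p - 1 = algebraMap L M (α * γ ^ p - 1) := by
      rw [hb, mul_pow, hβ]; simp
    have e2 : (p : M) = algebraMap L M (p : L) := by simp
    rw [e1, e2, ← HeightOneSpectrum.valuation_liesOver M Q P, ← HeightOneSpectrum.valuation_liesOver M Q P]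
    exact (pow_lt_pow_left₀ hγ zero_le he).trans_eq (by rw [← pow_mul, mul_comm, pow_mul])
  have h2 : b ^ p - 1 = ∏ i ∈ Finset.range p, (b - z ^ i) := by
    have := X_pow_sub_C_eq_prod hzp hp.pos (one_pow p : (1 : M) ^ p = 1)
    have := congrArg (Polynomial.eval b) this
    simpa [Polynomial.eval_prod] using this
  -- the `p` factors `b - z ^ i` of `b ^ p - 1` have a product of valuation `< w p ^ p`
  obtain ⟨i, hi⟩ : ∃ i, w (b - z ^ i) < w (p : M) := by
    by_contra! hcon
    rw [h2, map_prod] at h1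
    refine absurd h1 (not_lt.mpr ?_)
    calc w (p : M) ^ p = ∏ i ∈ Finset.range p, w (p : M) := by simp
      _ ≤ _ := Finset.prod_le_prod' fun i _ => hcon i
  have hwz : w z = 1 := by
    have : w z ^ p = 1 := by rw [← map_pow, hzp.pow_eq_one, map_one]
    exact (pow_eq_one_iff_of_nonneg zero_le hp.ne_zero).mp this
  have hle : w (p : M) ≤ w (z - 1) := by
    have hZ : IsPrimitiveRoot hzp.toInteger p := hzp.toInteger_isPrimitiveRoot
    obtain ⟨t, ht⟩ := prime_eq_mul_sub_one hp.one_lt hZ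
    have := congrArg (fun x => w (algebraMap (𝓞 M) M x)) ht
    simp only [map_mul, map_natCast] at this
    rw [this]
    have ht1 : w (algebraMap (𝓞 M) M t) ≤ 1 := HeightOneSpectrum.valuation_le_one P t
    calc _ ≤ w (algebraMap (𝓞 M) M (hzp.toInteger - 1)) * 1 := by gcongr
      _ = _ := by rw [mul_one]; rfl
  have hz1 : z - 1 ≠ 0 := sub_ne_zero.mpr (hzp.ne_one hp.one_lt)
  have hw1 : 0 < w (z - 1) := (Valuation.pos_iff w).mpr hz1
  have h3 : w ((b - z ^ i) / (z - 1)) < 1 := by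
    rw [map_div₀, div_lt_one₀ hw1]
    exact hi.trans_le hle
  have h4 := valuation_lt_one_of_fixed (σ := σ) P hfix _ h3
  have hσz : σ z = z := σ.commutes ζ
  have hσb : σ b = z * b := by
    rw [hb, map_mul, hσβ, AlgEquiv.commutes, mul_assoc]
  have h5 : w (z * b - z ^ i) < w (z - 1) := by
    rw [map_div₀, map_sub, map_sub, map_pow, map_one, hσz, hσb, map_div₀, div_lt_one₀ hw1] at h4
    exact h4
  have h6 : w (z * (b - z ^ i)) < w (z - 1) := by
    rw [map_mul, hwz, one_mul]; exact hi.trans_le hle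
  -- comparison with the image under `σ` leaves `z ^ i * (z - 1)`, whose valuation is not that small
  have h7 := w.map_sub_lt h5 h6
  rw [show z * b - z ^ i - z * (b - z ^ i) = z ^ i * (z - 1) by ring, map_mul, map_pow, hwz, one_pow,
    one_mul] at h7
  exact lt_irrefl _ h7
end

end

/-! ### Kummer extensions away from `p`, and the resulting subgroup of the class group -/

section
open NumberField Module nonZeroDivisors IsDedekindDomain

section
variable {L M : Type*} [Field L] [NumberField L] [Field M] [NumberField M] [Algebra L M]
  [IsGalois L M] {p : ℕ} {σ : Gal(M/L)}

/-- An extension of prime degree is generated by any element outside the ground field. -/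
theorem adjoin_eq_top_of_not_fixed (hn : finrank L M = p) (hp : p.Prime) (x : M) (hx : σ x ≠ x) :
    Algebra.adjoin L {x} = ⊤ := by
  have hs : IsSimpleOrder (Subalgebra L M) := Subalgebra.isSimpleOrder_of_finrank_prime L M (hn ▸ hp)
  refine (eq_bot_or_eq_top _).resolve_left fun h => hx ?_
  have : x ∈ Algebra.adjoin L {x} := Algebra.subset_adjoin rfl
  rw [h, Algebra.mem_bot] at this
  obtain ⟨y, rfl⟩ := this
  exact σ.commutes y

/-- Away from `p`, adjoining the `p`-th root of an element whose valuation is divisible by `p` is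
unramified. -/
theorem ram_one_of_tame (hn : finrank L M = p) (hp : p.Prime) {ζ : L} (hζ : IsPrimitiveRoot ζ p)
    (β : M) (α : L) (hα : α ≠ 0)
    (hβ : β ^ p = algebraMap L M α) (hσβ : σ β = algebraMap L M ζ * β)
    (Q : HeightOneSpectrum (𝓞 L)) (P : HeightOneSpectrum (𝓞 M)) [hPQ : P.asIdeal.LiesOver Q.asIdeal]
    (hQp : Q.valuation L (p : L) = 1) (hQ : ∃ γ : L, γ ≠ 0 ∧ Q.valuation L (α * γ ^ p) = 1) :
    P.asIdeal.ramificationIdx (𝓞 L) = 1 := by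
  obtain ⟨γ, hγ0, hγ⟩ := hQ
  obtain ⟨a, s, hs⟩ := Q.exists_primeCompl_mul_eq_of_integer (K := L) _ hγ.le
  have hs1 : Q.valuation L (algebraMap (𝓞 L) L s) = 1 :=
    (HeightOneSpectrum.valuation_eq_one_iff_notMem Q).mpr s.2
  have ha : a ∉ Q.asIdeal := by
    rw [← HeightOneSpectrum.valuation_eq_one_iff_notMem (K := L), ← hs, map_mul, hγ, hs1, one_mul]
  have hs0 : algebraMap (𝓞 L) L s ≠ 0 := by
    intro h; rw [h, map_zero] at hs1; exact zero_ne_one hs1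
  set b : M := β * algebraMap L M (γ * algebraMap (𝓞 L) L s) with hb
  set α' : 𝓞 L := a * s ^ (p - 1) with hα'
  have e1 : b ^ p = algebraMap L M (algebraMap (𝓞 L) L α') := by
    rw [hb, mul_pow, hβ, ← map_pow, ← map_mul]
    congr 1
    rw [hα', map_mul, ← hs, map_pow, mul_pow, ← mul_pow_sub_one hp.ne_zero (algebraMap (𝓞 L) L s)]
    ring
  have hint : IsIntegral ℤ b := by
    apply IsIntegral.of_pow hp.pos
    rw [e1]
    exact (RingOfIntegers.isIntegral_coe α').map (algebraMap L M |>.toIntAlgHom)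
  let b' : 𝓞 M := ⟨b, hint⟩
  have hb' : b' ^ p = algebraMap (𝓞 L) (𝓞 M) α' := by
    apply RingOfIntegers.ext
    exact e1
  have hβ0 : β ≠ 0 := by
    rintro rfl
    rw [zero_pow hp.ne_zero] at hβ
    exact hα ((map_eq_zero _).mp hβ.symm)
  have hb0 : b ≠ 0 := mul_ne_zero hβ0 ((map_ne_zero _).mpr (mul_ne_zero hγ0 hs0))
  have hσb : σ b ≠ b := by
    rw [hb, map_mul, hσβ, AlgEquiv.commutes, mul_assoc, ← hb]
    intro h
    have h1 := mul_right_cancel₀ hb0 (h.trans (one_mul b).symm)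
    rw [← map_one (algebraMap L M)] at h1
    exact hζ.ne_one hp.one_lt ((algebraMap L M).injective h1)
  have hmem (x : 𝓞 L) : algebraMap (𝓞 L) (𝓞 M) x ∈ P.asIdeal ↔ x ∈ Q.asIdeal := by
    rw [hPQ.over]; rfl
  refine ram_one_of_kummer b' α' hb' (adjoin_eq_top_of_not_fixed (σ := σ) hn hp b hσb) P.asIdeal ?_ ?_
  · intro h
    have h1 := P.asIdeal.pow_mem_of_mem h p hp.pos
    rw [hb', hmem] at h1
    rcases Q.isPrime.mem_or_mem h1 with h | h
    · exact ha h
    · exact s.2 (Q.isPrime.mem_of_pow_mem _ h)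
  · intro h
    have : (p : 𝓞 L) ∈ Q.asIdeal := by rw [← hmem]; simpa using h
    revert this
    rw [imp_false, ← HeightOneSpectrum.valuation_eq_one_iff_notMem (K := L)]
    simpa using hQp

/-- The subgroup is the image of the norm on class groups; it contains the class of each
prime at which `α` is a local `p`-th power, because such a prime is the norm of a prime of `M`. -/
theorem subgroup_of_kummer (hn : finrank L M = p) (hσ : ∀ g, g ∈ Subgroup.zpowers σ) (hp : p.Prime)
    {ζ : L} (hζ : IsPrimitiveRoot ζ p) [IsUnramifiedAtInfinitePlaces L M]
    (β : M) (α : L) (hα : α ≠ 0)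
    (hβ : β ^ p = algebraMap L M α) (hσβ : σ β = algebraMap L M ζ * β)
    (h1 : ∀ Q : HeightOneSpectrum (𝓞 L), Q.valuation L (p : L) = 1 →
      ∃ γ : L, γ ≠ 0 ∧ Q.valuation L (α * γ ^ p) = 1)
    (h2 : ∀ Q : HeightOneSpectrum (𝓞 L), Q.valuation L (p : L) < 1 → LocPow p α Q) :
    ∃ H : Subgroup (ClassGroup (𝓞 L)), H ≠ ⊤ ∧ (∀ c, c ^ p ∈ H) ∧
      ∀ Q : HeightOneSpectrum (𝓞 L), LocPow p α Q →
        ClassGroup.mk0 ⟨Q.asIdeal, mem_nonZeroDivisors_of_ne_zero Q.ne_bot⟩ ∈ H := by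
  have hu : FinUnram L M := by
    apply finUnram_of_ramificationIdx
    intro P hP hP0
    let P' : HeightOneSpectrum (𝓞 M) := ⟨P, hP, hP0⟩
    let Q : HeightOneSpectrum (𝓞 L) := ⟨P.under (𝓞 L), inferInstance, Ideal.under_ne_bot (𝓞 L) hP0⟩
    have hPQ : P'.asIdeal.LiesOver Q.asIdeal := ⟨rfl⟩
    have hle : Q.valuation L (p : L) ≤ 1 := by
      simpa using HeightOneSpectrum.valuation_le_one (K := L) Q (p : 𝓞 L)
    rcases hle.lt_or_eq with h | h
    · have hm : Q.asIdeal.IsMaximal := Q.isMaximal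
      exact (split_of_not_fixed hn hp Q.asIdeal Q.ne_bot P'.asIdeal
        (not_fixed_of_locPow (σ := σ) hp hζ β α hβ hσβ Q P' (h2 Q h))).1
    · exact ram_one_of_tame (σ := σ) hn hp hζ β α hα hβ hσβ Q P' h (h1 Q h)
  refine ⟨(clN (𝓞 L) (𝓞 M)).range, ?_, ?_, ?_⟩
  · intro h
    exact norm_not_surjective hn hσ hp ζ hζ hu (MonoidHom.range_eq_top.mp h)
  · intro c
    obtain ⟨I, rfl⟩ := ClassGroup.mk0_surjective c
    let J : (Ideal (𝓞 M))⁰ := ⟨I.1.map (algebraMap (𝓞 L) (𝓞 M)), mem_nonZeroDivisors_of_ne_zero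
      ((Ideal.map_eq_bot_iff_of_injective
      (FaithfulSMul.algebraMap_injective (𝓞 L) (𝓞 M))).not.mpr (nonZeroDivisors.ne_zero I.2))⟩
    refine ⟨ClassGroup.mk0 J, ?_⟩
    rw [clN_mk0, ← map_pow]
    congr 1
    apply Subtype.ext
    change Ideal.relNorm (𝓞 L) (I.1.map (algebraMap (𝓞 L) (𝓞 M))) = _
    rw [Ideal.relNorm_algebraMap, ← IsFractionRing.finrank_eq (𝓞 L) L (𝓞 M) M, hn]
    rfl
  · intro Q hQ
    have hm : Q.asIdeal.IsMaximal := Q.isMaximal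
    obtain ⟨P, hPm, hPQ⟩ := Ideal.exists_maximal_ideal_liesOver_of_isIntegral (S := 𝓞 M) Q.asIdeal
    have hPp := hPm.isPrime
    have hP0 : P ≠ ⊥ := Ideal.ne_bot_of_liesOver_of_ne_bot Q.ne_bot P
    let P' : HeightOneSpectrum (𝓞 M) := ⟨P, hPp, hP0⟩
    have hPQ' : P'.asIdeal.LiesOver Q.asIdeal := hPQ
    have := (split_of_not_fixed hn hp Q.asIdeal Q.ne_bot P'.asIdeal
        (not_fixed_of_locPow (σ := σ) hp hζ β α hβ hσβ Q P' hQ)).2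
    refine ⟨ClassGroup.mk0 ⟨P, mem_nonZeroDivisors_of_ne_zero hP0⟩, ?_⟩
    rw [clN_mk0]
    congr 1
    exact Subtype.ext this
end

end

/-! ### Infinite places, and the subgroup attached to a Kummer generator -/

section
open NumberField Module nonZeroDivisors IsDedekindDomain

section
variable {L M : Type*} [Field L] [NumberField L] [Field M] [NumberField M] [Algebra L M]
  [IsGalois L M] {p : ℕ} {σ : Gal(M/L)}

open scoped ComplexConjugate in
/-- A Kummer extension of odd prime degree is unramified at infinity, and so is a
quadratic one generated by the square root of a totally positive element. -/
theorem unramified_infinite (hn : finrank L M = p) (hp : p.Prime) (β : M) (α : L)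
    (hβ : β ^ p = algebraMap L M α) (hσβ : σ β ≠ β)
    (h3 : p = 2 → ∀ φ : L →+* ℝ, 0 < φ α) : IsUnramifiedAtInfinitePlaces L M := by
  rcases hp.eq_two_or_odd' with h2 | hodd
  · refine ⟨fun w => ?_⟩
    rw [← InfinitePlace.mk_embedding w, InfinitePlace.isUnramified_mk_iff_forall_isConj]
    intro τ hτ
    set φ := w.embedding
    have hτ' (x : M) : conj (φ x) = φ (τ x) := congrArg (fun f => f x) hτ
    have hreal : ComplexEmbedding.IsReal (φ.comp (algebraMap L M)) := by
      rw [ComplexEmbedding.isReal_iff]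
      ext x
      have := hτ' (algebraMap L M x)
      rw [AlgEquiv.commutes] at this
      exact this
    have hpos := h3 h2 hreal.embedding
    have hsq : φ β ^ 2 = ((hreal.embedding α : ℝ) : ℂ) := by
      rw [ComplexEmbedding.IsReal.coe_embedding_apply, RingHom.comp_apply, ← hβ, map_pow, h2]
    have him : (φ β).im = 0 := by
      have e1 := congrArg Complex.re hsq
      have e2 := congrArg Complex.im hsq
      simp only [pow_two, Complex.mul_re, Complex.mul_im, Complex.ofReal_re, Complex.ofReal_im] at e1 e2
      by_contra h
      have : (φ β).re = 0 := by
        have : (φ β).re * (φ β).im = 0 := by linarith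
        exact (mul_eq_zero.mp this).resolve_right h
      rw [this] at e1
      nlinarith [sq_nonneg (φ β).im]
    have hfix : τ β = β := by
      apply φ.injective
      rw [← hτ', Complex.conj_eq_iff_im.mpr him]
    have hc : Nat.card Gal(M/L) = p := by rw [IsGalois.card_aut_eq_finrank, hn]
    have hfp : Fact (Nat.card Gal(M/L)).Prime := ⟨by rw [hc]; exact hp⟩
    rcases Subgroup.eq_bot_or_eq_top_of_prime_card (MulAction.stabilizer Gal(M/L) β) with hb | ht
    · have : τ ∈ MulAction.stabilizer Gal(M/L) β := hfix
      rw [hb] at this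
      exact this
    · have : σ ∈ MulAction.stabilizer Gal(M/L) β := by rw [ht]; trivial
      exact absurd this hσβ
  · rw [← hn] at hodd
    exact IsUnramifiedAtInfinitePlaces_of_odd_finrank hodd
end

/-- Substitute for class field theory: the Kummer extension generated by a `p`-th root of `α` gives
a proper subgroup of the class group containing all `p`-th powers and the classes of all primes at
which `α` is a local `p`-th power. -/
theorem exists_subgroup_of_kummer {L : Type*} [Field L] [NumberField L] {p : ℕ} (hp : p.Prime)
    {ζ : L} (hζ : IsPrimitiveRoot ζ p) (α : L) (hα : ∀ γ : L, γ ^ p ≠ α)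
    (h1 : ∀ Q : HeightOneSpectrum (𝓞 L), Q.valuation L (p : L) = 1 →
      ∃ γ : L, γ ≠ 0 ∧ Q.valuation L (α * γ ^ p) = 1)
    (h2 : ∀ Q : HeightOneSpectrum (𝓞 L), Q.valuation L (p : L) < 1 → LocPow p α Q)
    (h3 : p = 2 → ∀ φ : L →+* ℝ, 0 < φ α) :
    ∃ H : Subgroup (ClassGroup (𝓞 L)), H ≠ ⊤ ∧ (∀ c, c ^ p ∈ H) ∧
      ∀ Q : HeightOneSpectrum (𝓞 L), LocPow p α Q →
        ClassGroup.mk0 ⟨Q.asIdeal, mem_nonZeroDivisors_of_ne_zero Q.ne_bot⟩ ∈ H := by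
  have hne : NeZero p := ⟨hp.ne_zero⟩
  have hα0 : α ≠ 0 := fun h => hα 0 (by rw [h, zero_pow hp.ne_zero])
  have hirr := X_pow_sub_C_irreducible_of_prime hp hα
  have hprim : (primitiveRoots p L).Nonempty := ⟨ζ, (mem_primitiveRoots hp.pos).mpr hζ⟩
  let f : Polynomial L := Polynomial.X ^ p - Polynomial.C α
  let M := f.SplittingField
  have hG : IsGalois L M := isGalois_of_isSplittingField_X_pow_sub_C hprim hirr M
  have hcyc : IsCyclic Gal(M/L) := isCyclic_of_isSplittingField_X_pow_sub_C hprim hirr M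
  have hn : finrank L M = p := finrank_of_isSplittingField_X_pow_sub_C hprim hirr M
  have hM : NumberField M := NumberField.of_module_finite L M
  obtain ⟨σ, hσ⟩ := hcyc.exists_generator
  have hdeg : f.degree ≠ 0 := by
    rw [Polynomial.degree_X_pow_sub_C hp.pos]; exact_mod_cast hp.ne_zero
  obtain ⟨β, hβ⟩ := (Polynomial.SplittingField.splits f).exists_eval_eq_zero
    (by rwa [Polynomial.degree_map])
  rw [Polynomial.eval_map_algebraMap] at hβ
  replace hβ : β ^ p = algebraMap L M α := by
    simpa [f, sub_eq_zero] using hβ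
  have hβ0 : β ≠ 0 := by
    rintro rfl
    rw [zero_pow hp.ne_zero] at hβ
    exact hα0 ((map_eq_zero _).mp hβ.symm)
  have hσβ : σ β ≠ β := by
    intro h
    obtain ⟨y, hy⟩ := fixed_of_gen hσ β h
    apply hα y
    apply (algebraMap L M).injective
    rw [map_pow, hy, hβ]
  have hq : (σ β / β) ^ p = 1 := by
    rw [div_pow, ← map_pow, hβ, AlgEquiv.commutes, div_self]
    exact (map_ne_zero _).mpr hα0
  have hz : IsPrimitiveRoot (algebraMap L M ζ) p := hζ.map_of_injective (algebraMap L M).injective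
  obtain ⟨i, hi, hzi⟩ := hz.eq_pow_of_pow_eq_one hq
  rw [← map_pow] at hzi
  have hζi : IsPrimitiveRoot (ζ ^ i) p := by
    refine hζ.pow_of_coprime i ?_
    rw [Nat.coprime_comm, hp.coprime_iff_not_dvd]
    intro hd
    rw [(hζ.pow_eq_one_iff_dvd i).mpr hd, map_one, eq_comm, div_eq_one_iff_eq hβ0] at hzi
    exact hσβ hzi
  have hσβ' : σ β = algebraMap L M (ζ ^ i) * β := by
    rw [hzi, div_mul_cancel₀ _ hβ0]
  have := unramified_infinite (σ := σ) hn hp β α hβ hσβ h3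
  exact subgroup_of_kummer hn hσ hp hζi β α hα0 hβ hσβ' h1 h2

end

/-! ### The `p`-rank of a finite abelian group -/

section
open NumberField Module nonZeroDivisors IsDedekindDomain

section
variable {G : Type*} [CommGroup G] [Finite G] {p : ℕ}

/-- If `V` contains the `p`-th powers and `[G : V] < p ^ (s + 1)`, then `V`
together with at most `s` elements of a given generating set generates `G`. -/
theorem exists_finset_sup_closure_eq_top (hp : p.Prime) (S : Set G) (hS : Subgroup.closure S = ⊤)
    (s : ℕ) (V : Subgroup G) (hV : ∀ c, c ^ p ∈ V) (hs : V.index < p ^ (s + 1)) :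
    ∃ T : Finset G, (T : Set G) ⊆ S ∧ T.card ≤ s ∧ V ⊔ Subgroup.closure (T : Set G) = ⊤ := by
  classical
  have : Fact p.Prime := ⟨hp⟩
  induction s generalizing V with
  | zero =>
    refine ⟨∅, by simp, by simp, ?_⟩
    simp only [Finset.coe_empty, Subgroup.closure_empty, sup_bot_eq]
    by_contra h
    obtain ⟨c, hc⟩ : ∃ c, c ∉ V := by
      by_contra! hcon
      exact h ((Subgroup.eq_top_iff' V).mpr hcon)
    have h1 : orderOf (c : G ⧸ V) = p := by
      apply orderOf_eq_prime
      · rw [← QuotientGroup.mk_pow]; exact (QuotientGroup.eq_one_iff _).mpr (hV c)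
      · exact fun h => hc ((QuotientGroup.eq_one_iff _).mp h)
    have h2 := orderOf_le_card (x := (c : G ⧸ V))
    rw [h1] at h2
    have h3 : V.index = Nat.card (G ⧸ V) := rfl
    rw [← h3] at h2
    simp at hs
    omega
  | succ s ih =>
    by_cases h : V = ⊤
    · exact ⟨∅, by simp, by simp, by simp [h]⟩
    obtain ⟨c, hcS, hc⟩ : ∃ c ∈ S, c ∉ V := by
      by_contra! hcon
      exact h (top_le_iff.mp (hS ▸ (Subgroup.closure_le V).mpr hcon))
    have h1 : orderOf (c : G ⧸ V) = p := by
      apply orderOf_eq_prime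
      · rw [← QuotientGroup.mk_pow]; exact (QuotientGroup.eq_one_iff _).mpr (hV c)
      · exact fun h => hc ((QuotientGroup.eq_one_iff _).mp h)
    set V' := V ⊔ Subgroup.zpowers c with hV'
    have hle : V ≤ V' := le_sup_left
    have hcV' : c ∈ V' := (le_sup_right : _ ≤ V') (Subgroup.mem_zpowers c)
    have h4 : p ∣ V.relIndex V' := by
      have e : orderOf ((⟨c, hcV'⟩ : V') : V' ⧸ V.subgroupOf V') = p := by
        apply orderOf_eq_prime
        · rw [← QuotientGroup.mk_pow, QuotientGroup.eq_one_iff, Subgroup.mem_subgroupOf]; exact hV c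
        · rw [Ne, QuotientGroup.eq_one_iff, Subgroup.mem_subgroupOf]; exact hc
      rw [← e]
      exact orderOf_dvd_natCard _
    have h5 := Subgroup.relIndex_mul_index hle
    have h6 : p * V'.index ≤ V.index := by
      rw [← h5]
      refine Nat.mul_le_mul_right _ (Nat.le_of_dvd (Nat.pos_of_ne_zero ?_) h4)
      exact Subgroup.FiniteIndex.index_ne_zero
    have h7 : V'.index < p ^ (s + 1) := by
      have : p * V'.index < p * p ^ (s + 1) := by
        refine h6.trans_lt (hs.trans_eq ?_); ring
      exact lt_of_mul_lt_mul_left this (Nat.zero_le _)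
    obtain ⟨T, hT1, hT2, hT3⟩ := ih V' (fun c => hle (hV c)) h7
    refine ⟨insert c T, ?_, (Finset.card_insert_le _ _).trans (by omega), ?_⟩
    · rw [Finset.coe_insert]; exact Set.insert_subset hcS hT1
    · rw [Finset.coe_insert, Set.insert_eq, Subgroup.closure_union, ← sup_assoc,
        ← Subgroup.zpowers_eq_closure]; exact hT3

theorem nRank_bddAbove (G : Type*) [CommGroup G] [Finite G] (hp : p.Prime) :
    BddAbove {r | ∃ φ : (Fin r → ZMod p) →+ Additive G, Function.Injective φ} := by
  refine ⟨Nat.card G, ?_⟩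
  rintro r ⟨φ, hφ⟩
  have : NeZero p := ⟨hp.ne_zero⟩
  have h := Nat.card_le_card_of_injective φ hφ
  simp only [Nat.card_eq_fintype_card, Fintype.card_pi, ZMod.card, Finset.prod_const, Finset.card_univ, Fintype.card_fin] at h
  have h2 : Nat.card (Additive G) = Nat.card G := Nat.card_congr Additive.toMul
  rw [← h2]
  exact (Nat.lt_pow_self hp.one_lt).le.trans (by simpa using h)

/-- The easy half of the comparison of `p ^ nRank p G` with `|G[p]|`; `le_nRank` is the converse. -/
theorem pow_nRank_le (G : Type*) [CommGroup G] [Finite G] (hp : p.Prime) :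
    p ^ nRank p G ≤ Nat.card (powMonoidHom p : G →* G).ker := by
  have : NeZero p := ⟨hp.ne_zero⟩
  have hne : {r | ∃ φ : (Fin r → ZMod p) →+ Additive G, Function.Injective φ}.Nonempty := by
    refine ⟨0, 0, fun x y _ => Subsingleton.elim _ _⟩
  obtain ⟨φ, hφ⟩ := Nat.sSup_mem hne (nRank_bddAbove G hp)
  change (Fin (nRank p G) → ZMod p) →+ Additive G at φ
  let f : (Fin (nRank p G) → ZMod p) → (powMonoidHom p : G →* G).ker := fun x =>
    ⟨(φ x).toMul, by
      rw [MonoidHom.mem_ker, powMonoidHom_apply, ← toMul_nsmul, ← map_nsmul,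
        show p • x = 0 from funext fun i => by simp, map_zero, toMul_zero]⟩
  have hf : Function.Injective f := by
    intro x y hxy
    apply hφ
    exact congrArg (fun z : (powMonoidHom p : G →* G).ker => (z : G)) hxy
  have h := Nat.card_le_card_of_injective f hf
  simpa using h

theorem exists_embedding_of_card {A : Type*} [AddCommGroup A] [Finite A] (hp : p.Prime)
    (hA : ∀ x : A, p • x = 0) (r : ℕ) (h : p ^ r ≤ Nat.card A) :
    ∃ f : (Fin r → ZMod p) →+ A, Function.Injective f := by
  have : Fact p.Prime := ⟨hp⟩
  let _ : Module (ZMod p) A := AddCommGroup.zmodModule hA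
  have : Module.Finite (ZMod p) A := Module.Finite.of_finite
  have hA : Nat.card A = p ^ finrank (ZMod p) A := by
    have e := @Module.natCard_eq_pow_finrank (ZMod p) A _ _ _ this
    rwa [Nat.card_zmod] at e
  have hle : r ≤ finrank (ZMod p) A := by
    rw [hA] at h
    exact (Nat.pow_le_pow_iff_right hp.one_lt).mp h
  obtain ⟨f, hf⟩ := exists_linearIndependent_of_le_finrank hle
  exact ⟨(Fintype.linearCombination (ZMod p) f).toAddMonoidHom,
    linearIndependent_iff_injective_fintypeLinearCombination.mp hf⟩

theorem le_nRank (G : Type*) [CommGroup G] [Finite G] (hp : p.Prime) (r : ℕ)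
    (h : p ^ r ≤ Nat.card (powMonoidHom p : G →* G).ker) : r ≤ nRank p G := by
  obtain ⟨f, hf⟩ := exists_embedding_of_card (A := Additive (powMonoidHom p : G →* G).ker) hp
    (by
      intro x
      apply Additive.toMul.injective
      apply Subtype.ext
      exact x.toMul.2) r h
  refine le_csSup (nRank_bddAbove G hp) ?_
  refine ⟨(MonoidHom.toAdditive (powMonoidHom p : G →* G).ker.subtype).comp f, ?_⟩
  intro x y hxy
  apply hf
  apply Additive.toMul.injective
  exact Subtype.ext hxy

/-- If `p ^ m ≤ [G : V]`, where `V` contains the `p`-th powers and the image of a homomorphism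
`j : C → G` which is injective modulo `p`-th powers, then `m + nRank p C ≤ nRank p G`. -/
theorem add_nRank_le {C : Type*} [CommGroup C] [Finite C] (hp : p.Prime) (m : ℕ) (j : C →* G)
    (hj : ∀ c x, j c = x ^ p → ∃ y, c = y ^ p) (V : Subgroup G) (hV : ∀ c, c ^ p ∈ V)
    (hjV : ∀ c, j c ∈ V) (hm : p ^ m ≤ V.index) : m + nRank p C ≤ nRank p G := by
  apply le_nRank G hp
  rw [← Subgroup.index_range (f := (powMonoidHom p : G →* G)), pow_add]
  have h1 := pow_nRank_le C hp
  rw [← Subgroup.index_range (f := (powMonoidHom p : C →* C))] at h1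
  have hle : (powMonoidHom p : G →* G).range ≤ V := by
    rintro _ ⟨c, rfl⟩; exact hV c
  rw [← Subgroup.relIndex_mul_index hle, mul_comm]
  refine Nat.mul_le_mul (h1.trans ?_) hm
  have h2 : (powMonoidHom p : C →* C).range = (powMonoidHom p : G →* G).range.comap j := by
    ext c
    constructor
    · rintro ⟨y, rfl⟩; exact ⟨j y, (map_pow j y p).symm⟩
    · rintro ⟨x, hx⟩
      obtain ⟨y, hy⟩ := hj c x hx.symm
      exact ⟨y, hy.symm⟩
  rw [h2, Subgroup.index_comap]
  refine Subgroup.relIndex_le_of_le_right ?_ Subgroup.FiniteIndex.index_ne_zero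
  rintro _ ⟨c, rfl⟩; exact hjV c
end

end

/-! ### Local `p`-th powers and linear forms -/

section
open NumberField Module nonZeroDivisors IsDedekindDomain

/-- A subgroup of the class group containing the classes of all primes that contain the
ideal `I` contains the class of `I`. -/
theorem mk0_mem_of_primes {R : Type*} [CommRing R] [IsDedekindDomain R] (H : Subgroup (ClassGroup R))
    (I : (Ideal R)⁰) (hI : ∀ Q : HeightOneSpectrum R, I.1 ≤ Q.asIdeal →
      ClassGroup.mk0 ⟨Q.asIdeal, mem_nonZeroDivisors_of_ne_zero Q.ne_bot⟩ ∈ H) :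
    ClassGroup.mk0 I ∈ H := by
  obtain ⟨I, hI0⟩ := I
  induction I using UniqueFactorizationMonoid.induction_on_prime with
  | h₁ => exact absurd hI0 zero_notMem_nonZeroDivisors
  | h₂ x hx =>
    rw [ClassGroup.mk0_eq_one_iff hI0 |>.mpr]
    · exact H.one_mem
    · rw [Ideal.isUnit_iff.mp hx]; infer_instance
  | h₃ J P hJ hP ih =>
    have hJ' : J ∈ (Ideal R)⁰ := mem_nonZeroDivisors_of_ne_zero hJ
    have hP' : P ∈ (Ideal R)⁰ := mem_nonZeroDivisors_of_ne_zero hP.ne_zero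
    have e : (⟨P * J, hI0⟩ : (Ideal R)⁰) = ⟨P, hP'⟩ * ⟨J, hJ'⟩ := rfl
    rw [e, map_mul]
    refine H.mul_mem ?_ (ih hJ' fun Q hQ => hI Q (Ideal.mul_le_right.trans hQ))
    exact hI ⟨P, Ideal.isPrime_of_prime hP, hP.ne_zero⟩ Ideal.mul_le_left

theorem closure_primes {R : Type*} [CommRing R] [IsDedekindDomain R] :
    Subgroup.closure (Set.range fun Q : HeightOneSpectrum R =>
      ClassGroup.mk0 ⟨Q.asIdeal, mem_nonZeroDivisors_of_ne_zero Q.ne_bot⟩) = ⊤ := by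
  rw [Subgroup.eq_top_iff']
  intro c
  obtain ⟨I, rfl⟩ := ClassGroup.mk0_surjective c
  exact mk0_mem_of_primes _ I fun Q _ => Subgroup.subset_closure ⟨Q, rfl⟩

section
variable {L : Type*} [Field L] [NumberField L] {p : ℕ} (Q : HeightOneSpectrum (𝓞 L))

theorem LocPow.one (hp : p ≠ 0) : LocPow p (1 : L) Q := by
  refine ⟨1, ?_⟩
  have h : Q.valuation L (p : L) ≠ 0 := by
    rw [Valuation.ne_zero_iff]; exact_mod_cast hp
  simpa using pow_pos (zero_lt_iff.mpr h) p

variable {Q} in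
theorem LocPow.mul {α β : L} (hα : LocPow p α Q) (hβ : LocPow p β Q) : LocPow p (α * β) Q := by
  obtain ⟨γ, hγ⟩ := hα
  obtain ⟨δ, hδ⟩ := hβ
  refine ⟨γ * δ, ?_⟩
  have hle : Q.valuation L (p : L) ≤ 1 := by
    simpa using HeightOneSpectrum.valuation_le_one (K := L) Q (p : 𝓞 L)
  have h1 : Q.valuation L (β * δ ^ p - 1) ≤ 1 := hδ.le.trans (pow_le_one₀ zero_le hle)
  rw [show α * β * (γ * δ) ^ p - 1 = (α * γ ^ p - 1) * (β * δ ^ p - 1) +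
    ((α * γ ^ p - 1) + (β * δ ^ p - 1)) by ring]
  refine Valuation.map_add_lt _ ?_ (Valuation.map_add_lt _ hγ hδ)
  rw [map_mul]
  calc _ ≤ Q.valuation L (α * γ ^ p - 1) * 1 := by gcongr
    _ < _ := by rwa [mul_one]

theorem LocPow.prod (hp : p ≠ 0) {ι : Type*} (s : Finset ι) (α : ι → L) (e : ι → ℕ)
    (h : ∀ j ∈ s, LocPow p (α j) Q) : LocPow p (∏ j ∈ s, α j ^ e j) Q := by
  refine Finset.prod_induction _ (fun x => LocPow p x Q) (fun _ _ => LocPow.mul) (LocPow.one Q hp) ?_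
  intro j hj
  induction e j with
  | zero => rw [pow_zero]; exact LocPow.one Q hp
  | succ k ih => rw [pow_succ]; exact ih.mul (h j hj)

/-- If the valuation of `α` at `Q` is divisible by `p`, then `α` is, up to a `p`-th power, an
integer prime to `Q`. -/
theorem exists_integral_rep (hp : p ≠ 0) (α : L) (h : ∃ γ : L, γ ≠ 0 ∧ Q.valuation L (α * γ ^ p) = 1) :
    ∃ (γ : L) (b : 𝓞 L), α * γ ^ p = algebraMap (𝓞 L) L b ∧ b ∉ Q.asIdeal := by
  obtain ⟨γ, hγ0, hγ⟩ := h
  obtain ⟨a, s, hs⟩ := Q.exists_primeCompl_mul_eq_of_integer (K := L) _ hγ.le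
  have hs1 : Q.valuation L (algebraMap (𝓞 L) L s) = 1 :=
    (HeightOneSpectrum.valuation_eq_one_iff_notMem Q).mpr s.2
  have ha : a ∉ Q.asIdeal := by
    rw [← HeightOneSpectrum.valuation_eq_one_iff_notMem (K := L), ← hs, map_mul, hγ, hs1, one_mul]
  refine ⟨γ * algebraMap (𝓞 L) L s, a * s ^ (p - 1), ?_, ?_⟩
  · rw [map_mul, ← hs, map_pow, mul_pow, ← mul_pow_sub_one hp (algebraMap (𝓞 L) L s)]
    ring
  · intro h
    rcases Q.isPrime.mem_or_mem h with h | h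
    · exact ha h
    · exact s.2 (Q.isPrime.mem_of_pow_mem _ h)

/-- At a prime `Q` not above `p`, being a local `p`-th power is implied by the vanishing of
one linear form modulo `p` in the exponents: the one given by discrete logarithms in the cyclic group
of units of the residue field. -/
theorem exists_linear_form (hp : p.Prime) {ι : Type*} [Fintype ι] (α : ι → L)
    (hQ : Q.valuation L (p : L) = 1)
    (h : ∀ j, ∃ γ : L, γ ≠ 0 ∧ Q.valuation L (α j * γ ^ p) = 1) :
    ∃ a : ι → ℕ, ∀ e : ι → ℕ, p ∣ ∑ j, a j * e j → LocPow p (∏ j, α j ^ e j) Q := by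
  choose γ b hγ hb using fun j => exists_integral_rep Q hp.ne_zero (α j) (h j)
  have hQm := Q.isMaximal
  let k := 𝓞 L ⧸ Q.asIdeal
  let _ : Field k := Ideal.Quotient.field _
  have : Finite k := Ideal.finiteQuotientOfFreeOfNeBot _ Q.ne_bot
  obtain ⟨g, hg⟩ := IsCyclic.exists_generator (α := kˣ)
  obtain ⟨u, hu⟩ := Ideal.Quotient.mk_surjective (g : k)
  have hg' (x : kˣ) : ∃ n : ℕ, g ^ n = x := by
    exact mem_powers_iff_mem_zpowers.mpr (hg x)
  have hbk (j) : (Ideal.Quotient.mk Q.asIdeal (b j) : k) ≠ 0 := by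
    rw [Ne, Ideal.Quotient.eq_zero_iff_mem]; exact hb j
  choose a ha using fun j => hg' (Units.mk0 _ (hbk j))
  refine ⟨a, fun e ⟨t, ht⟩ => ?_⟩
  have huQ : u ∉ Q.asIdeal := by
    rw [← Ideal.Quotient.eq_zero_iff_mem, hu]; exact g.ne_zero
  have hmem : ∏ j, b j ^ e j - u ^ (p * t) ∈ Q.asIdeal := by
    rw [← Ideal.Quotient.eq_zero_iff_mem, map_sub, map_prod, map_pow, hu, ← ht, sub_eq_zero]
    calc ∏ j, (Ideal.Quotient.mk Q.asIdeal) (b j ^ e j) = ∏ j, ((g ^ (a j * e j) : kˣ) : k) := by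
          refine Finset.prod_congr rfl fun j _ => ?_
          rw [pow_mul, ha, map_pow]; simp
      _ = _ := by rw [← Units.coe_prod, Finset.prod_pow_eq_pow_sum, Units.val_pow_eq_pow_val]
  have hu1 : Q.valuation L (algebraMap (𝓞 L) L u) = 1 :=
    (HeightOneSpectrum.valuation_eq_one_iff_notMem Q).mpr huQ
  have hu0 : algebraMap (𝓞 L) L u ≠ 0 := by
    intro h; rw [h, map_zero] at hu1; exact zero_ne_one hu1
  refine ⟨(∏ j, γ j ^ e j) * (algebraMap (𝓞 L) L u)⁻¹ ^ t, ?_⟩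
  rw [hQ, one_pow]
  have e1 : (∏ j, α j ^ e j) * ((∏ j, γ j ^ e j) * (algebraMap (𝓞 L) L u)⁻¹ ^ t) ^ p - 1 =
      algebraMap (𝓞 L) L (∏ j, b j ^ e j - u ^ (p * t)) * (algebraMap (𝓞 L) L u ^ (p * t))⁻¹ := by
    have e2 : algebraMap (𝓞 L) L (∏ j, b j ^ e j) = (∏ j, α j ^ e j) * (∏ j, γ j ^ e j) ^ p := by
      rw [map_prod, ← Finset.prod_pow, ← Finset.prod_mul_distrib]
      refine Finset.prod_congr rfl fun j _ => ?_
      rw [map_pow, ← hγ, mul_pow]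
      ring
    rw [map_sub, e2, map_pow, sub_mul, mul_inv_cancel₀ (pow_ne_zero _ hu0)]
    rw [mul_pow, inv_pow, inv_pow, ← pow_mul, mul_comm t p]
    ring
  rw [e1, map_mul, map_inv₀, map_pow, hu1, one_pow, inv_one, mul_one]
  exact (HeightOneSpectrum.valuation_lt_one_iff_mem Q _).mpr hmem
end

end

/-! ### The class group rank bound -/

section
open NumberField Module nonZeroDivisors IsDedekindDomain

/-- Fewer than `m` linear forms in `m` variables over `𝔽_p` have a common nontrivial zero. -/
theorem exists_kernel_vector {p : ℕ} (hp : p.Prime) {m : ℕ} {ι : Type*} [Fintype ι] (hι : Fintype.card ι < m)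
    (a : ι → Fin m → ℕ) : ∃ e : Fin m → ℕ, (∃ j, ¬ p ∣ e j) ∧ ∀ i, p ∣ ∑ j, a i j * e j := by
  have : Fact p.Prime := ⟨hp⟩
  let T : (Fin m → ZMod p) →ₗ[ZMod p] (ι → ZMod p) :=
    Matrix.mulVecLin (Matrix.of fun i j => (a i j : ZMod p))
  have hT := LinearMap.ker_ne_bot_of_finrank_lt (f := T) (by simpa using hι)
  obtain ⟨x, hx, hx0⟩ := (Submodule.ne_bot_iff _).mp hT
  refine ⟨fun j => (x j).val, ?_, fun i => ?_⟩
  · by_contra! h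
    apply hx0
    ext j
    have := (ZMod.natCast_eq_zero_iff _ p).mpr (h j)
    simpa using this
  · have := congrFun (LinearMap.mem_ker.mp hx) i
    rw [← ZMod.natCast_eq_zero_iff]
    simpa [T, Matrix.mulVec, dotProduct] using this

/-- The rank bound for `Cl L` from `m` elements of `L` which are independent modulo `p`-th
powers, have all valuations divisible by `p`, are local `p`-th powers at all primes over `N`, and are
totally positive when `p = 2`. The condition `hN` on `N` makes the primes over `N` generate, within
`Cl L`, a subgroup containing all classes extended from `K`. -/
theorem rank_bound {K L : Type*} [Field K] [NumberField K] [Field L] [NumberField L] [Algebra K L]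
    {p d : ℕ} (hp : p.Prime) (hd : finrank K L = d) (hdp : d.Coprime p) {ζ : K}
    (hζ : IsPrimitiveRoot ζ p) (N : ℕ) (hpN : p ∣ N)
    (hN : ∀ c : ClassGroup (𝓞 K), ∃ I : (Ideal (𝓞 K))⁰, ClassGroup.mk0 I = c ∧ (N : 𝓞 K) ∈ I.1)
    (m : ℕ) (α : Fin m → L)
    (hind : ∀ e : Fin m → ℕ, (∃ γ : L, γ ^ p = ∏ j, α j ^ e j) → ∀ j, p ∣ e j)
    (hval : ∀ j, ∀ Q : HeightOneSpectrum (𝓞 L), ∃ γ : L, γ ≠ 0 ∧ Q.valuation L (α j * γ ^ p) = 1)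
    (hloc : ∀ j, ∀ Q : HeightOneSpectrum (𝓞 L), (N : 𝓞 L) ∈ Q.asIdeal → LocPow p (α j) Q)
    (hpos : p = 2 → ∀ j, ∀ φ : L →+* ℝ, 0 < φ (α j)) :
    m + nRank p (ClassGroup (𝓞 K)) ≤ nRank p (ClassGroup (𝓞 L)) := by
  classical
  have hζL : IsPrimitiveRoot (algebraMap K L ζ) p := hζ.map_of_injective (algebraMap K L).injective
  let cl : HeightOneSpectrum (𝓞 L) → ClassGroup (𝓞 L) := fun Q =>
    ClassGroup.mk0 ⟨Q.asIdeal, mem_nonZeroDivisors_of_ne_zero Q.ne_bot⟩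
  let V : Subgroup (ClassGroup (𝓞 L)) := Subgroup.closure
    (Set.range (fun c => c ^ p) ∪ cl '' {Q | (N : 𝓞 L) ∈ Q.asIdeal})
  have hV : ∀ c, c ^ p ∈ V := fun c => Subgroup.subset_closure (Or.inl ⟨c, rfl⟩)
  have hinj := FaithfulSMul.algebraMap_injective (𝓞 K) (𝓞 L)
  let J : (Ideal (𝓞 K))⁰ → (Ideal (𝓞 L))⁰ := fun I =>
    ⟨I.1.map (algebraMap (𝓞 K) (𝓞 L)), mem_nonZeroDivisors_of_ne_zero
      ((Ideal.map_eq_bot_iff_of_injective hinj).not.mpr (nonZeroDivisors.ne_zero I.2))⟩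
  refine add_nRank_le hp m (cgMap (algebraMap (𝓞 K) (𝓞 L)) hinj) ?_ V hV ?_ ?_
  · intro c x hcx
    -- the norm of the extension of `c` is `c ^ d`
    have h1 : c ^ d = (clN (𝓞 K) (𝓞 L) x) ^ p := by
      rw [← map_pow, ← hcx]
      obtain ⟨I, rfl⟩ := ClassGroup.mk0_surjective c
      rw [cgMap_mk0 _ _ I (J I) rfl, clN_mk0, ← map_pow]
      congr 1
      apply Subtype.ext
      change _ = Ideal.relNorm (𝓞 K) (I.1.map (algebraMap (𝓞 K) (𝓞 L)))
      rw [Ideal.relNorm_algebraMap, ← IsFractionRing.finrank_eq (𝓞 K) K (𝓞 L) L, hd]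
      rfl
    refine ⟨clN (𝓞 K) (𝓞 L) x ^ (d.gcdA p) * c ^ (d.gcdB p), ?_⟩
    have hb := Nat.gcd_eq_gcd_ab d p
    rw [hdp.gcd_eq_one] at hb
    calc c = c ^ ((1 : ℕ) : ℤ) := by simp
      _ = (c ^ d) ^ (d.gcdA p) * (c ^ (d.gcdB p)) ^ p := by
        rw [hb, zpow_add, zpow_mul, zpow_natCast, mul_comm (p : ℤ), zpow_mul, zpow_natCast]
      _ = _ := by rw [h1, mul_pow, ← zpow_natCast _ p, ← zpow_natCast _ p, ← zpow_natCast _ p,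
                    ← zpow_mul, ← zpow_mul, ← zpow_mul, mul_comm (p : ℤ)]
  · intro c
    obtain ⟨I, rfl, hI⟩ := hN c
    rw [cgMap_mk0 _ _ I (J I) rfl]
    refine mk0_mem_of_primes V (J I) fun Q hQ => Subgroup.subset_closure (Or.inr ⟨Q, ?_, rfl⟩)
    apply hQ
    have := Ideal.mem_map_of_mem (algebraMap (𝓞 K) (𝓞 L)) hI
    rwa [map_natCast] at this
  · by_contra! hlt
    have hm : m ≠ 0 := by
      rintro rfl
      rw [pow_zero, Nat.lt_one_iff] at hlt
      exact Subgroup.FiniteIndex.index_ne_zero hlt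
    -- if the index is too small, `V` and the classes of at most `s` primes generate the class group
    obtain ⟨s, rfl⟩ := Nat.exists_eq_succ_of_ne_zero hm
    obtain ⟨T, hT, hTs, hTop⟩ := exists_finset_sup_closure_eq_top hp (Set.range cl)
      closure_primes s V hV hlt
    choose q hq using fun t : T => hT t.2
    have hval1 : ∀ Q : HeightOneSpectrum (𝓞 L), Q.valuation L (p : L) < 1 → (N : 𝓞 L) ∈ Q.asIdeal := by
      intro Q h
      have h1 : (p : 𝓞 L) ∈ Q.asIdeal := by
        rw [← HeightOneSpectrum.valuation_lt_one_iff_mem (K := L)]; simpa using h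
      exact Ideal.mem_of_dvd _ (Nat.cast_dvd_cast hpN) h1
    have hform : ∀ Q : HeightOneSpectrum (𝓞 L), ∃ a : Fin (s + 1) → ℕ, ∀ e : Fin (s + 1) → ℕ,
        p ∣ ∑ j, a j * e j → LocPow p (∏ j, α j ^ e j) Q := by
      intro Q
      have hle : Q.valuation L (p : L) ≤ 1 := by
        simpa using HeightOneSpectrum.valuation_le_one (K := L) Q (p : 𝓞 L)
      rcases hle.lt_or_eq with h | h
      · exact ⟨0, fun e _ => LocPow.prod Q hp.ne_zero _ _ _ fun j _ => hloc j Q (hval1 Q h)⟩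
      · exact exists_linear_form Q hp α h fun j => hval j Q
    choose a ha using hform
    obtain ⟨e, ⟨j, hj⟩, he⟩ := exists_kernel_vector hp (ι := T) (m := s + 1)
      (by rw [Fintype.card_coe]; omega) (fun t => a (q t))
    obtain ⟨H, hH, hHp, hHQ⟩ := exists_subgroup_of_kummer hp hζL (∏ j, α j ^ e j)
      (fun γ hγ => hj (hind e ⟨γ, hγ⟩ j))
      (fun Q _ => by
        choose γ hγ0 hγ using fun j => hval j Q
        refine ⟨∏ j, γ j ^ e j, Finset.prod_ne_zero_iff.mpr fun j _ => pow_ne_zero _ (hγ0 j), ?_⟩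
        rw [← Finset.prod_pow, ← Finset.prod_mul_distrib, map_prod]
        refine Finset.prod_eq_one fun j _ => ?_
        rw [← pow_mul, mul_comm (e j), pow_mul, ← mul_pow, map_pow, hγ, one_pow])
      (fun Q hQ => LocPow.prod Q hp.ne_zero _ _ _ fun j _ => hloc j Q (hval1 Q hQ))
      (fun h2 φ => by
        rw [map_prod]
        exact Finset.prod_pos fun j _ => by rw [map_pow]; exact pow_pos (hpos h2 j φ) _)
    apply hH
    rw [← top_le_iff, ← hTop, sup_le_iff, Subgroup.closure_le, Subgroup.closure_le]
    constructor
    · rintro _ (⟨c, rfl⟩ | ⟨Q, hQ, rfl⟩)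
      · exact hHp c
      · exact hHQ Q (LocPow.prod Q hp.ne_zero _ _ _ fun j _ => hloc j Q hQ)
    · intro t ht
      have := hHQ (q ⟨t, ht⟩) (ha _ e (he ⟨t, ht⟩))
      have h2 := hq ⟨t, ht⟩
      change cl (q ⟨t, ht⟩) ∈ H at this
      rwa [h2] at this

end

/-! ### The defining polynomial and total ramification -/

section
open NumberField Module nonZeroDivisors IsDedekindDomain

/-- The polynomial `∏ (X - A i) - c ^ p`, whose root `η` generates the extension. -/
noncomputable def genPoly {R ι : Type*} [CommRing R] [Fintype ι] (p : ℕ) (A : ι → R) (c : R) :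
    Polynomial R := ∏ i, (Polynomial.X - Polynomial.C (A i)) - Polynomial.C (c ^ p)

section
variable {R ι : Type*} [CommRing R] [Nontrivial R] [Fintype ι] [Nonempty ι] (p : ℕ) (A : ι → R) (c : R)

theorem genPoly_natDegree_monic : (genPoly p A c).Monic ∧ (genPoly p A c).natDegree = Fintype.card ι := by
  have h1 : (∏ i, (Polynomial.X - Polynomial.C (A i))).Monic :=
    Polynomial.monic_prod_of_monic _ _ fun i _ => Polynomial.monic_X_sub_C _
  have h2 : (∏ i, (Polynomial.X - Polynomial.C (A i))).natDegree = Fintype.card ι := by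
    rw [Polynomial.natDegree_prod_of_monic _ _ fun i _ => Polynomial.monic_X_sub_C _]
    simp
  have h3 : (Polynomial.C (c ^ p)).degree < (∏ i, (Polynomial.X - Polynomial.C (A i))).degree := by
    refine Polynomial.degree_C_le.trans_lt ?_
    rw [Polynomial.degree_eq_natDegree h1.ne_zero, h2]
    exact_mod_cast Fintype.card_pos
  constructor
  · exact h1.sub_of_left h3
  · rw [genPoly, Polynomial.natDegree_sub_eq_left_of_natDegree_lt, h2]
    rw [Polynomial.natDegree_C, h2]; exact Fintype.card_pos

end

section
variable {K L ι : Type*} [Field K] [NumberField K] [Field L] [NumberField L] [Algebra K L] [Fintype ι]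
  {p : ℕ} (A : ι → 𝓞 K) (c : 𝓞 K) (η : 𝓞 L)

theorem finrank_le_card [Nonempty ι] (htop : Algebra.adjoin K {(η : L)} = ⊤)
    (hη : ∏ i, (η - algebraMap (𝓞 K) (𝓞 L) (A i)) = algebraMap (𝓞 K) (𝓞 L) c ^ p) :
    finrank K L ≤ Fintype.card ι := by
  have hint : IsIntegral K (η : L) := Algebra.IsIntegral.isIntegral _
  have h1 : IntermediateField.adjoin K {(η : L)} = ⊤ :=
    (IntermediateField.adjoin_eq_top_iff).mpr htop
  have h2 : finrank K L = (minpoly K (η : L)).natDegree := by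
    rw [← IntermediateField.adjoin.finrank hint, h1, IntermediateField.finrank_top']
  rw [h2]
  let F : Polynomial K := genPoly p (fun i => (A i : K)) (c : K)
  obtain ⟨hm, hd⟩ := genPoly_natDegree_monic p (fun i => (A i : K)) (c : K)
  rw [← hd]
  apply Polynomial.natDegree_le_natDegree
  apply minpoly.min K _ hm
  have := congrArg (algebraMap (𝓞 L) L) hη
  simp only [genPoly, map_sub, map_prod, Polynomial.aeval_X, Polynomial.aeval_C, map_pow] at this ⊢
  rw [sub_eq_zero]
  exact this

variable {c η A}

/-- At a prime `Q` over `lam` all the `η - A i` have the valuation of `η`, because `A i` is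
too divisible by `lam` to matter; and the valuation of `c` is the ramification index. -/
theorem valuation_at_lam (hcard : 2 ≤ Fintype.card ι) (hp : 0 < p)
    (hη : ∏ i, (η - algebraMap (𝓞 K) (𝓞 L) (A i)) = algebraMap (𝓞 K) (𝓞 L) c ^ p)
    (lam : HeightOneSpectrum (𝓞 K)) (hA : ∀ i, A i ∈ lam.asIdeal ^ p)
    (hc : c ∈ lam.asIdeal) (hc2 : c ∉ lam.asIdeal ^ 2)
    (Q : HeightOneSpectrum (𝓞 L)) [hQ : Q.asIdeal.LiesOver lam.asIdeal] :
    (∀ i, Q.valuation L ((η : L) - algebraMap K L (A i)) = Q.valuation L (η : L)) ∧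
    Q.valuation L (η : L) ^ Fintype.card ι = Q.valuation L (algebraMap K L c) ^ p ∧
    Q.valuation L (algebraMap K L c) =
      WithZero.exp (-(Ideal.ramificationIdx' lam.asIdeal Q.asIdeal : ℤ)) := by
  set e := Ideal.ramificationIdx' lam.asIdeal Q.asIdeal with he
  have he0 : e ≠ 0 := Ideal.IsDedekindDomain.ramificationIdx'_ne_zero_of_liesOver _ lam.ne_bot
  have hcv : lam.valuation K (c : K) = WithZero.exp (-1 : ℤ) := by
    rw [HeightOneSpectrum.valuation_of_algebraMap]
    apply le_antisymm
    · have := (HeightOneSpectrum.intValuation_le_pow_iff_mem lam c 1).mpr (by simpa using hc)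
      simpa using this
    · have := mt (HeightOneSpectrum.intValuation_le_pow_iff_mem lam c 2).mp hc2
      rw [not_le] at this
      by_contra! h
      have hc0 : c ≠ 0 := fun h => hc2 (h ▸ zero_mem _)
      have hne : lam.intValuation c ≠ 0 := HeightOneSpectrum.intValuation_ne_zero _ _ hc0
      rw [← WithZero.exp_log hne] at this h
      rw [WithZero.exp_lt_exp] at this h
      push_cast at this
      omega
  have hQc : Q.valuation L (algebraMap K L c) = WithZero.exp (-(e : ℤ)) := by
    rw [← HeightOneSpectrum.valuation_liesOver L lam Q, hcv, ← WithZero.exp_nsmul]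
    congr 1; simp [he]
  have hQA : ∀ i, Q.valuation L (algebraMap K L (A i)) ≤ Q.valuation L (algebraMap K L c) ^ p := by
    intro i
    rw [← HeightOneSpectrum.valuation_liesOver L lam Q, ← HeightOneSpectrum.valuation_liesOver L lam Q,
      ← pow_mul, mul_comm _ p, pow_mul]
    apply pow_le_pow_left₀ zero_le
    rw [HeightOneSpectrum.valuation_of_algebraMap, hcv, ← WithZero.exp_nsmul]
    have := (HeightOneSpectrum.intValuation_le_pow_iff_mem lam (A i) p).mpr (hA i)
    simpa using this
  set t := Q.valuation L (algebraMap K L c) ^ p with ht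
  have hlt : t < 1 := by
    rw [ht, hQc, ← WithZero.exp_nsmul, ← WithZero.exp_zero, WithZero.exp_lt_exp]
    have : 0 < (p : ℤ) * e := by positivity
    simp only [nsmul_eq_mul]; linarith
  have ht0 : 0 < t := by
    rw [ht, hQc]; exact pow_pos WithZero.exp_pos _
  have hprod : ∏ i, Q.valuation L ((η : L) - algebraMap K L (A i)) = t := by
    rw [ht, ← map_prod, ← map_pow]
    congr 1
    have := congrArg (algebraMap (𝓞 L) L) hη
    simp only [map_prod, map_sub, map_pow] at this
    exact this
  -- otherwise every factor has valuation at most `t`, and the product would be too small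
  have hx : t < Q.valuation L (η : L) := by
    by_contra! h
    have h1 : ∏ i, Q.valuation L ((η : L) - algebraMap K L (A i)) ≤ ∏ i : ι, t :=
      Finset.prod_le_prod' fun i _ => (Valuation.map_sub _ _ _).trans (max_le h (hQA i))
    rw [hprod, Finset.prod_const, Finset.card_univ] at h1
    have h2 : t ^ Fintype.card ι < t := pow_lt_self_of_lt_one₀ ht0 hlt (by omega)
    exact absurd h1 (not_le.mpr h2)
  have hall : ∀ i, Q.valuation L ((η : L) - algebraMap K L (A i)) = Q.valuation L (η : L) := by
    intro i
    apply Valuation.map_sub_eq_of_lt_left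
    exact (hQA i).trans_lt hx
  refine ⟨hall, ?_, hQc⟩
  rw [← hprod, Finset.prod_congr rfl fun i _ => hall i]
  simp

/-- The prime `lam` is totally ramified in `L`: the ramification index `e` at `Q` satisfies
`d * w = p * e`, so `d ∣ e ≤ [L : K] ≤ d`. -/
theorem ramification_at_lam (hcard : 2 ≤ Fintype.card ι) (hp : 0 < p) (hdp : (Fintype.card ι).Coprime p)
    (htop : Algebra.adjoin K {(η : L)} = ⊤)
    (hη : ∏ i, (η - algebraMap (𝓞 K) (𝓞 L) (A i)) = algebraMap (𝓞 K) (𝓞 L) c ^ p)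
    (lam : HeightOneSpectrum (𝓞 K)) (hA : ∀ i, A i ∈ lam.asIdeal ^ p)
    (hc : c ∈ lam.asIdeal) (hc2 : c ∉ lam.asIdeal ^ 2)
    (Q : HeightOneSpectrum (𝓞 L)) [hQ : Q.asIdeal.LiesOver lam.asIdeal] :
    Ideal.ramificationIdx' lam.asIdeal Q.asIdeal = Fintype.card ι ∧ finrank K L = Fintype.card ι := by
  have : Nonempty ι := Fintype.card_pos_iff.mp (by omega)
  obtain ⟨-, h2, h3⟩ := valuation_at_lam hcard hp hη lam hA hc hc2 Q
  have he0 : Ideal.ramificationIdx' lam.asIdeal Q.asIdeal ≠ 0 :=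
    Ideal.IsDedekindDomain.ramificationIdx'_ne_zero_of_liesOver _ lam.ne_bot
  rw [h3] at h2
  have hle := finrank_le_card A c η htop hη
  have hele : Ideal.ramificationIdx' lam.asIdeal Q.asIdeal ≤ finrank K L :=
    have : NoZeroSMulDivisors (𝓞 K) (𝓞 L) := ⟨fun h => smul_eq_zero.mp h⟩
    Ideal.ramificationIdx_le_finrank (𝓞 L) K L Q.asIdeal
  set e := Ideal.ramificationIdx' lam.asIdeal Q.asIdeal
  set d := Fintype.card ι
  have hx0 : Q.valuation L (η : L) ≠ 0 := by
    intro h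
    rw [h, zero_pow (by omega), ← WithZero.exp_nsmul] at h2
    exact WithZero.exp_ne_zero h2.symm
  rw [← WithZero.exp_log hx0, ← WithZero.exp_nsmul, ← WithZero.exp_nsmul, WithZero.exp_inj] at h2
  have hdvd : (d : ℤ) ∣ p * e := ⟨- WithZero.log (Q.valuation L (η : L)), by
    simp only [nsmul_eq_mul] at h2; linarith⟩
  -- exponents in `d * w η = p * e`
  have : d ∣ e := hdp.dvd_of_dvd_mul_left (by exact_mod_cast hdvd)
  have := Nat.le_of_dvd (by omega) this
  omega
end

end

/-! ### Local behaviour of `η - A i` -/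

section
open NumberField Module nonZeroDivisors IsDedekindDomain

section
variable {K L ι : Type*} [Field K] [NumberField K] [Field L] [NumberField L] [Algebra K L] [Fintype ι]
  {p : ℕ} {A : ι → 𝓞 K} {c : 𝓞 K} {η : 𝓞 L}

/-- The valuation of `η - A i` is divisible by `p` at every prime `Q`. Over `lam` this follows
from `d * w = p * e`; elsewhere, if `Q` contains one of the factors of `c ^ p`, it contains no
other. -/
theorem root_hval (hcard : 2 ≤ Fintype.card ι) (hp : 0 < p) (hdp : (Fintype.card ι).Coprime p)
    (hη : ∏ i, (η - algebraMap (𝓞 K) (𝓞 L) (A i)) = algebraMap (𝓞 K) (𝓞 L) c ^ p)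
    (lam : HeightOneSpectrum (𝓞 K)) (hA : ∀ i, A i ∈ lam.asIdeal ^ p)
    (hc : c ∈ lam.asIdeal) (hc2 : c ∉ lam.asIdeal ^ 2)
    (hdisj : ∀ q : HeightOneSpectrum (𝓞 K), q ≠ lam → c ∈ q.asIdeal → ∀ i j, i ≠ j →
      A i - A j ∉ q.asIdeal)
    (i : ι) (Q : HeightOneSpectrum (𝓞 L)) :
    ∃ γ : L, γ ≠ 0 ∧ Q.valuation L (((η : L) - algebraMap K L (A i)) * γ ^ p) = 1 := by
  classical
  have hc0 : c ≠ 0 := fun h => hc2 (h ▸ zero_mem _)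
  have hcL : algebraMap K L c ≠ 0 := by
    rw [map_ne_zero]; exact_mod_cast hc0
  by_cases hQ : Q.asIdeal.LiesOver lam.asIdeal
  · obtain ⟨h1, h2, h3⟩ := valuation_at_lam hcard hp hη lam hA hc hc2 Q
    set d := Fintype.card ι
    have hη0 : (η : L) ≠ 0 := by
      intro h
      rw [h, map_zero, zero_pow (by omega)] at h2
      exact pow_ne_zero p (by simpa using hcL) h2.symm
    set x := Q.valuation L (η : L) with hx
    set y := Q.valuation L (algebraMap K L c) with hy
    have hx0 : x ≠ 0 := by simpa [hx] using hη0
    have hy0 : y ≠ 0 := by simpa [hy] using hcL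
    have hb := Nat.gcd_eq_gcd_ab d p
    rw [hdp] at hb
    set u := Nat.gcdA d p
    set w := Nat.gcdB d p
    refine ⟨((algebraMap K L c) ^ u * (η : L) ^ w)⁻¹, ?_, ?_⟩
    · exact inv_ne_zero (mul_ne_zero (zpow_ne_zero _ hcL) (zpow_ne_zero _ hη0))
    · rw [map_mul, h1, map_pow, map_inv₀, map_mul, map_zpow₀, map_zpow₀, ← hx, ← hy]
      have : x = (y ^ u * x ^ w) ^ p := by
        calc x = x ^ ((1 : ℕ) : ℤ) := by simp
          _ = (x ^ d) ^ u * (x ^ w) ^ p := by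
            rw [hb, zpow_add₀ hx0, zpow_mul, zpow_natCast, mul_comm (p : ℤ) w, zpow_mul, zpow_natCast]
          _ = _ := by
            rw [h2, mul_pow, ← zpow_natCast y p, ← zpow_mul, mul_comm (p : ℤ) u, zpow_mul, zpow_natCast]
      nth_rewrite 1 [this]
      rw [inv_pow]
      exact mul_inv_cancel₀ (pow_ne_zero _ (mul_ne_zero (zpow_ne_zero _ hy0) (zpow_ne_zero _ hx0)))
  · -- `Q` does not lie over `lam`
    have he : ∀ j, algebraMap (𝓞 L) L (η - algebraMap (𝓞 K) (𝓞 L) (A j)) = (η : L) - algebraMap K L (A j) :=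
      fun j => map_sub (algebraMap (𝓞 L) L) _ _
    have hle : ∀ j, Q.valuation L ((η : L) - algebraMap K L (A j)) ≤ 1 := fun j => by
      rw [← he]
      exact Q.valuation_le_one (K := L) (η - algebraMap (𝓞 K) (𝓞 L) (A j))
    have hmem : ∀ j, Q.valuation L ((η : L) - algebraMap K L (A j)) < 1 →
        η - algebraMap (𝓞 K) (𝓞 L) (A j) ∈ Q.asIdeal := fun j h => by
      rw [← he] at h
      exact (Q.valuation_lt_one_iff_mem (K := L) _).mp h
    have hprod : ∏ j, Q.valuation L ((η : L) - algebraMap K L (A j)) =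
        Q.valuation L (algebraMap K L c) ^ p := by
      rw [← map_prod, ← map_pow]
      congr 1
      have := congrArg (algebraMap (𝓞 L) L) hη
      simp only [map_prod, map_sub, map_pow] at this
      exact this
    by_cases h1 : Q.valuation L ((η : L) - algebraMap K L (A i)) = 1
    · exact ⟨1, one_ne_zero, by simpa using h1⟩
    refine ⟨(algebraMap K L c)⁻¹, inv_ne_zero hcL, ?_⟩
    have hi : Q.valuation L ((η : L) - algebraMap K L (A i)) < 1 := lt_of_le_of_ne (hle i) h1
    have hiQ : η - algebraMap (𝓞 K) (𝓞 L) (A i) ∈ Q.asIdeal := hmem i hi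
    let q : HeightOneSpectrum (𝓞 K) :=
      ⟨Q.asIdeal.under (𝓞 K), inferInstance, Ideal.under_ne_bot _ Q.ne_bot⟩
    have hq : q ≠ lam := fun h => hQ (by rw [← h]; exact ⟨rfl⟩)
    have hcq : c ∈ q.asIdeal := by
      change algebraMap (𝓞 K) (𝓞 L) c ∈ Q.asIdeal
      apply Q.isPrime.mem_of_pow_mem p
      rw [← hη, ← Finset.mul_prod_erase _ _ (Finset.mem_univ i)]
      exact Ideal.mul_mem_right _ _ hiQ
    -- two factors in `Q` would put a difference `A j - A i` in `Q`
    have hother : ∀ j ≠ i, Q.valuation L ((η : L) - algebraMap K L (A j)) = 1 := by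
      intro j hj
      apply le_antisymm (hle j)
      by_contra! h
      have hjQ : η - algebraMap (𝓞 K) (𝓞 L) (A j) ∈ Q.asIdeal := hmem j h
      apply hdisj q hq hcq j i hj
      change algebraMap (𝓞 K) (𝓞 L) (A j - A i) ∈ Q.asIdeal
      rw [map_sub]
      have := Q.asIdeal.sub_mem hiQ hjQ
      rwa [sub_sub_sub_cancel_left] at this
    have : Q.valuation L ((η : L) - algebraMap K L (A i)) = Q.valuation L (algebraMap K L c) ^ p := by
      rw [← hprod, ← Finset.mul_prod_erase _ _ (Finset.mem_univ i),
        Finset.prod_eq_one fun j hj => hother j (Finset.ne_of_mem_erase hj), mul_one]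
    rw [map_mul, this, map_pow, map_inv₀, ← mul_pow, mul_inv_cancel₀ (by simpa using hcL), one_pow]

/-- The elements `η - A i` are local `p`-th powers at the primes over `N`. One has
`η ^ d ≡ 1` modulo `N`, and `γ = η ^ k` with `d ∣ 1 + p * k` gives `(η - A i) * γ ^ p ≡ 1`. -/
theorem root_hloc (hp : p.Prime) (hdp : (Fintype.card ι).Coprime p) {N n : ℕ} (hN : N = p ^ p * n) (hn : p ∣ n)
    (hη : ∏ i, (η - algebraMap (𝓞 K) (𝓞 L) (A i)) = algebraMap (𝓞 K) (𝓞 L) c ^ p)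
    (hA : ∀ i, (N : 𝓞 K) ∣ A i) (hc : (N : 𝓞 K) ∣ c - 1)
    (i : ι) (Q : HeightOneSpectrum (𝓞 L)) (hQ : (N : 𝓞 L) ∈ Q.asIdeal) :
    LocPow p ((η : L) - algebraMap K L (A i)) Q := by
  -- an exponent `k` with `d ∣ 1 + p k`
  obtain ⟨k, hk⟩ : ∃ k : ℕ, Fintype.card ι ∣ 1 + p * k := by
    obtain ⟨x, hx1, hx2⟩ := Nat.chineseRemainder hdp (Fintype.card ι - 1) 0
    obtain ⟨k, rfl⟩ := (Nat.modEq_zero_iff_dvd).mp hx2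
    have hpos : 0 < Fintype.card ι := Fintype.card_pos_iff.mpr ⟨i⟩
    refine ⟨k, (Nat.modEq_zero_iff_dvd).mp ?_⟩
    have := hx1.add_left 1
    rw [Nat.add_sub_cancel' hpos] at this
    exact this.trans (by simp [Nat.ModEq])
  refine ⟨(η : L) ^ k, ?_⟩
  obtain ⟨s, hs⟩ := hk
  have hNA : ∀ i, (N : 𝓞 L) ∣ algebraMap (𝓞 K) (𝓞 L) (A i) := fun i => by
    have := map_dvd (algebraMap (𝓞 K) (𝓞 L)) (hA i)
    simpa using this
  have hNc : (N : 𝓞 L) ∣ algebraMap (𝓞 K) (𝓞 L) c - 1 := by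
    have := map_dvd (algebraMap (𝓞 K) (𝓞 L)) hc
    simpa using this
  have hηd : (N : 𝓞 L) ∣ η ^ Fintype.card ι - 1 := by
    rw [← Ideal.mem_span_singleton, ← Ideal.Quotient.eq] at hNc ⊢
    have h := congrArg (Ideal.Quotient.mk (Ideal.span {(N : 𝓞 L)})) hη
    have h0 : ∀ i, Ideal.Quotient.mk (Ideal.span {(N : 𝓞 L)}) (algebraMap (𝓞 K) (𝓞 L) (A i)) = 0 :=
      fun i => Ideal.Quotient.eq_zero_iff_mem.mpr (Ideal.mem_span_singleton.mpr (hNA i))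
    simp only [map_prod, map_sub, map_pow, h0, hNc, sub_zero, Finset.prod_const, map_one, one_pow,
      Finset.card_univ] at h
    simpa using h
  have hmain : (N : 𝓞 L) ∣ (η - algebraMap (𝓞 K) (𝓞 L) (A i)) * (η ^ k) ^ p - 1 := by
    have h1 : (N : 𝓞 L) ∣ η ^ (1 + p * k) - 1 := by
      rw [hs, pow_mul]
      exact hηd.trans (sub_one_dvd_pow_sub_one _ _)
    have : (η - algebraMap (𝓞 K) (𝓞 L) (A i)) * (η ^ k) ^ p - 1 =
      (η ^ (1 + p * k) - 1) - algebraMap (𝓞 K) (𝓞 L) (A i) * (η ^ k) ^ p := by ring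
    rw [this]
    exact dvd_sub h1 ((hNA i).mul_right _)
  obtain ⟨z, hz⟩ := hmain
  have hz' : ((η : L) - algebraMap K L (A i)) * ((η : L) ^ k) ^ p - 1 = (N : L) * (z : L) := by
    have := congrArg (algebraMap (𝓞 L) L) hz
    simp only [map_mul, map_sub, map_pow, map_one, map_natCast] at this
    exact this
  rw [hz', map_mul]
  refine (mul_le_of_le_one_right' (Q.valuation_le_one (K := L) z)).trans_lt ?_
  have hp0 : (p : L) ≠ 0 := by exact_mod_cast hp.ne_zero
  have hnQ : Q.valuation L (n : L) < 1 := by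
    have : (n : 𝓞 L) ∈ Q.asIdeal := by
      rw [hN] at hQ
      push_cast at hQ
      rcases Q.isPrime.mem_or_mem hQ with h | h
      · exact Ideal.mem_of_dvd _ (Nat.cast_dvd_cast hn) (Q.isPrime.mem_of_pow_mem _ h)
      · exact h
    have := (Q.valuation_lt_one_iff_mem (K := L) (n : 𝓞 L)).mpr this
    simpa using this
  rw [hN]
  push_cast
  rw [map_mul, map_pow]
  have hpv : 0 < Q.valuation L (p : L) ^ p := pow_pos (by
    rw [zero_lt_iff]; simpa using hp0) _
  exact mul_lt_of_lt_one_right hpv hnQ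
end

end

/-! ### Independence modulo `p`-th powers -/

section
open NumberField Module nonZeroDivisors IsDedekindDomain

/-- A relation `γ ^ p = ∏ (η - A i) ^ e i`, multiplied by the `p`-th power of
the derivative of `F` at `η` so that the left side is `G(η) ^ p`, becomes a congruence of polynomials modulo `F`; it is then
evaluated at `0`, a root of `F` in the residue ring `k`. -/
theorem exists_eval_zero_pow {R S k : Type*} [CommRing R] [CommRing S] [Algebra R S] [CommRing k] {ι : Type*} [Fintype ι]
    (φ : R →+* k) (F : Polynomial R) (η γ : S) (hF0 : φ (F.eval 0) = 0)
    (hmin : ∀ G : Polynomial R, Polynomial.aeval η G = 0 → F ∣ G)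
    (hγ : ∃ G : Polynomial R, Polynomial.aeval η F.derivative * γ = Polynomial.aeval η G)
    (p : ℕ) (A : ι → R) (e : ι → ℕ) (h : γ ^ p = ∏ i, (η - algebraMap R S (A i)) ^ e i) :
    ∃ y : k, y ^ p = φ (F.derivative.eval 0) ^ p * ∏ i, (-φ (A i)) ^ e i := by
  obtain ⟨G, hG⟩ := hγ
  -- with `F₁` the derivative of `F`, the polynomial `G ^ p - F₁ ^ p * ∏ (X - A i) ^ e i`
  -- vanishes at `η`, so `F` divides it
  obtain ⟨H, hH⟩ := hmin (G ^ p - F.derivative ^ p * ∏ i, (Polynomial.X - Polynomial.C (A i)) ^ e i) (by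
    simp only [map_sub, map_mul, map_pow, map_prod, Polynomial.aeval_X, Polynomial.aeval_C]
    rw [← h, ← mul_pow, hG, sub_self])
  have := congrArg (fun P => φ (Polynomial.eval 0 P)) hH
  simp only [Polynomial.eval_sub, Polynomial.eval_mul, Polynomial.eval_pow, Polynomial.eval_prod,
    Polynomial.eval_X, Polynomial.eval_C, map_sub, map_mul, map_pow, map_prod, hF0, zero_mul, zero_sub,
    map_neg] at this
  exact ⟨φ (G.eval 0), sub_eq_zero.mp this⟩

/-- If `g` is not a `p`-th power, then only its powers with exponent divisible by `p` are. -/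
theorem dvd_of_pow_eq_pow {k : Type*} [Field k] {p : ℕ} (hp : p.Prime) (g : k) (hg : ∀ y, y ^ p ≠ g) (e : ℕ) (y : k)
    (h : y ^ p = g ^ e) : p ∣ e := by
  by_contra hpe
  have hg0 : g ≠ 0 := fun h0 => hg 0 (by rw [zero_pow hp.ne_zero, h0])
  have hco : p.Coprime e := (hp.coprime_iff_not_dvd).mpr hpe
  have hb := Nat.gcd_eq_gcd_ab p e
  rw [hco] at hb
  set u := Nat.gcdA p e
  set w := Nat.gcdB p e
  apply hg (g ^ u * y ^ w)
  calc (g ^ u * y ^ w) ^ p = (g ^ (p : ℤ)) ^ u * (y ^ p) ^ w := by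
        rw [mul_pow, ← zpow_natCast, ← zpow_natCast, ← zpow_natCast, ← zpow_mul, ← zpow_mul, ← zpow_mul,
          ← zpow_mul, mul_comm u, mul_comm w]
    _ = g ^ ((1 : ℕ) : ℤ) := by
        rw [h, hb, zpow_add₀ hg0, ← zpow_natCast g e, zpow_mul, zpow_mul]
    _ = g := by simp

section
variable {K L ι : Type*} [Field K] [NumberField K] [Field L] [NumberField L] [Algebra K L] [Fintype ι]
  {p : ℕ} {A : ι → 𝓞 K} {c : 𝓞 K} {η : 𝓞 L}

/-- When `[L : K] = d`, the defining polynomial is the minimal polynomial of `η`. -/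
theorem root_minpoly [Nonempty ι] (htop : Algebra.adjoin K {(η : L)} = ⊤) (hd : finrank K L = Fintype.card ι)
    (hη : ∏ i, (η - algebraMap (𝓞 K) (𝓞 L) (A i)) = algebraMap (𝓞 K) (𝓞 L) c ^ p) :
    minpoly (𝓞 K) η = genPoly p A c := by
  obtain ⟨hm, hdeg⟩ := genPoly_natDegree_monic p A c
  have hint : IsIntegral (𝓞 K) η := Algebra.IsIntegral.isIntegral _
  have hintK : IsIntegral K (η : L) := Algebra.IsIntegral.isIntegral _
  have h1 : IntermediateField.adjoin K {(η : L)} = ⊤ :=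
    (IntermediateField.adjoin_eq_top_iff).mpr htop
  have h2 : finrank K L = (minpoly K (η : L)).natDegree := by
    rw [← IntermediateField.adjoin.finrank hintK, h1, IntermediateField.finrank_top']
  have h3 : minpoly K (η : L) = (minpoly (𝓞 K) η).map (algebraMap (𝓞 K) K) :=
    minpoly.isIntegrallyClosed_eq_field_fractions K L hint
  have h4 : minpoly (𝓞 K) η ∣ genPoly p A c := by
    apply minpoly.isIntegrallyClosed_dvd hint
    simp only [genPoly, map_sub, map_prod, Polynomial.aeval_X, Polynomial.aeval_C, map_pow]
    rw [hη, sub_self]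
  symm
  apply Polynomial.eq_of_monic_of_dvd_of_natDegree_le (minpoly.monic hint) hm h4
  rw [hdeg, ← hd, h2, h3, (minpoly.monic hint).natDegree_map]

/-- In a relation among the `η - A j` modulo `p`-th powers not involving the index `i₀`,
the exponent at `i` is divisible by `p`. This is seen in a residue field in which `0` is a simple root
of the defining polynomial, `-A i = g` is not a `p`-th power and the other `-A j` are `1`. -/
theorem root_independent [Nonempty ι] (hp : p.Prime) (htop : Algebra.adjoin K {(η : L)} = ⊤)
    (hd : finrank K L = Fintype.card ι)
    (hη : ∏ i, (η - algebraMap (𝓞 K) (𝓞 L) (A i)) = algebraMap (𝓞 K) (𝓞 L) c ^ p)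
    {k : Type*} [Field k] (φ : 𝓞 K →+* k) (i₀ i : ι) (g : k) (hg : ∀ y, y ^ p ≠ g)
    (hAi : φ (A i) = -g) (hAj : ∀ j, j ≠ i → j ≠ i₀ → φ (A j) = -1)
    (hF : φ ((genPoly p A c).eval 0) = 0) (hF' : φ ((genPoly p A c).derivative.eval 0) ≠ 0)
    (e : ι → ℕ) (he : e i₀ = 0) (γ : L) (hγ : γ ^ p = ∏ j, ((η : L) - algebraMap K L (A j)) ^ e j) :
    p ∣ e i := by
  classical
  have hm := root_minpoly htop hd hη
  have hint : IsIntegral (𝓞 K) η := Algebra.IsIntegral.isIntegral _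
  have hexp0 : ∀ j, algebraMap (𝓞 L) L (η - algebraMap (𝓞 K) (𝓞 L) (A j)) = (η : L) - algebraMap K L (A j) :=
      fun j => map_sub (algebraMap (𝓞 L) L) _ _
  obtain ⟨γ', rfl⟩ : ∃ γ' : 𝓞 L, algebraMap (𝓞 L) L γ' = γ := by
    have : IsIntegral ℤ γ := by
      apply IsIntegral.of_pow hp.pos
      rw [hγ]
      refine IsIntegral.prod _ fun j _ => IsIntegral.pow ?_ _
      rw [← hexp0 j]
      exact RingOfIntegers.isIntegral_coe _
    exact ⟨⟨γ, this⟩, rfl⟩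
  have hγ' : γ' ^ p = ∏ j, (η - algebraMap (𝓞 K) (𝓞 L) (A j)) ^ e j := by
    apply FaithfulSMul.algebraMap_injective (𝓞 L) L
    rw [map_pow, hγ, map_prod]
    exact Finset.prod_congr rfl fun j _ => by rw [map_pow, hexp0 j]
  -- the derivative at `η` lies in the conductor, so its product with `γ` is a polynomial in `η`
  have hcond : Polynomial.aeval η (Polynomial.derivative (minpoly (𝓞 K) η)) ∈ conductor (𝓞 K) η := by
    have := conductor_mul_differentIdeal (𝓞 K) K L η htop
    apply Ideal.mul_le_left (I := conductor (𝓞 K) η) (J := differentIdeal (𝓞 K) (𝓞 L))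
    rw [this]
    exact Ideal.mem_span_singleton_self _
  rw [hm] at hcond
  have hG : ∃ G : Polynomial (𝓞 K), Polynomial.aeval η (genPoly p A c).derivative * γ' = Polynomial.aeval η G := by
    have := mem_conductor_iff.mp hcond γ'
    rw [Algebra.adjoin_singleton_eq_range_aeval] at this
    obtain ⟨G, hG⟩ := this
    exact ⟨G, hG.symm⟩
  obtain ⟨y, hy⟩ := exists_eval_zero_pow φ (genPoly p A c) η γ' hF
    (fun G hG => by rw [← hm]; exact minpoly.isIntegrallyClosed_dvd hint hG) hG p A e hγ'
  have hprod : ∏ j, (-φ (A j)) ^ e j = g ^ e i := by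
    rw [Finset.prod_eq_single i]
    · rw [hAi, neg_neg]
    · intro j _ hj
      by_cases hj0 : j = i₀
      · rw [hj0, he, pow_zero]
      · rw [hAj j hj hj0, neg_neg, one_pow]
    · simp
  rw [hprod] at hy
  apply dvd_of_pow_eq_pow hp g hg (e i) (y / φ ((genPoly p A c).derivative.eval 0))
  rw [div_pow, hy, mul_div_cancel_left₀ _ (pow_ne_zero _ hF')]
end

end

/-! ### The rank bound for the constructed field -/

section
open NumberField Module nonZeroDivisors IsDedekindDomain

/-- For odd `d`, a real root of `∏ (x - a i) = c ^ 2` exceeds all `a i` as soon as `c` is large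
compared with the `a i`. -/
theorem real_root_pos {d : ℕ} (hd : Odd d) (a : Fin d → ℝ) (B x c : ℝ) (ha : ∀ i, |a i| ≤ B)
    (hB : (2 * B) ^ d < c ^ 2) (h : ∏ i, (x - a i) = c ^ 2) (i : Fin d) : 0 < x - a i := by
  have hx : B < x := by
    by_contra! hx
    by_cases hx' : -B ≤ x
    · have : |∏ i, (x - a i)| ≤ (2 * B) ^ d := by
        rw [Finset.abs_prod]
        refine (Finset.prod_le_prod (fun i _ => abs_nonneg _) (g := fun _ => 2 * B) fun i _ => ?_).trans (by simp)
        refine (abs_sub _ _).trans ?_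
        have := abs_le.mpr ⟨hx', hx⟩
        linarith [ha i]
      rw [h] at this
      linarith [le_abs_self (c ^ 2)]
    · have h1 : 0 < ∏ i, (a i - x) := Finset.prod_pos fun i _ => by
        have := (abs_le.mp (ha i)).1
        linarith
      have h2 : ∏ i, (x - a i) = - ∏ i, (a i - x) := by
        have : ∀ i, x - a i = (-1) * (a i - x) := fun i => by ring
        simp_rw [this]
        rw [Finset.prod_mul_distrib]
        simp [hd.neg_one_pow]
      nlinarith [sq_nonneg c]
  linarith [(abs_le.mp (ha i)).2]

universe u

/-- Degree and class group rank of the field generated by `η`, for suitable `A` and `c`. -/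
theorem rank_of_data {K : Type u} {L : Type*} [Field K] [NumberField K] [Field L] [NumberField L] [Algebra K L]
    {p m : ℕ} (hp : p.Prime) (hm : 1 ≤ m) (hdp : (m + 1).Coprime p) {ζ : K} (hζ : IsPrimitiveRoot ζ p)
    (A : Fin (m + 1) → 𝓞 K) (c : 𝓞 K) (η : 𝓞 L) (htop : Algebra.adjoin K {(η : L)} = ⊤)
    (hη : ∏ i, (η - algebraMap (𝓞 K) (𝓞 L) (A i)) = algebraMap (𝓞 K) (𝓞 L) c ^ p)
    (lam : HeightOneSpectrum (𝓞 K)) (hA : ∀ i, A i ∈ lam.asIdeal ^ p)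
    (hc : c ∈ lam.asIdeal) (hc2 : c ∉ lam.asIdeal ^ 2)
    (hdisj : ∀ q : HeightOneSpectrum (𝓞 K), q ≠ lam → c ∈ q.asIdeal → ∀ i j, i ≠ j →
      A i - A j ∉ q.asIdeal)
    {N n : ℕ} (hN : N = p ^ p * n) (hn : p ∣ n)
    (hAN : ∀ i, (N : 𝓞 K) ∣ A i) (hcN : (N : 𝓞 K) ∣ c - 1)
    (hNcl : ∀ c : ClassGroup (𝓞 K), ∃ I : (Ideal (𝓞 K))⁰, ClassGroup.mk0 I = c ∧ (N : 𝓞 K) ∈ I.1)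
    (hres : ∀ k : Fin m, ∃ (F : Type u) (_ : Field F) (φ : 𝓞 K →+* F) (g : F), (∀ y, y ^ p ≠ g) ∧
      φ (A k.succ) = -g ∧ (∀ j, j ≠ k.succ → j ≠ 0 → φ (A j) = -1) ∧
      φ ((genPoly p A c).eval 0) = 0 ∧ φ ((genPoly p A c).derivative.eval 0) ≠ 0)
    (hreal : p = 2 → ∀ ψ : K →+* ℝ, ∃ B : ℝ, (∀ i, |ψ (A i)| ≤ B) ∧ (2 * B) ^ (m + 1) < ψ c ^ 2) :
    finrank K L = m + 1 ∧ m + nRank p (ClassGroup (𝓞 K)) ≤ nRank p (ClassGroup (𝓞 L)) := by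
  have hcard : Fintype.card (Fin (m + 1)) = m + 1 := Fintype.card_fin _
  obtain ⟨Q, hQm, hQ⟩ := Ideal.exists_maximal_ideal_liesOver_of_isIntegral (S := 𝓞 L) lam.asIdeal
  have hfr : finrank K L = m + 1 := by
    have hQ0 : Q ≠ ⊥ := Ideal.ne_bot_of_liesOver_of_ne_bot lam.ne_bot Q
    have := (ramification_at_lam (by omega) hp.pos (by rwa [hcard]) htop hη lam hA hc hc2
      ⟨Q, inferInstance, hQ0⟩ (hQ := hQ)).2
    rwa [hcard] at this
  refine ⟨hfr, rank_bound hp hfr hdp hζ N ?_ hNcl m (fun j => (η : L) - algebraMap K L (A j.succ)) ?_ ?_ ?_ ?_⟩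
  · rw [hN]; exact hn.mul_left _
  · rintro e ⟨γ, hγ⟩ k
    obtain ⟨F, _, φ, g, h1, h2, h3, h4, h5⟩ := hres k
    have := root_independent hp htop (by rw [hfr, hcard]) hη φ 0 k.succ g h1 h2 h3 h4 h5
      (Fin.cons 0 e) (by simp) γ (by rw [hγ, Fin.prod_univ_succ]; simp)
    simpa using this
  · intro j Q
    exact root_hval (by omega) hp.pos (by rwa [hcard]) hη lam hA hc hc2 hdisj j.succ Q
  · intro j Q hQ
    exact root_hloc hp (by rwa [hcard]) hN hn hη hAN hcN j.succ Q hQ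
  · intro hp2 j φ
    subst hp2
    obtain ⟨B, hB1, hB2⟩ := hreal rfl (φ.comp (algebraMap K L))
    have hodd : Odd (m + 1) := Nat.coprime_two_right.mp hdp
    have := congrArg (fun z => φ (algebraMap (𝓞 L) L z)) hη
    simp only [map_prod, map_sub, map_pow] at this
    have h := real_root_pos hodd (fun i => (φ.comp (algebraMap K L)) (A i)) B (φ η) _ hB1 hB2 this j.succ
    rw [map_sub]
    exact h

end

/-! ### Nonresidues avoiding two quadratics -/

section
open NumberField Module nonZeroDivisors IsDedekindDomain

/-- At least half of the units of `F` are not `p`-th powers, since `F` contains a nontrivial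
`p`-th root of unity, and only four elements are excluded by the two quadratic conditions. -/
theorem exists_good_nonpower {F : Type*} [Field F] [Finite F] (hF : 11 ≤ Nat.card F) {p : ℕ}
    {ζ : F} (hζ1 : ζ ≠ 1) (hζp : ζ ^ p = 1) (hp : p ≠ 0) (m : ℕ) :
    ∃ g : F, (∀ y, y ^ p ≠ g) ∧ g ^ 2 ≠ 1 ∧ g ^ 2 + m * g + 1 ≠ 0 := by
  classical
  have := Fintype.ofFinite F
  let H : Subgroup Fˣ := (powMonoidHom p : Fˣ →* Fˣ).range
  have hH : H ≠ ⊤ := by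
    intro h
    have hs : Function.Surjective (powMonoidHom p : Fˣ →* Fˣ) := MonoidHom.range_eq_top.mp h
    have hi := (Finite.injective_iff_surjective).mpr hs
    have hζ0 : ζ ≠ 0 := fun h => by rw [h, zero_pow hp] at hζp; exact zero_ne_one hζp
    have : Units.mk0 ζ hζ0 = 1 := hi (by ext; simp [hζp])
    exact hζ1 (by simpa using congrArg Units.val this)
  have hidx := Subgroup.one_lt_index_of_ne_top hH
  have hcard := H.card_mul_index
  by_contra! hcon
  let P : Polynomial F := (Polynomial.X ^ 2 - Polynomial.C 1) *
    (Polynomial.C 1 * Polynomial.X ^ 2 + Polynomial.C (m : F) * Polynomial.X + Polynomial.C 1)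
  have h1 : (Polynomial.X ^ 2 - Polynomial.C 1 : Polynomial F).natDegree = 2 := Polynomial.natDegree_X_pow_sub_C
  have h2 : (Polynomial.C 1 * Polynomial.X ^ 2 + Polynomial.C (m : F) * Polynomial.X + Polynomial.C 1).natDegree = 2 :=
    Polynomial.natDegree_quadratic one_ne_zero
  have hP0 : P ≠ 0 := mul_ne_zero (fun h => by rw [h] at h1; simp at h1) (fun h => by rw [h] at h2; simp at h2)
  have hP4 : P.roots.toFinset.card ≤ 4 := by
    refine (Multiset.toFinset_card_le _).trans ((Polynomial.card_roots' P).trans ?_)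
    refine Polynomial.natDegree_mul_le.trans ?_
    rw [h1, h2]
  have hsub : (Finset.univ.filter fun u : Fˣ => u ∉ H).image (Units.val) ⊆ P.roots.toFinset := by
    intro x hx
    obtain ⟨u, hu, rfl⟩ := Finset.mem_image.mp hx
    rw [Finset.mem_filter] at hu
    rw [Multiset.mem_toFinset, Polynomial.mem_roots hP0]
    have hnp : ∀ y : F, y ^ p ≠ u := fun y hy => hu.2 (by
      have hy0 : y ≠ 0 := fun h => by rw [h, zero_pow hp] at hy; exact u.ne_zero hy.symm
      exact ⟨Units.mk0 y hy0, by ext; simp [hy]⟩)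
    by_cases hu1 : (u : F) ^ 2 = 1
    · simp [P, Polynomial.IsRoot, hu1]
    · have := hcon u hnp hu1
      simp [P, Polynomial.IsRoot, this]
  have h3 := Finset.card_le_card hsub
  rw [Finset.card_image_of_injective _ Units.val_injective] at h3
  have h4 : (Finset.univ.filter fun u : Fˣ => u ∈ H).card + (Finset.univ.filter fun u : Fˣ => u ∉ H).card =
      Nat.card Fˣ := by
    rw [Finset.card_filter_add_card_filter_not, Nat.card_eq_fintype_card, Finset.card_univ]
  have h5 : (Finset.univ.filter fun u : Fˣ => u ∈ H).card = Nat.card H := by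
    rw [Nat.card_eq_fintype_card, Fintype.card_subtype]
  have h6 : Nat.card Fˣ + 1 = Nat.card F := by
    rw [Nat.card_units]; have : 0 < Nat.card F := by omega
    omega
  have h7 : 2 * Nat.card H ≤ Nat.card Fˣ := by rw [← hcard]; nlinarith
  omega

/-- If modulo a prime `-A i = a i` with `∏ a i = 1`, and `c = 1`, then `0` is a root of the
defining polynomial, with derivative `∑ (a i)⁻¹`. -/
theorem genPoly_eval_zero {R F ι : Type*} [CommRing R] [Field F] [Fintype ι] [DecidableEq ι] (p : ℕ)
    (φ : R →+* F) (A : ι → R) (c : R) (a : ι → F) (ha : ∀ i, φ (A i) = - a i)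
    (hc : φ c = 1) (hprod : ∏ i, a i = 1) :
    φ ((genPoly p A c).eval 0) = 0 ∧ φ ((genPoly p A c).derivative.eval 0) = ∑ i, (a i)⁻¹ := by
  constructor
  · simp [genPoly, Polynomial.eval_prod, ha, hc, hprod]
  · simp only [genPoly, Polynomial.derivative_sub, Polynomial.derivative_C, sub_zero, Polynomial.derivative_prod_finset,
      Polynomial.eval_finsetSum, map_sum, Polynomial.eval_prod, Polynomial.eval_sub, Polynomial.eval_X,
      Polynomial.eval_C, zero_sub, Polynomial.derivative_X, mul_one, map_prod, map_neg, ha, neg_neg]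
    refine Finset.sum_congr rfl fun i _ => ?_
    apply eq_inv_of_mul_eq_one_right
    rw [Finset.mul_prod_erase _ _ (Finset.mem_univ i), hprod]

/-- The residues prescribed for the `-A i` modulo the `k`-th auxiliary prime: `g⁻¹` at `0`, `g` at
`k + 1` and `1` elsewhere. Their product is `1`. -/
noncomputable def resVec {F : Type*} [Field F] {m : ℕ} (k : Fin m) (g : F) : Fin (m + 1) → F :=
  Fin.cons g⁻¹ (fun j => if j = k then g else 1)

theorem resVec_ne_zero {F : Type*} [Field F] {m : ℕ} (k : Fin m) {g : F} (hg : g ≠ 0) (i) : resVec k g i ≠ 0 := by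
  refine Fin.cases ?_ (fun j => ?_) i
  · simpa [resVec] using hg
  · simp only [resVec, Fin.cons_succ]; split_ifs
    · exact hg
    · exact one_ne_zero

theorem resVec_prod {F : Type*} [Field F] {m : ℕ} (k : Fin m) {g : F} (hg : g ≠ 0) : ∏ i, resVec k g i = 1 := by
  rw [Fin.prod_univ_succ]
  simp [resVec, hg]

/-- The derivative of the defining polynomial at `0` is, up to the factor `g`, the quadratic
expression `g ^ 2 + (m - 1) g + 1`. Truncated subtraction is harmless: `Fin m` is inhabited by `k`. -/
theorem resVec_sum {F : Type*} [Field F] {m : ℕ} (k : Fin m) {g : F} (hg : g ≠ 0) :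
    g * ∑ i, (resVec k g i)⁻¹ = g ^ 2 + (m - 1 : ℕ) * g + 1 := by
  rw [Fin.sum_univ_succ]
  have : ∑ i : Fin m, (resVec k g i.succ)⁻¹ = g⁻¹ + (m - 1 : ℕ) := by
    rw [← Finset.add_sum_erase _ _ (Finset.mem_univ k)]
    rw [Finset.sum_congr rfl (g := fun _ => (1 : F)) fun i hi => by
      simp [resVec, Finset.ne_of_mem_erase hi]]
    simp [resVec]
  rw [this]
  simp only [resVec, Fin.cons_zero, inv_inv]
  field_simp
  ring

end

/-! ### Residues and auxiliary primes -/

section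
open NumberField Module nonZeroDivisors IsDedekindDomain

section
variable {K : Type*} [Field K] [NumberField K]

variable (K) in
theorem exists_prime_over {ℓ : ℕ} (hℓ : ℓ.Prime) : ∃ q : HeightOneSpectrum (𝓞 K), (ℓ : 𝓞 K) ∈ q.asIdeal := by
  have hp : (Ideal.span {(ℓ : ℤ)}).IsMaximal :=
    PrincipalIdealRing.isMaximal_of_irreducible (Nat.prime_iff_prime_int.mp hℓ).irreducible
  have h0 : (Ideal.span {(ℓ : ℤ)}) ≠ ⊥ := by simpa using hℓ.ne_zero
  obtain ⟨Q, hQm, hQ⟩ := Ideal.exists_maximal_ideal_liesOver_of_isIntegral (S := 𝓞 K) (Ideal.span {(ℓ : ℤ)})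
  refine ⟨⟨Q, inferInstance, Ideal.ne_bot_of_liesOver_of_ne_bot h0 Q⟩, ?_⟩
  have : (ℓ : ℤ) ∈ Q.under ℤ := by
    rw [← hQ.over]; exact Ideal.mem_span_singleton_self _
  have h2 : algebraMap ℤ (𝓞 K) ℓ ∈ Q := this
  simpa using h2

theorem natCast_notMem_of_coprime {K : Type*} [Field K] {a b : ℕ} (h : a.Coprime b) {I : Ideal (𝓞 K)} (hI : I ≠ ⊤) (ha : (a : 𝓞 K) ∈ I) :
    (b : 𝓞 K) ∉ I := by
  intro hb
  apply hI
  rw [Ideal.eq_top_iff_one]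
  have := Nat.gcd_eq_gcd_ab a b
  rw [h] at this
  have h2 := congrArg (Int.cast : ℤ → 𝓞 K) this
  push_cast at h2
  rw [h2]
  exact I.add_mem (I.mul_mem_right _ ha) (I.mul_mem_right _ hb)

/-- A nonresidue `g` as in `exists_good_nonpower`, in the residue field of a prime over a large `ρ`. -/
theorem exists_residue {p : ℕ} (hp : p.Prime) {ζ : K} (hζ : IsPrimitiveRoot ζ p)
    {ρ : ℕ} (hρ : ρ.Prime) (hρ11 : 11 ≤ ρ) (hρp : p < ρ) (r : HeightOneSpectrum (𝓞 K)) (hr : (ρ : 𝓞 K) ∈ r.asIdeal)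
    (m : ℕ) : ∃ g : 𝓞 K ⧸ r.asIdeal, (∀ y, y ^ p ≠ g) ∧ g ^ 2 ≠ 1 ∧ g ^ 2 + m * g + 1 ≠ 0 := by
  have hmax : r.asIdeal.IsMaximal := r.isMaximal
  let _ := Ideal.Quotient.field r.asIdeal
  have : Finite (𝓞 K ⧸ r.asIdeal) := Ideal.finiteQuotientOfFreeOfNeBot _ r.ne_bot
  have := Fintype.ofFinite (𝓞 K ⧸ r.asIdeal)
  have hρ0 : (ρ : 𝓞 K ⧸ r.asIdeal) = 0 := by
    have := Ideal.Quotient.eq_zero_iff_mem.mpr hr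
    simpa using this
  have hch : CharP (𝓞 K ⧸ r.asIdeal) ρ := (CharP.charP_iff_prime_eq_zero hρ).mpr hρ0
  have hcard : 11 ≤ Nat.card (𝓞 K ⧸ r.asIdeal) := by
    have h1 : ρ ∣ Fintype.card (𝓞 K ⧸ r.asIdeal) := by
      rw [← CharP.cast_eq_zero_iff (𝓞 K ⧸ r.asIdeal) ρ]
      exact Nat.cast_card_eq_zero _
    rw [Nat.card_eq_fintype_card]
    exact hρ11.trans (Nat.le_of_dvd Fintype.card_pos h1)
  have : NeZero p := ⟨hp.ne_zero⟩
  let z : 𝓞 K := hζ.toInteger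
  have hz : IsPrimitiveRoot z p := hζ.toInteger_isPrimitiveRoot
  refine exists_good_nonpower hcard (ζ := Ideal.Quotient.mk r.asIdeal z) (p := p) ?_ ?_ hp.ne_zero m
  · intro h
    obtain ⟨t, ht⟩ : z - 1 ∣ (p : 𝓞 K) := prime_eq_mul_sub_one hp.one_lt hz
    have hpr : (p : 𝓞 K) ∈ r.asIdeal := by
      rw [ht]
      apply Ideal.mul_mem_right
      rw [← Ideal.Quotient.eq]
      simpa using h
    refine natCast_notMem_of_coprime ?_ r.isPrime.ne_top hr hpr
    exact (Nat.coprime_primes hρ hp).mpr (by omega)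
  · rw [← map_pow, hz.pow_eq_one, map_one]

variable (K) in
/-- A nonzero integer contained in a representative of every ideal class. -/
theorem exists_class_bound : ∃ n : ℕ, n ≠ 0 ∧ ∀ c : ClassGroup (𝓞 K), ∃ I : (Ideal (𝓞 K))⁰,
    ClassGroup.mk0 I = c ∧ (n : 𝓞 K) ∈ I.1 := by
  have hs : Function.Surjective (ClassGroup.mk0 (R := 𝓞 K)) := ClassGroup.mk0_surjective
  choose J hJ using hs
  refine ⟨∏ c, Ideal.absNorm (J c).1, ?_, fun c => ⟨J c, hJ c, ?_⟩⟩
  · refine Finset.prod_ne_zero_iff.mpr fun c _ => ?_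
    exact Ideal.absNorm_ne_zero_of_nonZeroDivisors _
  · exact Ideal.mem_of_dvd _ (Nat.cast_dvd_cast (Finset.dvd_prod_of_mem _ (Finset.mem_univ c))) (Ideal.absNorm_mem _)

variable (K) in
/-- Adding a large multiple of `R` to `c₀` makes it large at all real places. -/
theorem exists_large (c₀ : K) (R : ℕ) (hR : 0 < R) (B : (K →+* ℝ) → ℝ) :
    ∃ k : ℕ, ∀ ψ : K →+* ℝ, B ψ < ψ (c₀ + k * R) ^ 2 := by
  have : Finite (K →+* ℝ) := Finite.of_injective (fun ψ => (Complex.ofRealHom.comp ψ : K →+* ℂ)) (by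
    intro a b h
    ext x
    have := congrArg (fun f : K →+* ℂ => f x) h
    simpa using this)
  have h : ∀ᶠ k : ℕ in Filter.atTop, ∀ ψ : K →+* ℝ, B ψ < ψ (c₀ + k * R) ^ 2 := by
    rw [Filter.eventually_all]
    intro ψ
    have h1 : Filter.Tendsto (fun k : ℕ => (ψ c₀ + k * R : ℝ)) Filter.atTop Filter.atTop := by
      apply Filter.tendsto_atTop_add_const_left
      exact Filter.Tendsto.atTop_mul_const (by exact_mod_cast hR) tendsto_natCast_atTop_atTop
    have h2 := (Filter.tendsto_pow_atTop (two_ne_zero)).comp h1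
    filter_upwards [h2.eventually_gt_atTop (B ψ)] with k hk
    simpa using hk
  exact h.exists
end

end

/-! ### Choice of shifts and constant term -/

section
open NumberField Module nonZeroDivisors IsDedekindDomain

section
variable {K : Type*} [Field K] [NumberField K]

theorem isCoprime_of_ne {q r : HeightOneSpectrum (𝓞 K)} (h : q ≠ r) : IsCoprime q.asIdeal r.asIdeal := by
  rw [Ideal.isCoprime_iff_sup_eq]
  exact Ideal.IsMaximal.coprime_of_ne q.isMaximal r.isMaximal fun h' => h (HeightOneSpectrum.ext h')

theorem isCoprime_of_not_le {I : Ideal (𝓞 K)} (r : HeightOneSpectrum (𝓞 K)) (h : ¬ I ≤ r.asIdeal) :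
    IsCoprime I r.asIdeal := by
  rw [Ideal.isCoprime_iff_sup_eq]
  by_contra hne
  have := r.isMaximal.eq_of_le hne le_sup_right
  exact h (this ▸ le_sup_left)

/-- Chinese remainder theorem for the ideal `J` and the primes `r k`, with residue `0`
modulo `J`. -/
theorem exists_crt_lift {m : ℕ} (J : Ideal (𝓞 K)) (r : Fin m → HeightOneSpectrum (𝓞 K))
    (hinj : Function.Injective r) (h0 : ∀ k, IsCoprime J (r k).asIdeal) (x : Fin m → 𝓞 K) :
    ∃ y : 𝓞 K, y ∈ J ∧ ∀ k, y - x k ∈ (r k).asIdeal := by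
  obtain ⟨I, hI1, hI2⟩ : ∃ I : Option (Fin m) → Ideal (𝓞 K), I none = J ∧ ∀ k, I (some k) = (r k).asIdeal :=
    ⟨fun o => o.elim J (fun k => (r k).asIdeal), rfl, fun _ => rfl⟩
  have hpw : Pairwise (Function.onFun IsCoprime I) := by
    rintro (_ | k) (_ | l) hxy
    · exact absurd rfl hxy
    · rw [Function.onFun, hI1, hI2]; exact h0 l
    · rw [Function.onFun, hI1, hI2]; exact (h0 k).symm
    · rw [Function.onFun, hI2, hI2]; exact isCoprime_of_ne fun h => hxy (by rw [hinj h])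
  obtain ⟨z, hz1, hz2⟩ : ∃ z : Option (Fin m) → 𝓞 K, z none = 0 ∧ ∀ k, z (some k) = x k :=
    ⟨fun o => o.elim 0 x, rfl, fun _ => rfl⟩
  obtain ⟨y, hy⟩ := Ideal.exists_forall_sub_mem_ideal hpw z
  refine ⟨y, ?_, fun k => ?_⟩
  · have := hy none
    rwa [hI1, hz1, sub_zero] at this
  · have := hy (some k)
    rwa [hI2, hz2] at this

/-- Shifts `A i` divisible by `N` and `lam ^ p`, with prescribed residues modulo the auxiliary
primes `r k`. -/
theorem exists_shifts {m : ℕ} (p N : ℕ) (lam : HeightOneSpectrum (𝓞 K)) (r : Fin m → HeightOneSpectrum (𝓞 K))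
    (hinj : Function.Injective r) (hlr : ∀ k, lam ≠ r k) (hNr : ∀ k, (N : 𝓞 K) ∉ (r k).asIdeal)
    {ι : Type*} (a : ∀ k, ι → 𝓞 K ⧸ (r k).asIdeal) :
    ∃ A : ι → 𝓞 K, (∀ i, (N : 𝓞 K) ∣ A i) ∧ (∀ i, A i ∈ lam.asIdeal ^ p) ∧
      ∀ k i, Ideal.Quotient.mk (r k).asIdeal (A i) = - a k i := by
  have h0 : ∀ k, IsCoprime (Ideal.span {(N : 𝓞 K)} * lam.asIdeal ^ p) (r k).asIdeal := fun k => by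
    apply IsCoprime.mul_left
    · apply isCoprime_of_not_le
      intro h
      exact hNr k (h (Ideal.mem_span_singleton_self _))
    · exact (isCoprime_of_ne (hlr k)).pow_left
  have hs : ∀ k i, ∃ x : 𝓞 K, Ideal.Quotient.mk (r k).asIdeal x = - a k i := fun k i =>
    Ideal.Quotient.mk_surjective _
  choose x hx using hs
  have hA := fun i => exists_crt_lift _ r hinj h0 (fun k => x k i)
  choose A hA1 hA2 using hA
  refine ⟨A, fun i => ?_, fun i => Ideal.mul_le_right (hA1 i), fun k i => ?_⟩
  · exact Ideal.mem_span_singleton.mp (Ideal.mul_le_left (hA1 i))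
  · rw [← hx k i]
    exact Ideal.Quotient.eq.mpr (hA2 i k)

/-- A constant that is a uniformizer at `lam`, congruent to `1` modulo `N` and the auxiliary
primes, and prime to `Δ` away from `lam`. All members of an arithmetic progression qualify, which
leaves room to make it large at the real places. -/
theorem exists_c {m : ℕ} (N : ℕ) (hN0 : N ≠ 0) (lam : HeightOneSpectrum (𝓞 K)) (hNl : (N : 𝓞 K) ∉ lam.asIdeal)
    (r : Fin m → HeightOneSpectrum (𝓞 K)) (hlr : ∀ k, lam ≠ r k) (Δ : 𝓞 K) (hΔ : Δ ≠ 0) :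
    ∃ (c₀ : 𝓞 K) (R : ℕ), 0 < R ∧ ∀ k : ℕ, (c₀ + k * R ∈ lam.asIdeal) ∧ (c₀ + k * R ∉ lam.asIdeal ^ 2) ∧
      ((N : 𝓞 K) ∣ c₀ + k * R - 1) ∧ (∀ j, c₀ + k * R - 1 ∈ (r j).asIdeal) ∧
      ∀ q : HeightOneSpectrum (𝓞 K), q ≠ lam → c₀ + k * R ∈ q.asIdeal → Δ ∉ q.asIdeal := by
  classical
  have hfin : {v : HeightOneSpectrum (𝓞 K) | v.asIdeal ∣ Ideal.span {Δ}}.Finite :=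
    Ideal.finite_factors (by simpa using hΔ)
  let T := hfin.toFinset.erase lam
  let I : Ideal (𝓞 K) := Ideal.span {(N : 𝓞 K)} * ((∏ k, (r k).asIdeal) * ∏ q ∈ T, q.asIdeal)
  have hI : IsCoprime I lam.asIdeal := by
    apply IsCoprime.mul_left
    · apply isCoprime_of_not_le
      intro h
      exact hNl (h (Ideal.mem_span_singleton_self _))
    · apply IsCoprime.mul_left
      · exact IsCoprime.prod_left fun k _ => (isCoprime_of_ne (hlr k)).symm
      · exact IsCoprime.prod_left fun q hq => isCoprime_of_ne (Finset.ne_of_mem_erase hq)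
  have hI0 : I ≠ ⊥ := by
    refine mul_ne_zero (by simpa using hN0) (mul_ne_zero ?_ ?_)
    · exact Finset.prod_ne_zero_iff.mpr fun k _ => (r k).ne_bot
    · exact Finset.prod_ne_zero_iff.mpr fun q _ => q.ne_bot
  obtain ⟨a, ha, b, hb, hab⟩ := Ideal.isCoprime_iff_exists.mp (hI.pow_right (n := 2))
  obtain ⟨π, hπ, hπ2⟩ : ∃ π ∈ lam.asIdeal, π ∉ lam.asIdeal ^ 2 := by
    have := Ideal.pow_right_strictAnti lam.asIdeal lam.ne_bot lam.isPrime.ne_top (show 1 < 2 by norm_num)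
    simp only [pow_one] at this
    exact SetLike.exists_of_lt this
  have hle1 : I ≤ Ideal.span {(N : 𝓞 K)} := Ideal.mul_le_left
  have hle2 : ∀ k, I ≤ (r k).asIdeal := fun k => Ideal.mul_le_right.trans (Ideal.mul_le_left.trans
    (Ideal.le_of_dvd (Finset.dvd_prod_of_mem _ (Finset.mem_univ k))))
  have hle3 : ∀ q ∈ T, I ≤ q.asIdeal := fun q hq => Ideal.mul_le_right.trans (Ideal.mul_le_right.trans
    (Ideal.le_of_dvd (Finset.dvd_prod_of_mem _ hq)))
  let J := I * lam.asIdeal ^ 2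
  have hJ0 : J ≠ ⊥ := mul_ne_zero hI0 (pow_ne_zero _ lam.ne_bot)
  have hRJ : ∀ k : ℕ, (k * Ideal.absNorm J : 𝓞 K) ∈ J := fun k => J.mul_mem_left _ (Ideal.absNorm_mem J)
  refine ⟨b + a * π, Ideal.absNorm J, ?_, fun k => ?_⟩
  · exact Nat.pos_of_ne_zero (by rwa [Ne, Ideal.absNorm_eq_zero_iff])
  have h1 : b + a * π + k * Ideal.absNorm J - 1 ∈ I := by
    have : b + a * π + k * Ideal.absNorm J - 1 = a * (π - 1) + k * Ideal.absNorm J := by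
      linear_combination hab
    rw [this]
    exact I.add_mem (I.mul_mem_right _ ha) (Ideal.mul_le_left (hRJ k))
  have h2 : b + a * π + k * Ideal.absNorm J - π ∈ lam.asIdeal ^ 2 := by
    have : b + a * π + k * Ideal.absNorm J - π = b * (1 - π) + k * Ideal.absNorm J := by
      linear_combination π * hab
    rw [this]
    exact Ideal.add_mem _ (Ideal.mul_mem_right _ _ hb) (Ideal.mul_le_right (hRJ k))
  have h2' := Ideal.pow_le_self two_ne_zero h2
  refine ⟨?_, fun h => ?_, ?_, fun j => hle2 j h1, fun q hq hcq hΔq => ?_⟩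
  · have := lam.asIdeal.add_mem h2' hπ
    simpa using this
  · apply hπ2
    have := Ideal.sub_mem _ h h2
    simpa using this
  · exact Ideal.mem_span_singleton.mp (hle1 h1)
  · have hqT : q ∈ T := by
      simp only [T, Finset.mem_erase, Set.Finite.mem_toFinset, Set.mem_ofPred_eq]
      exact ⟨hq, by rwa [Ideal.dvd_span_singleton]⟩
    have := Ideal.sub_mem _ hcq (hle3 q hqT h1)
    rw [sub_sub_cancel] at this
    exact q.isPrime.ne_top ((Ideal.eq_top_iff_one _).mpr this)
end

end

/-! ### Existence of the data -/

section
open NumberField Module nonZeroDivisors IsDedekindDomain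

universe u

/-- Residues modulo an auxiliary prime making `0` a simple root of the defining polynomial
and `a (k + 1)` a nonresidue different from all the other residues. -/
theorem exists_local_vec {K : Type*} [Field K] [NumberField K] {p : ℕ} (hp : p.Prime) {ζ : K} (hζ : IsPrimitiveRoot ζ p)
    {ρ : ℕ} (hρ : ρ.Prime) (hρ11 : 11 ≤ ρ) (hρp : p < ρ) (r : HeightOneSpectrum (𝓞 K)) (hr : (ρ : 𝓞 K) ∈ r.asIdeal)
    {m : ℕ} (k : Fin m) : ∃ (g : 𝓞 K ⧸ r.asIdeal) (a : Fin (m + 1) → 𝓞 K ⧸ r.asIdeal), (∀ y, y ^ p ≠ g) ∧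
      a k.succ = g ∧ (∀ j, j ≠ k.succ → j ≠ 0 → a j = 1) ∧ (∀ j, j ≠ k.succ → a j ≠ a k.succ) ∧
      ∀ (A : Fin (m + 1) → 𝓞 K) (c : 𝓞 K), (∀ i, Ideal.Quotient.mk r.asIdeal (A i) = - a i) →
        Ideal.Quotient.mk r.asIdeal c = 1 →
        Ideal.Quotient.mk r.asIdeal ((genPoly p A c).eval 0) = 0 ∧
        Ideal.Quotient.mk r.asIdeal ((genPoly p A c).derivative.eval 0) ≠ 0 := by
  obtain ⟨g, hg1, hg2, hg3⟩ := exists_residue hp hζ hρ hρ11 hρp r hr (m - 1)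
  have hmax : r.asIdeal.IsMaximal := r.isMaximal
  let _ := Ideal.Quotient.field r.asIdeal
  have hg0 : g ≠ 0 := fun h => hg1 0 (by rw [h, zero_pow hp.ne_zero])
  have hk : resVec k g k.succ = g := by simp [resVec]
  have h1 : ∀ j, j ≠ k.succ → j ≠ 0 → resVec k g j = 1 := fun j hj hj0 => by
    obtain ⟨i, rfl⟩ := Fin.exists_succ_eq.mpr hj0
    have : i ≠ k := fun h => hj (by rw [h])
    simp [resVec, this]
  refine ⟨g, resVec k g, hg1, hk, h1, fun j hj h => ?_, fun A c hA hc => ?_⟩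
  · rw [hk] at h
    by_cases hj0 : j = 0
    · subst hj0
      have h0 : resVec k g 0 = g⁻¹ := by simp [resVec]
      rw [h0] at h
      apply hg2
      rw [sq]
      nth_rewrite 1 [← h]
      exact inv_mul_cancel₀ hg0
    · rw [h1 j hj hj0] at h
      exact hg2 (by rw [← h, one_pow])
  · obtain ⟨e1, e2⟩ := genPoly_eval_zero p (Ideal.Quotient.mk r.asIdeal) A c (resVec k g) hA hc (resVec_prod k hg0)
    refine ⟨e1, fun h => hg3 ?_⟩
    rw [← resVec_sum k hg0, ← e2, h, mul_zero]

/-- Existence of `A` and `c` with all the properties used in `rank_of_data`, with `lam` over an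
arbitrarily large rational prime `ℓ`. -/
theorem exists_data {K : Type u} [Field K] [NumberField K]
    {p m : ℕ} (hp : p.Prime) {ζ : K} (hζ : IsPrimitiveRoot ζ p) (ℓ₀ : ℕ) :
    ∃ (ℓ : ℕ) (A : Fin (m + 1) → 𝓞 K) (c : 𝓞 K) (lam : HeightOneSpectrum (𝓞 K)) (N n : ℕ),
    ℓ.Prime ∧ ℓ₀ < ℓ ∧ (ℓ : 𝓞 K) ∈ lam.asIdeal ∧ (∀ i, A i ∈ lam.asIdeal ^ p) ∧
    c ∈ lam.asIdeal ∧ c ∉ lam.asIdeal ^ 2 ∧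
    (∀ q : HeightOneSpectrum (𝓞 K), q ≠ lam → c ∈ q.asIdeal → ∀ i j, i ≠ j → A i - A j ∉ q.asIdeal) ∧
    N = p ^ p * n ∧ p ∣ n ∧ (∀ i, (N : 𝓞 K) ∣ A i) ∧ ((N : 𝓞 K) ∣ c - 1) ∧
    (∀ cl : ClassGroup (𝓞 K), ∃ I : (Ideal (𝓞 K))⁰, ClassGroup.mk0 I = cl ∧ (N : 𝓞 K) ∈ I.1) ∧
    (∀ k : Fin m, ∃ (F : Type u) (_ : Field F) (φ : 𝓞 K →+* F) (g : F), (∀ y, y ^ p ≠ g) ∧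
      φ (A k.succ) = -g ∧ (∀ j, j ≠ k.succ → j ≠ 0 → φ (A j) = -1) ∧
      φ ((genPoly p A c).eval 0) = 0 ∧ φ ((genPoly p A c).derivative.eval 0) ≠ 0) ∧
    (p = 2 → ∀ ψ : K →+* ℝ, ∃ B : ℝ, (∀ i, |ψ (A i)| ≤ B) ∧ (2 * B) ^ (m + 1) < ψ c ^ 2) := by
  classical
  obtain ⟨n₀, hn0, hcl⟩ := exists_class_bound K
  obtain ⟨N, hN⟩ : ∃ N : ℕ, N = p ^ p * (p * n₀) := ⟨_, rfl⟩
  have hN0 : N ≠ 0 := by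
    rw [hN]; exact mul_ne_zero (pow_ne_zero _ hp.ne_zero) (mul_ne_zero hp.ne_zero hn0)
  -- distinct primes larger than `ℓ₀`, prime to `N`, with residue fields large enough for nonresidues
  let M := ℓ₀ + N + p + 11 + 1
  let q : ℕ → ℕ := fun j => Nat.nth Nat.Prime (M + j)
  have hqm : StrictMono (Nat.nth Nat.Prime) := Nat.nth_strictMono Nat.infinite_setOfPred_prime
  have hq : ∀ j, (q j).Prime := fun j => Nat.prime_nth_prime _
  have hqM : ∀ j, M ≤ q j := fun j => (Nat.le_add_right M j).trans hqm.le_apply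
  have hqne : ∀ i j, i ≠ j → q i ≠ q j := fun i j hij h => hij (by
    have := hqm.injective h; omega)
  choose P hP using fun j => exists_prime_over K (hq j)
  have hPne : ∀ i j, i ≠ j → P i ≠ P j := fun i j hij h => by
    refine natCast_notMem_of_coprime ((Nat.coprime_primes (hq i) (hq j)).mpr (hqne i j hij)) (P i).isPrime.ne_top (hP i) ?_
    rw [h]; exact hP j
  have hPN : ∀ i, (N : 𝓞 K) ∉ (P i).asIdeal := fun i => by
    refine natCast_notMem_of_coprime ?_ (P i).isPrime.ne_top (hP i)
    refine ((hq i).coprime_iff_not_dvd).mpr fun h => ?_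
    have h1 := Nat.le_of_dvd (Nat.pos_of_ne_zero hN0) h
    have h2 := hqM i
    omega
  let r : Fin m → HeightOneSpectrum (𝓞 K) := fun k => P k
  have hrinj : Function.Injective r := fun a b h => by
    by_contra hab
    exact hPne a b (fun h' => hab (Fin.ext h')) h
  have hlr : ∀ k, P m ≠ r k := fun k => hPne m k (by have := k.2; omega)
  have hloc := fun k : Fin m => exists_local_vec hp hζ (hq k) (by have := hqM k; omega) (by have := hqM k; omega)
    (r k) (hP k) k
  choose g a hg hak ha1 hane hpoly using hloc
  obtain ⟨A, hAN, hAl, hAr⟩ := exists_shifts p N (P m) r hrinj hlr (fun k => hPN k) a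
  have hAne : ∀ (k : Fin m) (j), j ≠ k.succ → A j ≠ A k.succ := fun k j hj h => by
    apply hane k j hj
    have h1 := hAr k j
    rw [h, hAr k k.succ] at h1
    exact (neg_injective h1).symm
  have hAinj : ∀ i j, i ≠ j → A i ≠ A j := fun i j hij => by
    by_cases hj : j = 0
    · have hi : i ≠ 0 := fun h => hij (h.trans hj.symm)
      obtain ⟨k, rfl⟩ := Fin.exists_succ_eq.mpr hi
      exact (hAne k j hij.symm).symm
    · obtain ⟨k, rfl⟩ := Fin.exists_succ_eq.mpr hj
      exact hAne k i hij
  -- primes other than `lam` dividing `c` must not divide the differences `A i - A j`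
  obtain ⟨Δ, hΔ⟩ : ∃ Δ : 𝓞 K, Δ = ∏ i, ∏ j ∈ Finset.univ.erase i, (A i - A j) := ⟨_, rfl⟩
  have hΔ0 : Δ ≠ 0 := by
    rw [hΔ]
    refine Finset.prod_ne_zero_iff.mpr fun i _ => Finset.prod_ne_zero_iff.mpr fun j hj => ?_
    exact sub_ne_zero.mpr (hAinj i j (Finset.ne_of_mem_erase hj).symm)
  have hΔd : ∀ i j, i ≠ j → A i - A j ∣ Δ := fun i j hij => by
    rw [hΔ]
    refine dvd_trans ?_ (Finset.dvd_prod_of_mem _ (Finset.mem_univ i))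
    exact Finset.dvd_prod_of_mem (fun j => A i - A j) (Finset.mem_erase.mpr ⟨hij.symm, Finset.mem_univ j⟩)
  obtain ⟨c₀, R, hR, hc⟩ := exists_c N hN0 (P m) (hPN m) r hlr Δ hΔ0
  obtain ⟨k, hk⟩ := exists_large K (c₀ : K) R hR (fun ψ => (2 * ∑ i, |ψ (A i)|) ^ (m + 1))
  obtain ⟨hc1, hc2, hc3, hc4, hc5⟩ := hc k
  refine ⟨q m, A, c₀ + k * R, P m, N, p * n₀, hq m, ?_, hP m, hAl, hc1, hc2, ?_, hN, dvd_mul_right _ _, hAN, hc3, ?_, ?_, ?_⟩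
  · have := hqM m; omega
  · intro q' hq' hcq i j hij hmem
    exact hc5 q' hq' hcq (Ideal.mem_of_dvd _ (hΔd i j hij) hmem)
  · intro cl
    obtain ⟨I, h1, h2⟩ := hcl cl
    refine ⟨I, h1, Ideal.mem_of_dvd _ (Nat.cast_dvd_cast ?_) h2⟩
    rw [hN]; exact (dvd_mul_left _ _).mul_left _
  · intro k'
    have hmax : (r k').asIdeal.IsMaximal := (r k').isMaximal
    have hcr : Ideal.Quotient.mk (r k').asIdeal (c₀ + k * R) = 1 := by
      rw [← map_one (Ideal.Quotient.mk (r k').asIdeal)]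
      exact Ideal.Quotient.eq.mpr (hc4 k')
    obtain ⟨e1, e2⟩ := hpoly k' A _ (hAr k') hcr
    refine ⟨𝓞 K ⧸ (r k').asIdeal, Ideal.Quotient.field _, Ideal.Quotient.mk _, g k', hg k', ?_, ?_, e1, e2⟩
    · rw [← hak k']; exact hAr k' _
    · intro j hj hj0
      have := hAr k' j
      rw [ha1 k' j hj hj0] at this
      exact this
  · intro _ ψ
    refine ⟨∑ i, |ψ (A i)|, fun i => ?_, ?_⟩
    · exact Finset.single_le_sum (f := fun i => |ψ (A i)|) (fun i _ => abs_nonneg _) (Finset.mem_univ i)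
    · have := hk ψ
      simpa using this

end

/-! ### Infinitely many fields -/

section
open NumberField Module nonZeroDivisors IsDedekindDomain

universe u

/-- A rational prime below a prime of `K` that ramifies in `L` divides the discriminant of `L`. -/
theorem dvd_discr_of_ramified {K L : Type*} [Field K] [NumberField K] [Field L] [NumberField L] [Algebra K L]
    {ℓ : ℕ} (hℓ : ℓ.Prime) (lam : HeightOneSpectrum (𝓞 K)) (hl : (ℓ : 𝓞 K) ∈ lam.asIdeal)
    (Q : HeightOneSpectrum (𝓞 L)) [hQ : Q.asIdeal.LiesOver lam.asIdeal]
    (he : Ideal.ramificationIdx' lam.asIdeal Q.asIdeal ≠ 1) : (ℓ : ℤ) ∣ discr L := by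
  by_contra hnd
  rw [not_dvd_discr_iff_forall_mem L (𝓞 L) (Nat.prime_iff_prime_int.mp hℓ)] at hnd
  have hm : ((ℓ : ℤ) : 𝓞 L) ∈ Q.asIdeal := by
    have h1 : (ℓ : 𝓞 K) ∈ Q.asIdeal.under (𝓞 K) := by rwa [← hQ.over]
    have h2 : algebraMap (𝓞 K) (𝓞 L) ℓ ∈ Q.asIdeal := h1
    simpa using h2
  have h1 := hnd Q.asIdeal Q.isPrime hm
  have := Q.isPrime
  have h2 : Algebra.IsUnramifiedAt (𝓞 K) Q.asIdeal := Algebra.IsUnramifiedAt.of_restrictScalars ℤ Q.asIdeal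
  have h3 := Ideal.ramificationIdx_eq_one_iff.mpr h2
  rw [← Ideal.ramificationIdx'_eq_ramificationIdx lam.asIdeal Q.asIdeal lam.ne_bot] at h3
  exact he h3

theorem isIntegral_trans_poly {K L ι : Type*} [Field K] [NumberField K] [Field L] [Algebra K L] [Fintype ι] [Nonempty ι]
    {p : ℕ} (A : ι → 𝓞 K) (c : 𝓞 K) {x : L} (hx : ∏ i, (x - algebraMap K L (A i)) = algebraMap K L c ^ p) :
    IsIntegral ℤ x := by
  apply isIntegral_trans (A := 𝓞 K)
  refine ⟨genPoly p A c, (genPoly_natDegree_monic p A c).1, ?_⟩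
  simp only [genPoly, Polynomial.eval₂_sub, Polynomial.eval₂_finsetProd, Polynomial.eval₂_X, Polynomial.eval₂_C, Polynomial.eval₂_pow, map_pow]
  exact sub_eq_zero.mpr hx

theorem exists_root_field {K : Type*} [Field K] [NumberField K] {p m : ℕ} (A : Fin (m + 1) → 𝓞 K) (c : 𝓞 K) :
    ∃ (L : IntermediateField K (AlgebraicClosure K)) (_ : NumberField L) (y : 𝓞 L),
      Algebra.adjoin K {(y : L)} = ⊤ ∧
      ∏ i, (y - algebraMap (𝓞 K) (𝓞 L) (A i)) = algebraMap (𝓞 K) (𝓞 L) c ^ p := by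
  have hcard : Fintype.card (Fin (m + 1)) = m + 1 := Fintype.card_fin _
  obtain ⟨η, hη⟩ : ∃ η : AlgebraicClosure K,
      ∏ i, (η - algebraMap K (AlgebraicClosure K) (A i)) = algebraMap K (AlgebraicClosure K) c ^ p := by
    have hdeg := genPoly_natDegree_monic p (fun i => (A i : K)) (c : K)
    obtain ⟨η, hη⟩ := IsAlgClosed.exists_aeval_eq_zero (AlgebraicClosure K)
      (genPoly p (fun i => (A i : K)) (c : K)) (by
        rw [Polynomial.degree_eq_natDegree hdeg.1.ne_zero, hdeg.2, hcard]
        exact Nat.cast_ne_zero.mpr (by omega))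
    refine ⟨η, ?_⟩
    simp only [genPoly, map_sub, map_prod, Polynomial.aeval_X, Polynomial.aeval_C, map_pow] at hη
    exact sub_eq_zero.mp hη
  have hint : IsIntegral K η := Algebra.IsIntegral.isIntegral η
  obtain ⟨L, hL⟩ : ∃ L : IntermediateField K (AlgebraicClosure K), L = IntermediateField.adjoin K {η} := ⟨_, rfl⟩
  obtain ⟨x, hx, htop⟩ : ∃ x : L, (x : AlgebraicClosure K) = η ∧ Algebra.adjoin K {x} = ⊤ := by
    subst hL
    exact ⟨IntermediateField.AdjoinSimple.gen K η, rfl, (IntermediateField.adjoin.powerBasis hint).adjoin_gen_eq_top⟩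
  have hfd : FiniteDimensional K L := by
    rw [hL]; exact IntermediateField.adjoin.finiteDimensional hint
  have hNF : NumberField L := NumberField.of_module_finite K L
  have hx' : ∏ i, (x - algebraMap K L (A i)) = algebraMap K L c ^ p := by
    apply (algebraMap L (AlgebraicClosure K)).injective
    simp only [map_prod, map_sub, map_pow]
    rw [← IsScalarTower.algebraMap_apply K L (AlgebraicClosure K), ← hη]
    refine Finset.prod_congr rfl fun i _ => ?_
    rw [← IsScalarTower.algebraMap_apply K L (AlgebraicClosure K), ← hx]
    rfl
  have hxi : IsIntegral ℤ x := isIntegral_trans_poly A c hx'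
  let y : 𝓞 L := ⟨x, hxi⟩
  have hy : ∏ i, (y - algebraMap (𝓞 K) (𝓞 L) (A i)) = algebraMap (𝓞 K) (𝓞 L) c ^ p := by
    apply RingOfIntegers.coe_injective
    simp only [map_prod, map_sub, map_pow]
    exact hx'
  exact ⟨L, hNF, y, htop, hy⟩

/-- A field `L` with the required degree and class group rank, of arbitrarily large
discriminant. -/
theorem exists_field {K : Type u} [Field K] [NumberField K] {p m : ℕ} (hp : p.Prime) (hm : 1 ≤ m)
    (hdp : (m + 1).Coprime p) {ζ : K} (hζ : IsPrimitiveRoot ζ p) (ℓ₀ : ℕ) :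
    ∃ (L : IntermediateField K (AlgebraicClosure K)) (_ : NumberField L), finrank K L = m + 1 ∧
      m + nRank p (ClassGroup (𝓞 K)) ≤ nRank p (ClassGroup (𝓞 L)) ∧ ℓ₀ < (discr L).natAbs := by
  obtain ⟨ℓ, A, c, lam, N, n, hℓ, hℓ₀, hlam, hA, hc, hc2, hdisj, hN, hn, hAN, hcN, hNcl, hres, hreal⟩ :=
    exists_data hp (m := m) hζ ℓ₀
  have hcard : Fintype.card (Fin (m + 1)) = m + 1 := Fintype.card_fin _
  obtain ⟨L, hNF, y, htop, hy⟩ := exists_root_field (p := p) A c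
  obtain ⟨h1, h2⟩ := rank_of_data hp hm hdp hζ A c y htop hy lam hA hc hc2 hdisj hN hn hAN hcN hNcl hres hreal
  refine ⟨L, hNF, h1, h2, ?_⟩
  obtain ⟨Q, hQm, hQ⟩ := Ideal.exists_maximal_ideal_liesOver_of_isIntegral (S := 𝓞 L) lam.asIdeal
  have hQ0 : Q ≠ ⊥ := Ideal.ne_bot_of_liesOver_of_ne_bot lam.ne_bot Q
  have he := (ramification_at_lam (by omega) hp.pos (by rwa [hcard]) htop hy lam hA hc hc2
      ⟨Q, inferInstance, hQ0⟩ (hQ := hQ)).1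
  have hd := dvd_discr_of_ramified hℓ lam hlam ⟨Q, inferInstance, hQ0⟩ (hQ := hQ) (by rw [he, hcard]; omega)
  have := Nat.le_of_dvd (Int.natAbs_pos.mpr (discr_ne_zero L)) (Int.natCast_dvd.mp hd)
  omega

/-- The fields of `exists_field` form an infinite family, as their discriminants can be chosen
strictly increasing in absolute value. -/
theorem exists_family {K : Type u} [Field K] [NumberField K] {p d : ℕ} (hp : p.Prime) (hd2 : 2 ≤ d)
    (hdp : d.Coprime p) {ζ : K} (hζ : IsPrimitiveRoot ζ p) :
    ∃ S : Set (IntermediateField K (AlgebraicClosure K)), S.Infinite ∧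
      (∀ L₁ ∈ S, ∀ L₂ ∈ S, L₁ ≠ L₂ → IsEmpty (L₁ ≃ₐ[K] L₂)) ∧
      ∀ L ∈ S, Module.finrank K L = d ∧
        (d - 1) + nRank p (ClassGroup (𝓞 K)) ≤ nRank p (ClassGroup (𝓞 L)) := by
  obtain ⟨m, rfl⟩ : ∃ m, d = m + 1 := ⟨d - 1, by omega⟩
  choose L hNF h1 h2 h3 using fun ℓ₀ => exists_field hp (by omega : 1 ≤ m) hdp hζ ℓ₀
  let δ : ℕ → ℕ := fun n => (discr (L n)).natAbs
  -- `s` is a sequence of parameters along which the absolute discriminant strictly increases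
  let s : ℕ → ℕ := fun n => δ^[n] 0
  have hs : StrictMono (δ ∘ s) := strictMono_nat_of_lt_succ fun n => by
    have : s (n + 1) = δ (s n) := Function.iterate_succ_apply' δ n 0
    simp only [Function.comp_apply, this]
    exact h3 _
  have hiso : ∀ a b, (L (s a) ≃ₐ[K] L (s b)) → a = b := fun a b f => by
    apply hs.injective
    exact congrArg Int.natAbs (discr_eq_discr_of_ringEquiv (L (s a)) f.toRingEquiv)
  refine ⟨Set.range (L ∘ s), Set.infinite_range_of_injective fun a b h => ?_, ?_, ?_⟩
  · simp only [Function.comp_apply] at h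
    exact hiso a b (IntermediateField.equivOfEq h)
  · rintro _ ⟨a, rfl⟩ _ ⟨b, rfl⟩ hab
    exact ⟨fun f => hab (by rw [hiso a b f])⟩
  · rintro _ ⟨a, rfl⟩
    exact ⟨h1 _, h2 _⟩

end

/-- Let `p` be a prime, `K` a number field containing a primitive `p`-th root of unity,
and `d ≥ 2` an integer coprime to `p`.  Then there are infinitely many pairwise
non-isomorphic extensions `L/K` of degree `d` (inside a fixed algebraic closure of `K`)
with `rank_p Cl(L) ≥ (d-1) + rank_p Cl(K)`. -/
theorem infinitely_many_deg_d_ext_with_p_class_rank_ge_d_sub_one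
    (p : ℕ) (hp : p.Prime) (d : ℕ) (hd2 : 2 ≤ d) (hdp : Nat.Coprime d p)
    (K : Type*) [Field K] [NumberField K] (ζ : K) (hζ : IsPrimitiveRoot ζ p) :
    ∃ S : Set (IntermediateField K (AlgebraicClosure K)), S.Infinite ∧
      (∀ L₁ ∈ S, ∀ L₂ ∈ S, L₁ ≠ L₂ → IsEmpty (L₁ ≃ₐ[K] L₂)) ∧
      ∀ L ∈ S, Module.finrank K L = d ∧
        (d - 1) + nRank p (ClassGroup (𝓞 K)) ≤ nRank p (ClassGroup (𝓞 L)) := by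
  exact exists_family hp hd2 hdp hζ
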